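/- The N×N Toeplitz matrix T_N(f) is real symmetric with all eigenvalues in [−1,1], and the sequence S(T_N(f)) − (R/3)·log₂ N converges to a finite limit as N → ∞. (The entanglement entropy of a block of N sites of the infinite translation-invariant critical chain equals (R/3)log₂N plus a constant plus o(1), where R is the number of Fermi points in (0,π).) -/

import Mathlib

/-!
Entanglement entropy scaling of the translation-invariant critical chain:
`T_N(f)` is real symmetric with eigenvalues in `[−1,1]`, and
`S(T_N(f)) − (R/3) log₂ N` converges to a finite limit as `N → ∞`.
-/

noncomputable section

/-- The `n`-th Fourier coefficient `f_n = (1/2π) ∫_0^{2π} f(θ) e^{−inθ} dθ`. -/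
def fourierCoef (f : ℝ → ℝ) (n : ℤ) : ℂ :=
  (1 / (2 * Real.pi) : ℂ) *
    ∫ t in (0 : ℝ)..(2 * Real.pi), (f t : ℂ) * Complex.exp (-Complex.I * (n : ℂ) * (t : ℂ))

/-- The bipartite entanglement function
`e(1, ν) = −((1+ν)/2)log₂((1+ν)/2) − ((1−ν)/2)log₂((1−ν)/2)`
(with the convention `0·log₂ 0 = 0`, automatic since `Real.logb 2 0 = 0`). -/
def entBin (ν : ℝ) : ℝ :=
  -((1 + ν) / 2) * Real.logb 2 ((1 + ν) / 2) - ((1 - ν) / 2) * Real.logb 2 ((1 - ν) / 2)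

noncomputable section
namespace EE
open MeasureTheory Complex
open scoped ComplexConjugate Matrix ComplexOrder

/-- Lebesgue measure on `(0, 2π]`. -/
abbrev mu0 : Measure ℝ := volume.restrict (Set.Ioc 0 (2 * Real.pi))

def toep (a : ℝ → ℝ) (N : ℕ) : Matrix (Fin N) (Fin N) ℂ :=
  Matrix.of fun j k : Fin N => fourierCoef a ((j : ℤ) - (k : ℤ))

/-- Essentially bounded measurable on `(0, 2π]`. -/
def Nice (a : ℝ → ℝ) : Prop := MemLp a ⊤ mu0

lemma two_pi_pos' : (0 : ℝ) < 2 * Real.pi := by positivity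

lemma fourierCoef_eq (a : ℝ → ℝ) (n : ℤ) : fourierCoef a n =
    (1 / (2 * Real.pi) : ℂ) * ∫ t, (a t : ℂ) * cexp (-I * (n : ℂ) * (t : ℂ)) ∂mu0 := by
  unfold fourierCoef
  rw [intervalIntegral.integral_of_le two_pi_pos'.le]

lemma fourierCoef_congr {a b : ℝ → ℝ} (h : a =ᵐ[mu0] b) (n : ℤ) :
    fourierCoef a n = fourierCoef b n := by
  rw [fourierCoef_eq, fourierCoef_eq]
  congr 1
  apply integral_congr_ae
  filter_upwards [h] with t ht
  rw [ht]

lemma Nice.integrable {a : ℝ → ℝ} (ha : Nice a) : Integrable a mu0 := MemLp.integrable le_top ha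

lemma Nice.exp_integrable {a : ℝ → ℝ} (ha : Nice a) (n : ℤ) :
    Integrable (fun t : ℝ => (a t : ℂ) * cexp (-I * (n : ℂ) * (t : ℂ))) mu0 := by
  have h1 : Integrable (fun t : ℝ => (a t : ℂ)) mu0 := ha.integrable.ofReal
  refine h1.mul_bdd (c := 1) (by fun_prop) ?_
  refine Filter.Eventually.of_forall fun t => ?_
  rw [show -I * (n : ℂ) * (t : ℂ) = ((-(n * t) : ℝ) : ℂ) * I by push_cast; ring,
    Complex.norm_exp_ofReal_mul_I]

lemma nice_const (c : ℝ) : Nice (fun _ => c) := memLp_const c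

lemma fourierCoef_add {a b : ℝ → ℝ} (ha : Nice a) (hb : Nice b) (n : ℤ) :
    fourierCoef (fun t => a t + b t) n = fourierCoef a n + fourierCoef b n := by
  simp only [fourierCoef_eq]
  rw [← mul_add, ← integral_add (ha.exp_integrable n) (hb.exp_integrable n)]
  congr 2
  ext t
  push_cast
  ring

lemma fourierCoef_smul (c : ℝ) (a : ℝ → ℝ) (n : ℤ) :
    fourierCoef (fun t => c * a t) n = c * fourierCoef a n := by
  simp only [fourierCoef_eq]
  rw [mul_left_comm, ← integral_const_mul (c : ℂ)]
  congr 2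
  ext t
  push_cast
  ring

lemma fourierCoef_one (n : ℤ) : fourierCoef (fun _ => 1) n = if n = 0 then 1 else 0 := by
  unfold fourierCoef
  have hpi : (Real.pi : ℂ) ≠ 0 := by exact_mod_cast Real.pi_ne_zero
  split_ifs with h
  · subst h
    simp
    field_simp
  · have hn : (n : ℂ) ≠ 0 := by exact_mod_cast h
    have hc : -I * (n : ℂ) ≠ 0 := mul_ne_zero (neg_ne_zero.mpr I_ne_zero) hn
    simp only [ofReal_one, one_mul]
    rw [integral_exp_mul_complex hc]
    have : -I * (n : ℂ) * ((2 * Real.pi : ℝ) : ℂ) = ((-n : ℤ) : ℂ) * (2 * Real.pi * I) := by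
      push_cast; ring
    rw [this, Complex.exp_int_mul_two_pi_mul_I]
    simp

lemma fourierCoef_conj (a : ℝ → ℝ) (n : ℤ) :
    conj (fourierCoef a n) = fourierCoef a (-n) := by
  simp only [fourierCoef_eq]
  rw [map_mul, ← integral_conj]
  congr 1
  · simp [map_ofNat]
  · congr 1
    ext t
    rw [map_mul, ← Complex.exp_conj]
    simp

lemma toep_hermitian (a : ℝ → ℝ) (N : ℕ) : (toep a N).IsHermitian := by
  ext j k
  simp only [toep, Matrix.conjTranspose_apply, Matrix.of_apply]
  have := fourierCoef_conj a ((k : ℤ) - j)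
  rw [neg_sub] at this
  exact this

lemma toep_one (N : ℕ) : toep (fun _ => 1) N = 1 := by
  ext j k
  simp only [toep, Matrix.of_apply, fourierCoef_one, Matrix.one_apply]
  congr 1
  simp [sub_eq_zero, Fin.ext_iff]

lemma toep_add {a b : ℝ → ℝ} (ha : Nice a) (hb : Nice b) (N : ℕ) :
    toep (fun t => a t + b t) N = toep a N + toep b N := by
  ext j k
  simp [toep, fourierCoef_add ha hb]

lemma toep_smul (c : ℝ) (a : ℝ → ℝ) (N : ℕ) :
    toep (fun t => c * a t) N = (c : ℂ) • toep a N := by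
  ext j k
  simp [toep, fourierCoef_smul]

lemma toep_congr {a b : ℝ → ℝ} (h : a =ᵐ[mu0] b) (N : ℕ) : toep a N = toep b N := by
  ext j k
  simp [toep, fourierCoef_congr h]

lemma toep_qform {a : ℝ → ℝ} (ha : Nice a) (N : ℕ) (x : Fin N → ℂ) :
    star x ⬝ᵥ (toep a N *ᵥ x) = (((1 / (2 * Real.pi)) *
      ∫ t, a t * ‖∑ k : Fin N, x k * cexp (I * (k : ℂ) * (t : ℂ))‖ ^ 2 ∂mu0 : ℝ) : ℂ) := by
  have h1 : star x ⬝ᵥ (toep a N *ᵥ x) = (1 / (2 * Real.pi) : ℂ) *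
      ∑ j : Fin N, ∑ k : Fin N, ∫ t, (conj (x j) * x k) *
        ((a t : ℂ) * cexp (-I * (((j : ℤ) - (k : ℤ) : ℤ) : ℂ) * (t : ℂ))) ∂mu0 := by
    simp only [dotProduct, Matrix.mulVec, toep, Matrix.of_apply, fourierCoef_eq, Pi.star_apply,
      RCLike.star_def, Finset.mul_sum, integral_const_mul]
    refine Finset.sum_congr rfl fun j _ => Finset.sum_congr rfl fun k _ => ?_
    ring
  rw [h1, ofReal_mul]
  congr 1
  · push_cast
    rfl
  rw [← integral_complex_ofReal]
  rw [Finset.sum_congr rfl fun (j : Fin N) _ => (integral_finsetSum Finset.univ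
    (fun (k : Fin N) _ => ((ha.exp_integrable ((j : ℤ) - (k : ℤ))).const_mul (conj (x j) * x k)))).symm]
  rw [← integral_finsetSum]
  · congr 1
    ext t
    have h2 : ((‖∑ k : Fin N, x k * cexp (I * (k : ℂ) * (t : ℂ))‖ ^ 2 : ℝ) : ℂ) =
      conj (∑ k : Fin N, x k * cexp (I * (k : ℂ) * (t : ℂ))) *
        (∑ k : Fin N, x k * cexp (I * (k : ℂ) * (t : ℂ))) := by
      rw [Complex.conj_mul']
      norm_cast
    push_cast at h2 ⊢
    rw [h2, map_sum, Finset.sum_mul_sum, Finset.mul_sum]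
    refine Finset.sum_congr rfl fun j _ => ?_
    rw [Finset.mul_sum]
    refine Finset.sum_congr rfl fun k _ => ?_
    rw [map_mul, ← Complex.exp_conj]
    have : cexp (-I * ((j : ℂ) - (k : ℂ)) * t) =
        cexp (conj (I * (j : ℂ) * t)) * cexp (I * (k : ℂ) * t) := by
      rw [← Complex.exp_add]
      congr 1
      simp
      ring
    rw [this]
    ring
  · intro j _
    apply integrable_finsetSum
    intro k _
    exact (ha.exp_integrable _).const_mul _

lemma toep_psd {a : ℝ → ℝ} (ha : Nice a) (h0 : ∀ᵐ t ∂mu0, 0 ≤ a t) (N : ℕ) :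
    (toep a N).PosSemidef := by
  refine .of_dotProduct_mulVec_nonneg (toep_hermitian a N) fun x => ?_
  rw [toep_qform ha]
  have : 0 ≤ (1 / (2 * Real.pi)) *
      ∫ t, a t * ‖∑ k : Fin N, x k * cexp (I * (k : ℂ) * (t : ℂ))‖ ^ 2 ∂mu0 := by
    apply mul_nonneg (by positivity)
    apply integral_nonneg_of_ae
    filter_upwards [h0] with t ht
    positivity
  exact_mod_cast this

lemma Nice.add {a b : ℝ → ℝ} (ha : Nice a) (hb : Nice b) : Nice (fun t => a t + b t) :=
  MemLp.add ha hb

lemma Nice.smul {a : ℝ → ℝ} (c : ℝ) (ha : Nice a) : Nice (fun t => c * a t) :=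
  MemLp.const_mul ha c

lemma Nice.mul {a b : ℝ → ℝ} (ha : Nice a) (hb : Nice b) : Nice (fun t => a t * b t) :=
  MemLp.mul hb ha

lemma toep_lower {a : ℝ → ℝ} (ha : Nice a) {δ : ℝ} (h0 : ∀ᵐ t ∂mu0, δ ≤ a t) (N : ℕ)
    (x : Fin N → ℂ) : δ * ∑ k, ‖x k‖ ^ 2 ≤ (star x ⬝ᵥ (toep a N *ᵥ x)).re := by
  have h1 : (toep (fun t => a t + (-δ) * 1) N).PosSemidef := by
    apply toep_psd (ha.add ((nice_const 1).smul (-δ)))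
    filter_upwards [h0] with t ht
    linarith
  rw [toep_add ha ((nice_const 1).smul (-δ)), toep_smul, toep_one] at h1
  have h2 := h1.re_dotProduct_nonneg x
  rw [Matrix.add_mulVec, dotProduct_add, Matrix.smul_mulVec, Matrix.one_mulVec,
    dotProduct_smul] at h2
  have h3 : star x ⬝ᵥ x = ((∑ k, ‖x k‖ ^ 2 : ℝ) : ℂ) := by
    simp only [dotProduct, Pi.star_apply, RCLike.star_def, Complex.conj_mul']
    push_cast
    rfl
  rw [h3] at h2
  simp only [RCLike.re_to_complex, smul_eq_mul, add_re, ← ofReal_mul, ofReal_re] at h2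
  linarith

/-- Convolution theorem. -/
lemma fourierCoef_mul {a b : ℝ → ℝ} (ha : Nice a) (hb : Nice b) (n : ℤ) :
    HasSum (fun l : ℤ => fourierCoef a (n - l) * fourierCoef b l)
      (fourierCoef (fun t => a t * b t) n) := by
  have : Fact (0 < 2 * Real.pi) := ⟨two_pi_pos'⟩
  set g1 : ℝ → ℂ := fun t => (a t : ℂ) * cexp (I * (n : ℂ) * (t : ℂ)) with hg1
  set g2 : ℝ → ℂ := fun t => (b t : ℂ) with hg2
  have m2 : MemLp g2 2 (volume.restrict (Set.Ioc 0 (0 + 2 * Real.pi))) := by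
    rw [zero_add]
    exact (MemLp.ofReal hb).mono_exponent le_top
  have m1 : MemLp g1 2 (volume.restrict (Set.Ioc 0 (0 + 2 * Real.pi))) := by
    rw [zero_add]
    refine MemLp.mono_exponent (q := ⊤) ?_ le_top
    have hA : MemLp (fun t : ℝ => (a t : ℂ)) ⊤ mu0 := MemLp.ofReal ha
    refine hA.of_le (hA.1.mul (by fun_prop)) (Filter.Eventually.of_forall fun t => ?_)
    rw [hg1]
    simp only [norm_mul]
    rw [show I * (n : ℂ) * (t : ℂ) = (((n * t) : ℝ) : ℂ) * I by push_cast; ring,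
      Complex.norm_exp_ofReal_mul_I, mul_one]
  have h1 := m1.memLp_liftIoc.haarAddCircle
  have h2 := m2.memLp_liftIoc.haarAddCircle
  have key : ∀ g : ℝ → ℂ, ∀ k : ℤ, fourierCoeff (AddCircle.liftIoc (2 * Real.pi) 0 g) k =
      (1 / (2 * Real.pi) : ℂ) * ∫ t, g t * cexp (-I * (k : ℂ) * (t : ℂ)) ∂mu0 := by
    intro g k
    rw [fourierCoeff_liftIoc_eq, fourierCoeffOn_eq_integral]
    rw [intervalIntegral.integral_of_le (by simpa using two_pi_pos'.le)]
    rw [zero_add, sub_zero, Complex.real_smul]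
    push_cast
    congr 1
    congr 1
    ext t
    rw [fourier_coe_apply, smul_eq_mul, mul_comm]
    congr 2
    have hpi : (Real.pi : ℂ) ≠ 0 := by exact_mod_cast Real.pi_ne_zero
    push_cast
    field_simp
  have hs := fourierBasis.hasSum_inner_mul_inner (h1.toLp) (h2.toLp)
  have e2 : ∀ l : ℤ, inner ℂ (fourierBasis l) (h2.toLp) = fourierCoef b l := by
    intro l
    rw [← fourierBasis.repr_apply_apply, fourierBasis_repr, fourierCoeff_congr_ae h2.coeFn_toLp,
      key, fourierCoef_eq]
  have e1 : ∀ l : ℤ, inner ℂ (h1.toLp) (fourierBasis l) = fourierCoef a (n - l) := by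
    intro l
    rw [← inner_conj_symm, ← fourierBasis.repr_apply_apply, fourierBasis_repr,
      fourierCoeff_congr_ae h1.coeFn_toLp, key]
    rw [show n - l = -(l - n) by ring, ← fourierCoef_conj, fourierCoef_eq]
    congr 2
    congr 1
    ext t
    rw [hg1]
    simp only
    rw [mul_assoc, ← Complex.exp_add]
    congr 2
    push_cast
    ring
  have e3 : inner ℂ (h1.toLp) (h2.toLp) = fourierCoef (fun t => a t * b t) n := by
    have : fourierCoef (fun t => a t * b t) n =
        fourierCoeff (AddCircle.liftIoc (2 * Real.pi) 0 (fun t => conj (g1 t) * g2 t)) 0 := by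
      rw [key, fourierCoef_eq]
      congr 2
      ext t
      rw [hg1, hg2]
      simp only [map_mul, ← Complex.exp_conj]
      simp
      ring
    rw [this, MeasureTheory.L2.inner_def, fourierCoeff]
    apply integral_congr_ae
    filter_upwards [h1.coeFn_toLp, h2.coeFn_toLp] with t ht1 ht2
    rw [ht1, ht2]
    simp only [RCLike.inner_apply', neg_zero, fourier_zero, one_smul]
    rfl
  simp only [e1, e2, e3] at hs
  exact hs

end EE
end

noncomputable section
namespace EE
open scoped ComplexConjugate Matrix ComplexOrder Matrix.Norms.L2Operator

variable {n : Type} [Fintype n] [DecidableEq n]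

/-- Euclidean norm of a vector. -/
def en (u : n → ℂ) : ℝ := ‖(WithLp.toLp 2 u : EuclideanSpace ℂ n)‖

lemma en_nonneg (u : n → ℂ) : 0 ≤ en u := norm_nonneg _

lemma en_sq (u : n → ℂ) : en u ^ 2 = ∑ k, ‖u k‖ ^ 2 := by
  unfold en
  rw [EuclideanSpace.norm_sq_eq]

lemma en_star (u : n → ℂ) : en (star u) = en u := by
  have h : en (star u) ^ 2 = en u ^ 2 := by
    rw [en_sq, en_sq]
    simp
  exact (sq_eq_sq₀ (en_nonneg _) (en_nonneg _)).mp h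

lemma norm_dot_le (u v : n → ℂ) : ‖u ⬝ᵥ v‖ ≤ en u * en v := by
  have h := norm_inner_le_norm (𝕜 := ℂ) (WithLp.toLp 2 (star u) : EuclideanSpace ℂ n)
    (WithLp.toLp 2 v)
  rw [EuclideanSpace.inner_eq_star_dotProduct] at h
  simp only [star_star] at h
  rw [dotProduct_comm] at h
  have h2 : ‖(WithLp.toLp 2 (star u) : EuclideanSpace ℂ n)‖ = en u := en_star u
  rw [h2] at h
  exact h

lemma en_mulVec_le (B : Matrix n n ℂ) (u : n → ℂ) : en (B *ᵥ u) ≤ ‖B‖ * en u :=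
  Matrix.l2_opNorm_mulVec B (WithLp.toLp 2 u)

lemma norm_le_of_mulVec (B : Matrix n n ℂ) (c : ℝ) (hc : 0 ≤ c)
    (h : ∀ u, en (B *ᵥ u) ≤ c * en u) : ‖B‖ ≤ c := by
  rw [Matrix.l2_opNorm_def]
  refine ContinuousLinearMap.opNorm_le_bound _ hc fun x => ?_
  exact h (WithLp.ofLp x)

lemma norm_one_le : ‖(1 : Matrix n n ℂ)‖ ≤ 1 :=
  norm_le_of_mulVec _ _ zero_le_one fun u => by simp

lemma norm_vecMulVec_le (u v : n → ℂ) : ‖Matrix.vecMulVec u v‖ ≤ en u * en v := by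
  refine norm_le_of_mulVec _ _ (mul_nonneg (en_nonneg _) (en_nonneg _)) fun w => ?_
  have h : Matrix.vecMulVec u v *ᵥ w = (v ⬝ᵥ w) • u := by
    ext i
    simp only [Matrix.mulVec, dotProduct, Matrix.vecMulVec_apply, Pi.smul_apply, smul_eq_mul,
      Finset.sum_mul]
    refine Finset.sum_congr rfl fun j _ => by ring
  rw [h]
  have h2 : en ((v ⬝ᵥ w) • u) = ‖v ⬝ᵥ w‖ * en u := by
    unfold en
    rw [WithLp.toLp_smul, norm_smul]
  rw [h2]
  nlinarith [norm_dot_le v w, en_nonneg u]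

/-- `NucLE F c`: the nuclear norm of `F` is at most `c` (by duality). -/
def NucLE (F : Matrix n n ℂ) (c : ℝ) : Prop :=
  ∀ B : Matrix n n ℂ, ‖B‖ ≤ 1 → ‖(B * F).trace‖ ≤ c

namespace NucLE
variable {F G : Matrix n n ℂ} {c d : ℝ}

lemma nonneg (h : NucLE F c) : 0 ≤ c := by
  have := h 0 (by simp)
  simpa using this

lemma trace_le (h : NucLE F c) (B : Matrix n n ℂ) : ‖(B * F).trace‖ ≤ ‖B‖ * c := by
  by_cases hB : ‖B‖ = 0
  · have : B = 0 := norm_eq_zero.mp hB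
    subst this
    simp
  · have hpos : 0 < ‖B‖ := lt_of_le_of_ne (norm_nonneg _) (Ne.symm hB)
    have h1 := h (((‖B‖⁻¹ : ℝ) : ℂ) • B) (by
      rw [norm_smul]
      simp only [Complex.norm_real, norm_inv, norm_norm]
      rw [inv_mul_cancel₀ hB])
    rw [Matrix.smul_mul, Matrix.trace_smul, norm_smul] at h1
    simp only [Complex.norm_real, norm_inv, norm_norm] at h1
    rwa [inv_mul_le_iff₀ hpos] at h1

lemma mono (h : NucLE F c) (hcd : c ≤ d) : NucLE F d := fun B hB => (h B hB).trans hcd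

lemma add (h : NucLE F c) (h' : NucLE G d) : NucLE (F + G) (c + d) := fun B hB => by
  rw [Matrix.mul_add, Matrix.trace_add]
  exact (norm_add_le _ _).trans (add_le_add (h B hB) (h' B hB))

lemma smul (h : NucLE F c) (z : ℂ) : NucLE (z • F) (‖z‖ * c) := fun B hB => by
  rw [Matrix.mul_smul, Matrix.trace_smul, norm_smul]
  exact mul_le_mul_of_nonneg_left (h B hB) (norm_nonneg _)

lemma neg (h : NucLE F c) : NucLE (-F) c := fun B hB => by
  rw [Matrix.mul_neg, Matrix.trace_neg, norm_neg]
  exact h B hB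

lemma zero : NucLE (0 : Matrix n n ℂ) 0 := fun B _ => by simp

lemma sum {ι : Type*} (s : Finset ι) (F : ι → Matrix n n ℂ) (c : ι → ℝ)
    (h : ∀ i ∈ s, NucLE (F i) (c i)) : NucLE (∑ i ∈ s, F i) (∑ i ∈ s, c i) := fun B hB => by
  rw [Matrix.mul_sum, Matrix.trace_sum]
  exact (norm_sum_le _ _).trans (Finset.sum_le_sum fun i hi => h i hi B hB)

lemma mul_left (h : NucLE F c) (G : Matrix n n ℂ) : NucLE (G * F) (‖G‖ * c) := fun B hB => by
  rw [← Matrix.mul_assoc]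
  refine (h.trace_le _).trans ?_
  apply mul_le_mul_of_nonneg_right _ h.nonneg
  calc ‖B * G‖ ≤ ‖B‖ * ‖G‖ := norm_mul_le _ _
    _ ≤ 1 * ‖G‖ := mul_le_mul_of_nonneg_right hB (norm_nonneg _)
    _ = ‖G‖ := one_mul _

lemma mul_right (h : NucLE F c) (G : Matrix n n ℂ) : NucLE (F * G) (‖G‖ * c) := fun B hB => by
  rw [← Matrix.mul_assoc, Matrix.trace_mul_comm, ← Matrix.mul_assoc]
  refine (h.trace_le _).trans ?_
  apply mul_le_mul_of_nonneg_right _ h.nonneg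
  calc ‖G * B‖ ≤ ‖G‖ * ‖B‖ := norm_mul_le _ _
    _ ≤ ‖G‖ * 1 := mul_le_mul_of_nonneg_left hB (norm_nonneg _)
    _ = ‖G‖ := mul_one _

lemma vecMulVec (u v : n → ℂ) : NucLE (Matrix.vecMulVec u v) (en u * en v) := fun B hB => by
  have h : (B * Matrix.vecMulVec u v).trace = v ⬝ᵥ (B *ᵥ u) := by
    rw [Matrix.mul_vecMulVec, Matrix.trace_vecMulVec, dotProduct_comm]
  rw [h]
  have h1 := norm_dot_le v (B *ᵥ u)
  have h2 := en_mulVec_le B u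
  have h3 : en (B *ᵥ u) ≤ en u := h2.trans (by nlinarith [en_nonneg u])
  nlinarith [en_nonneg u, en_nonneg v]

lemma hasSum {F : ℕ → Matrix n n ℂ} {F0 : Matrix n n ℂ} {c : ℕ → ℝ} {c0 : ℝ}
    (hF : ∀ j k, HasSum (fun l => F l j k) (F0 j k)) (hc : HasSum c c0)
    (h : ∀ l, NucLE (F l) (c l)) : NucLE F0 c0 := fun B hB => by
  have h1 : HasSum (fun l => (B * F l).trace) ((B * F0).trace) := by
    simp only [Matrix.trace, Matrix.diag_apply, Matrix.mul_apply]
    refine hasSum_sum fun i _ => hasSum_sum fun j _ => ?_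
    exact (hF j i).mul_left _
  exact h1.norm_le_of_bounded hc fun l => h l B hB

lemma norm_le (h : NucLE F c) : ‖F‖ ≤ c := by
  refine norm_le_of_mulVec _ _ h.nonneg fun u => ?_
  have h1 := h.trace_le (Matrix.vecMulVec u (star (F *ᵥ u)))
  have h2 : (Matrix.vecMulVec u (star (F *ᵥ u)) * F).trace = ((en (F *ᵥ u) ^ 2 : ℝ) : ℂ) := by
    rw [Matrix.trace_mul_comm, Matrix.mul_vecMulVec, Matrix.trace_vecMulVec, en_sq]
    simp only [dotProduct, Pi.star_apply, RCLike.star_def, Complex.mul_conj']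
    push_cast
    rfl
  rw [h2, Complex.norm_real, Real.norm_of_nonneg (sq_nonneg _)] at h1
  have h3 := norm_vecMulVec_le u (star (F *ᵥ u))
  rw [en_star] at h3
  have h4 : en (F *ᵥ u) ^ 2 ≤ en u * en (F *ᵥ u) * c :=
    h1.trans (mul_le_mul_of_nonneg_right h3 h.nonneg)
  by_cases h0 : en (F *ᵥ u) = 0
  · rw [h0]
    exact mul_nonneg h.nonneg (en_nonneg _)
  · have hp : 0 < en (F *ᵥ u) := lt_of_le_of_ne (en_nonneg _) (Ne.symm h0)
    nlinarith

lemma det_le (h : NucLE F c) : ‖(1 + F).det‖ ≤ Real.exp (c + c ^ 2 / 2) := by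
  set P := (1 + F)ᴴ * (1 + F) with hP
  have hpsd : P.PosSemidef := Matrix.posSemidef_conjTranspose_mul_self _
  have hdet : P.det = ((‖(1 + F).det‖ ^ 2 : ℝ) : ℂ) := by
    rw [hP, Matrix.det_mul, Matrix.det_conjTranspose, RCLike.star_def, Complex.conj_mul']
    push_cast
    rfl
  have hd2 : ‖(1 + F).det‖ ^ 2 = ∏ i, hpsd.isHermitian.eigenvalues i := by
    have := hpsd.isHermitian.det_eq_prod_eigenvalues
    rw [hdet] at this
    have h3 : ((‖(1 + F).det‖ ^ 2 : ℝ) : ℂ) = ((∏ i, hpsd.isHermitian.eigenvalues i : ℝ) : ℂ) := by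
      rw [this]
      push_cast
      rfl
    exact_mod_cast h3
  have htr : ∑ i, hpsd.isHermitian.eigenvalues i = P.trace.re := by
    have := hpsd.isHermitian.trace_eq_sum_eigenvalues
    rw [this]
    simp
  have htr2 : P.trace.re ≤ Fintype.card n + 2 * c + c ^ 2 := by
    have e : P = 1 + F + Fᴴ + Fᴴ * F := by
      rw [hP, Matrix.conjTranspose_add, Matrix.conjTranspose_one]
      noncomm_ring
    rw [e, Matrix.trace_add, Matrix.trace_add, Matrix.trace_add, Matrix.trace_one,
      Matrix.trace_conjTranspose]
    have t1 : ‖F.trace‖ ≤ c := by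
      have := h 1 norm_one_le
      rwa [Matrix.one_mul] at this
    have t2 : ‖(Fᴴ * F).trace‖ ≤ c * c := by
      refine (h.trace_le _).trans ?_
      rw [Matrix.l2_opNorm_conjTranspose]
      exact mul_le_mul_of_nonneg_right h.norm_le h.nonneg
    have t3 := (Complex.re_le_norm F.trace).trans t1
    have t4 := (Complex.re_le_norm _).trans t2
    simp only [Complex.add_re, Complex.natCast_re, RCLike.star_def, Complex.conj_re]
    nlinarith
  have hprod : ∏ i, hpsd.isHermitian.eigenvalues i ≤
      Real.exp (∑ i, (hpsd.isHermitian.eigenvalues i - 1)) := by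
    rw [Real.exp_sum]
    refine Finset.prod_le_prod (fun i _ => hpsd.eigenvalues_nonneg i) fun i _ => ?_
    have := Real.add_one_le_exp (hpsd.isHermitian.eigenvalues i - 1)
    linarith
  rw [← hd2, Finset.sum_sub_distrib, htr] at hprod
  have h5 : ‖(1 + F).det‖ ^ 2 ≤ Real.exp (c + c ^ 2 / 2) ^ 2 := by
    rw [← Real.exp_nat_mul]
    refine hprod.trans (Real.exp_le_exp.mpr ?_)
    simp
    linarith
  exact (sq_le_sq₀ (norm_nonneg _) (Real.exp_pos _).le).mp h5

/-- Neumann inverse. -/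
lemma inv (h : NucLE F c) (hc : c ≤ 1 / 2) :
    ∃ H : Matrix n n ℂ, (1 + F) * H = 1 ∧ H * (1 + F) = 1 ∧ ‖H‖ ≤ 2 := by
  have hF : ‖-F‖ < 1 := by
    rw [norm_neg]
    linarith [h.norm_le]
  have hu := Units.oneSub (-F) hF
  set U := Units.oneSub (-F) hF with hU
  have hv : (U : Matrix n n ℂ) = 1 + F := by
    rw [hU, Units.val_oneSub, sub_neg_eq_add]
  refine ⟨(U⁻¹ : _), ?_, ?_, ?_⟩
  · rw [← hv, Units.mul_inv]
  · rw [← hv, Units.inv_mul]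
  · have e1 : (1 + F) * ((U⁻¹ : (Matrix n n ℂ)ˣ) : Matrix n n ℂ) = 1 := by rw [← hv, Units.mul_inv]
    set H := ((U⁻¹ : (Matrix n n ℂ)ˣ) : Matrix n n ℂ)
    have e2 : H = 1 - F * H := by
      rw [← e1, Matrix.add_mul, Matrix.one_mul]
      abel
    have e3 : ‖H‖ ≤ 1 + ‖F‖ * ‖H‖ := by
      calc ‖H‖ = ‖1 - F * H‖ := by rw [← e2]
        _ ≤ ‖(1 : Matrix n n ℂ)‖ + ‖F * H‖ := norm_sub_le _ _
        _ ≤ 1 + ‖F‖ * ‖H‖ := add_le_add norm_one_le (norm_mul_le _ _)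
    nlinarith [h.norm_le, norm_nonneg H]

lemma log_det (h : NucLE F c) (hc : c ≤ 1 / 2) :
    (1 + F).det ≠ 0 ∧ |Real.log ‖(1 + F).det‖| ≤ 4 * c := by
  obtain ⟨H, h1, h2, h3⟩ := h.inv hc
  have hc0 := h.nonneg
  have hd : (1 + F).det * H.det = 1 := by rw [← Matrix.det_mul, h1, Matrix.det_one]
  have hne : (1 + F).det ≠ 0 := left_ne_zero_of_mul_eq_one hd
  refine ⟨hne, ?_⟩
  have hpos : 0 < ‖(1 + F).det‖ := norm_pos_iff.mpr hne
  have up : Real.log ‖(1 + F).det‖ ≤ c + c ^ 2 / 2 := by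
    rw [Real.log_le_iff_le_exp hpos]
    exact h.det_le
  have e : H = 1 + -(H * F) := by
    rw [← h2, Matrix.mul_add, Matrix.mul_one]
    abel
  have hN : NucLE (-(H * F)) (2 * c) :=
    ((h.mul_left H).neg).mono (mul_le_mul_of_nonneg_right h3 hc0)
  have low := hN.det_le
  rw [← e] at low
  have hdn : ‖(1 + F).det‖ * ‖H.det‖ = 1 := by rw [← norm_mul, hd, norm_one]
  have hH : ‖H.det‖ = ‖(1 + F).det‖⁻¹ := eq_inv_of_mul_eq_one_right hdn
  rw [hH, ← Real.log_le_iff_le_exp (inv_pos.mpr hpos), Real.log_inv] at low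
  rw [abs_le]
  constructor <;> nlinarith

end NucLE

/-- Finite rank matrix. -/
def finR {r : Type} [Fintype r] (k : r → ℂ) (U V : r → n → ℂ) : Matrix n n ℂ :=
  ∑ t, k t • Matrix.vecMulVec (U t) (V t)

lemma det_finR {r : Type} [Fintype r] [DecidableEq r] (k : r → ℂ) (U V : r → n → ℂ)
    (G : Matrix n n ℂ) : (1 + finR k U V * G).det =
      (1 + Matrix.of fun s t => k s * (V s ⬝ᵥ (G *ᵥ U t))).det := by
  have h : finR k U V = (Matrix.of fun i t => U t i) * (Matrix.of fun t i => k t * V t i) := by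
    ext i j
    simp only [finR, Matrix.sum_apply, Matrix.smul_apply, Matrix.vecMulVec_apply, Matrix.mul_apply,
      Matrix.of_apply, smul_eq_mul]
    refine Finset.sum_congr rfl fun t _ => by ring
  rw [h, Matrix.mul_assoc, Matrix.det_one_add_mul_comm, Matrix.mul_assoc]
  congr 2
  ext s t
  simp only [Matrix.mul_apply, Matrix.of_apply, dotProduct, Matrix.mulVec, Finset.mul_sum]
  refine Finset.sum_congr rfl fun i _ => Finset.sum_congr rfl fun j _ => by ring

lemma det_finR_le {r : Type} [Fintype r] [DecidableEq r] (k : r → ℂ) (U V : r → n → ℂ)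
    (G : Matrix n n ℂ) (κ : ℝ) (h : ∀ s t, ‖k s‖ * (en (V s) * en (U t)) ≤ κ) :
    ‖(1 + finR k U V * G).det‖ ≤
      (Fintype.card r).factorial * (1 + κ * ‖G‖) ^ Fintype.card r := by
  rw [det_finR]
  have := Matrix.det_le (abv := (NormedField.toAbsoluteValue ℂ)) (x := 1 + κ * ‖G‖)
    (A := (1 + Matrix.of fun s t => k s * (V s ⬝ᵥ (G *ᵥ U t)))) (by
      intro s t
      change ‖(1 + Matrix.of fun s t => k s * (V s ⬝ᵥ (G *ᵥ U t))) s t‖ ≤ _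
      rw [Matrix.add_apply]
      refine (norm_add_le _ _).trans (add_le_add ?_ ?_)
      · rw [Matrix.one_apply]
        split_ifs <;> simp
      · rw [Matrix.of_apply, norm_mul]
        have h1 := norm_dot_le (V s) (G *ᵥ U t)
        have h2 := en_mulVec_le G (U t)
        calc ‖k s‖ * ‖V s ⬝ᵥ (G *ᵥ U t)‖ ≤ ‖k s‖ * (en (V s) * (‖G‖ * en (U t))) := by
              apply mul_le_mul_of_nonneg_left _ (norm_nonneg _)
              exact h1.trans (mul_le_mul_of_nonneg_left h2 (en_nonneg _))
          _ = (‖k s‖ * (en (V s) * en (U t))) * ‖G‖ := by ring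
          _ ≤ κ * ‖G‖ := mul_le_mul_of_nonneg_right (h s t) (norm_nonneg _))
  rw [nsmul_eq_mul] at this
  exact this

lemma det_split_le {r : Type} [Fintype r] [DecidableEq r] (k : r → ℂ) (U V : r → n → ℂ)
    (E G : Matrix n n ℂ) (κ ε D : ℝ) (hκ : 0 ≤ κ) (hD : ‖G‖ ≤ D)
    (h : ∀ s t, ‖k s‖ * (en (V s) * en (U t)) ≤ κ)
    (hE : NucLE E ε) (hεD : D * ε ≤ 1 / 2) :
    ‖(1 + (finR k U V + E) * G).det‖ ≤
      Real.exp 1 * ((Fintype.card r).factorial * (1 + κ * (2 * D)) ^ Fintype.card r) := by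
  have hEG : NucLE (E * G) (1 / 2) :=
    (hE.mul_right G).mono ((mul_le_mul_of_nonneg_right hD hE.nonneg).trans hεD)
  obtain ⟨H, h1, h2, h3⟩ := hEG.inv le_rfl
  have e : 1 + (finR k U V + E) * G = (1 + finR k U V * (G * H)) * (1 + E * G) := by
    rw [Matrix.add_mul (finR k U V) E G, Matrix.add_mul (1 : Matrix n n ℂ), Matrix.one_mul,
      Matrix.mul_assoc (finR k U V), Matrix.mul_assoc G, h2, Matrix.mul_one]
    abel
  rw [e, Matrix.det_mul, norm_mul, mul_comm]
  have hD0 : 0 ≤ D := (norm_nonneg _).trans hD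
  apply mul_le_mul
  · refine hEG.det_le.trans (Real.exp_le_exp.mpr (by norm_num))
  · refine (det_finR_le k U V (G * H) κ h).trans ?_
    have : ‖G * H‖ ≤ 2 * D := by
      refine (norm_mul_le _ _).trans ?_
      nlinarith [norm_nonneg G, norm_nonneg H]
    gcongr
  · exact norm_nonneg _
  · exact (Real.exp_pos _).le

/-- Coercive matrices are invertible with bounded inverse. -/
lemma coercive_inv (T : Matrix n n ℂ) (δ : ℝ) (hδ : 0 < δ)
    (h : ∀ x : n → ℂ, δ * ∑ k, ‖x k‖ ^ 2 ≤ (star x ⬝ᵥ (T *ᵥ x)).re) :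
    T.det ≠ 0 ∧ ‖T⁻¹‖ ≤ 1 / δ := by
  have key : ∀ x : n → ℂ, δ * en x ≤ en (T *ᵥ x) := by
    intro x
    have h1 := h x
    rw [← en_sq] at h1
    have h2 := (Complex.re_le_norm _).trans (norm_dot_le (star x) (T *ᵥ x))
    rw [en_star] at h2
    by_cases h0 : en x = 0
    · rw [h0, mul_zero]
      exact en_nonneg _
    · have hp : 0 < en x := lt_of_le_of_ne (en_nonneg _) (Ne.symm h0)
      nlinarith
  have hdet : T.det ≠ 0 := by
    intro h0
    obtain ⟨v, hv, hTv⟩ := Matrix.exists_mulVec_eq_zero_iff.mpr h0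
    have h1 := key v
    rw [hTv] at h1
    have h2 : en (0 : n → ℂ) = 0 := by simp [en]
    rw [h2] at h1
    have h3 : en v = 0 := le_antisymm (by nlinarith) (en_nonneg _)
    apply hv
    unfold en at h3
    rw [norm_eq_zero] at h3
    simpa using h3
  refine ⟨hdet, ?_⟩
  refine norm_le_of_mulVec _ _ (by positivity) fun u => ?_
  have h1 := key (T⁻¹ *ᵥ u)
  rw [Matrix.mulVec_mulVec, Matrix.mul_nonsing_inv _ (Ne.isUnit hdet), Matrix.one_mulVec] at h1
  rw [div_mul_eq_mul_div, one_mul, le_div_iff₀ hδ]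
  linarith

end EE
end

noncomputable section
namespace EE
open scoped ComplexConjugate Matrix ComplexOrder Matrix.Norms.L2Operator
open fwdDiff

/-- basic decaying vectors -/
def Wv (z : ℂ) (m : ℝ) (q l j : ℕ) : ℂ :=
  z ^ j / ∏ i ∈ Finset.range (q + 1), ((j + l + i + 1 : ℝ) + m * Complex.I : ℂ)

lemma le_norm_add_I (a m : ℝ) : a ≤ ‖((a : ℝ) + m * Complex.I : ℂ)‖ := by
  have := Complex.re_le_norm ((a : ℝ) + m * Complex.I : ℂ)
  simpa using this

lemma add_I_ne (a m : ℝ) (ha : 0 < a) : ((a : ℝ) + m * Complex.I : ℂ) ≠ 0 := by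
  intro h
  have := le_norm_add_I a m
  rw [h, norm_zero] at this
  linarith

lemma Wv_norm_le (z : ℂ) (hz : ‖z‖ = 1) (m : ℝ) (q l j : ℕ) :
    ‖Wv z m q l j‖ ≤ 1 / ((l + 1 : ℝ) ^ q * (j + l + 1)) := by
  unfold Wv
  rw [norm_div, norm_pow, hz, one_pow, norm_prod, Finset.prod_range_succ']
  apply one_div_le_one_div_of_le (by positivity)
  apply mul_le_mul
  · rw [← Finset.card_range q, ← Finset.prod_const, Finset.card_range]
    apply Finset.prod_le_prod
    · intros; positivity
    · intro i _
      refine le_trans ?_ (by exact_mod_cast le_norm_add_I (j + l + (i + 1 : ℕ) + 1) m)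
      push_cast
      have : (0 : ℝ) ≤ j := by positivity
      have : (0 : ℝ) ≤ i := by positivity
      linarith
  · refine le_trans ?_ (by exact_mod_cast le_norm_add_I (j + l + (0 : ℕ) + 1) m)
    push_cast
    linarith
  · positivity
  · positivity

lemma Wv_diff (z : ℂ) (m : ℝ) (q l j : ℕ) :
    Wv z m q (l + 1) j - Wv z m q l j = -(q + 1 : ℂ) * Wv z m (q + 1) l j := by
  unfold Wv
  have e1 : ∏ i ∈ Finset.range (q + 1 + 1), ((j + l + i + 1 : ℝ) + m * Complex.I : ℂ) =
      (∏ i ∈ Finset.range (q + 1), ((j + (l + 1 : ℕ) + i + 1 : ℝ) + m * Complex.I : ℂ)) *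
        ((j + l + 1 : ℝ) + m * Complex.I : ℂ) := by
    rw [Finset.prod_range_succ']
    congr 1
    · refine Finset.prod_congr rfl fun i _ => ?_
      push_cast
      ring
    · push_cast
      ring
  have e2 : ∏ i ∈ Finset.range (q + 1 + 1), ((j + l + i + 1 : ℝ) + m * Complex.I : ℂ) =
      (∏ i ∈ Finset.range (q + 1), ((j + l + i + 1 : ℝ) + m * Complex.I : ℂ)) *
        ((j + l + (q + 1 : ℕ) + 1 : ℝ) + m * Complex.I : ℂ) := by
    rw [Finset.prod_range_succ]
  have n1 : (((j + l + 1 : ℝ) : ℂ) + m * Complex.I : ℂ) ≠ 0 := add_I_ne _ _ (by positivity)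
  have n2 : (((j + l + (q + 1 : ℕ) + 1 : ℝ) : ℂ) + m * Complex.I : ℂ) ≠ 0 :=
    add_I_ne _ _ (by positivity)
  have nP : ∏ i ∈ Finset.range (q + 1 + 1), ((j + l + i + 1 : ℝ) + m * Complex.I : ℂ) ≠ 0 :=
    Finset.prod_ne_zero_iff.mpr fun i _ => add_I_ne _ _ (by positivity)
  set P := ∏ i ∈ Finset.range (q + 1 + 1), ((j + l + i + 1 : ℝ) + m * Complex.I : ℂ) with hP
  rw [eq_div_of_mul_eq n1 e1.symm, eq_div_of_mul_eq n2 e2.symm]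
  push_cast at n1 n2 ⊢
  field_simp
  ring

/-- position from the left or from the right -/
def pos {N : ℕ} (σ : Bool) (j : Fin N) : ℕ := if σ then (Fin.rev j : ℕ) else (j : ℕ)

lemma sum_pos {N : ℕ} (σ : Bool) (F : ℕ → ℝ) :
    ∑ j : Fin N, F (pos σ j) = ∑ j ∈ Finset.range N, F j := by
  rw [← Fin.sum_univ_eq_sum_range]
  cases σ
  · simp [pos]
  · simp only [pos, if_true]
    exact Equiv.sum_comp Fin.revPerm (fun j : Fin N => F (j : ℕ))

lemma sum_inv_sq_le (L : ℝ) (hL : 1 ≤ L) (N : ℕ) :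
    ∑ j ∈ Finset.range N, (1 / ((j : ℝ) + L)) ^ 2 ≤ 2 / L - 2 / (N + L) := by
  induction N with
  | zero => simp
  | succ N ih =>
    rw [Finset.sum_range_succ]
    have hN : (0 : ℝ) ≤ N := by positivity
    have : (1 / ((N : ℝ) + L)) ^ 2 ≤ 2 / (N + L) - 2 / ((N + 1 : ℕ) + L) := by
      push_cast
      rw [div_sub_div _ _ (by positivity) (by positivity), div_pow,
        div_le_div_iff₀ (by positivity) (by positivity)]
      have hy : 1 ≤ (N : ℝ) + L := by linarith
      set y := (N : ℝ) + L
      have : (N : ℝ) + 1 + L = y + 1 := by simp only [y]; ring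
      rw [this]
      nlinarith [sq_nonneg y]
    linarith

/-- the vectors on `Fin N` -/
def Uv (N : ℕ) (σ : Bool) (z : ℂ) (m : ℝ) (q l : ℕ) : Fin N → ℂ := fun j => Wv z m q l (pos σ j)

lemma en_Uv (N : ℕ) (σ : Bool) (z : ℂ) (hz : ‖z‖ = 1) (m : ℝ) (q l : ℕ) :
    en (Uv N σ z m q l) ^ 2 ≤ 2 / (l + 1 : ℝ) ^ (2 * q + 1) := by
  rw [en_sq]
  have h1 : ∀ j : Fin N, ‖Uv N σ z m q l j‖ ^ 2 ≤
      (1 / (l + 1 : ℝ) ^ (2 * q)) * (1 / ((pos σ j : ℝ) + (l + 1))) ^ 2 := by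
    intro j
    have h := pow_le_pow_left₀ (norm_nonneg _) (Wv_norm_le z hz m q l (pos σ j)) 2
    refine h.trans (le_of_eq ?_)
    rw [pow_mul' (l + 1 : ℝ), ← add_assoc]
    field_simp
  refine (Finset.sum_le_sum fun j _ => h1 j).trans ?_
  rw [← Finset.mul_sum, sum_pos σ (fun j => (1 / ((j : ℝ) + (l + 1))) ^ 2)]
  have h2 := sum_inv_sq_le (l + 1 : ℝ) (by linarith [(Nat.cast_nonneg l : (0 : ℝ) ≤ l)]) N
  have h3 : (0 : ℝ) ≤ 2 / (N + (l + 1)) := by positivity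
  calc _ ≤ (1 / (l + 1 : ℝ) ^ (2 * q)) * (2 / (l + 1)) :=
        mul_le_mul_of_nonneg_left (by linarith) (by positivity)
    _ = _ := by
      rw [pow_succ]
      field_simp

lemma en_Uv_le (N : ℕ) (σ : Bool) (z : ℂ) (hz : ‖z‖ = 1) (m : ℝ) (q l : ℕ) :
    en (Uv N σ z m q l) ≤ 2 := by
  have h := en_Uv N σ z hz m q l
  have h2 : 2 / (l + 1 : ℝ) ^ (2 * q + 1) ≤ 2 := by
    apply div_le_self (by norm_num)
    apply one_le_pow₀
    linarith [(Nat.cast_nonneg l : (0 : ℝ) ≤ l)]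
  nlinarith [en_nonneg (Uv N σ z m q l)]

lemma en_mul_le (N : ℕ) (σ : Bool) (z z' : ℂ) (hz : ‖z‖ = 1) (hz' : ‖z'‖ = 1) (m m' : ℝ)
    (q r a b l : ℕ) :
    en (Uv N σ z m q (l + a)) * en (Uv N σ z' m' r (l + b)) ≤ 2 / (l + 1 : ℝ) ^ (q + r + 1) := by
  have h1 := en_Uv N σ z hz m q (l + a)
  have h2 := en_Uv N σ z' hz' m' r (l + b)
  have g1 : (2 : ℝ) / ((l + a : ℕ) + 1 : ℝ) ^ (2 * q + 1) ≤ 2 / (l + 1 : ℝ) ^ (2 * q + 1) := by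
    push_cast
    gcongr
    linarith [(Nat.cast_nonneg a : (0 : ℝ) ≤ a)]
  have g2 : (2 : ℝ) / ((l + b : ℕ) + 1 : ℝ) ^ (2 * r + 1) ≤ 2 / (l + 1 : ℝ) ^ (2 * r + 1) := by
    push_cast
    gcongr
    linarith [(Nat.cast_nonneg b : (0 : ℝ) ≤ b)]
  apply le_of_sq_le_sq₀ ?_ (by positivity)
  rw [mul_pow]
  calc _ ≤ (2 / (l + 1 : ℝ) ^ (2 * q + 1)) * (2 / (l + 1 : ℝ) ^ (2 * r + 1)) :=
        mul_le_mul (h1.trans g1) (h2.trans g2) (by positivity) (by positivity)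
    _ = _ := by
      rw [div_mul_div_comm, ← pow_add, div_pow, ← pow_mul]
      norm_num
      ring_nf
where
  le_of_sq_le_sq₀ {a b : ℝ} (h : a ^ 2 ≤ b ^ 2) (hb : 0 ≤ b) : a ≤ b :=
    le_of_abs_le (by simpa [abs_of_nonneg hb] using sq_le_sq.mp h)

/-- constants for iterated differences -/
def Cdiff : ℕ → ℕ → ℕ → ℝ
  | 0, _, _ => 2
  | p + 1, q, r => (q + 1) * Cdiff p (q + 1) r + (r + 1) * Cdiff p q (r + 1)

lemma Cdiff_nonneg (p q r : ℕ) : 0 ≤ Cdiff p q r := by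
  induction p generalizing q r with
  | zero => simp [Cdiff]
  | succ p ih =>
    have := ih (q + 1) r
    have := ih q (r + 1)
    simp only [Cdiff]
    positivity

/-- the rank one matrices -/
def gmat (N : ℕ) (σ : Bool) (z z' : ℂ) (m m' : ℝ) (q r a b : ℕ) (l : ℕ) :
    Matrix (Fin N) (Fin N) ℂ :=
  Matrix.vecMulVec (Uv N σ z m q (l + a)) (Uv N σ z' m' r (l + b))

lemma gmat_diff (N : ℕ) (σ : Bool) (z z' : ℂ) (m m' : ℝ) (q r a b : ℕ) :
    Δ_[1] (gmat N σ z z' m m' q r a b) =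
      (-(q + 1 : ℂ)) • gmat N σ z z' m m' (q + 1) r a (b + 1)
        + (-(r + 1 : ℂ)) • gmat N σ z z' m m' q (r + 1) a b := by
  funext l
  ext j k
  have h1 := Wv_diff z m q (l + a) (pos σ j)
  have h2 := Wv_diff z' m' r (l + b) (pos σ k)
  simp only [fwdDiff, gmat, Matrix.sub_apply, Matrix.vecMulVec_apply, Uv, Pi.add_apply,
    Pi.smul_apply, Matrix.add_apply, Matrix.smul_apply, smul_eq_mul]
  rw [show l + 1 + a = l + a + 1 by ring, show l + 1 + b = l + b + 1 by ring,
    show l + (b + 1) = l + b + 1 by ring, ← mul_assoc, ← h1, mul_left_comm, ← h2]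
  ring

lemma gmat_nuc (N : ℕ) (σ : Bool) (z z' : ℂ) (hz : ‖z‖ = 1) (hz' : ‖z'‖ = 1) (m m' : ℝ)
    (p q r a b l : ℕ) :
    NucLE (((fwdDiff 1)^[p] (gmat N σ z z' m m' q r a b)) l)
      (Cdiff p q r / (l + 1 : ℝ) ^ (q + r + p + 1)) := by
  induction p generalizing q r a b with
  | zero =>
    simp only [Function.iterate_zero, id, Cdiff]
    exact (NucLE.vecMulVec _ _).mono (en_mul_le N σ z z' hz hz' m m' q r a b l)
  | succ p ih =>
    rw [Function.iterate_succ_apply, gmat_diff, fwdDiff_iter_add, fwdDiff_iter_const_smul,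
      fwdDiff_iter_const_smul]
    have h1 := (ih (q + 1) r a (b + 1)).smul (-(q + 1 : ℂ))
    have h2 := (ih q (r + 1) a b).smul (-(r + 1 : ℂ))
    refine (h1.add h2).mono (le_of_eq ?_)
    have n1 : ∀ q : ℕ, ‖(-(q + 1 : ℂ))‖ = q + 1 := by
      intro q
      rw [norm_neg]
      exact_mod_cast Complex.norm_natCast (q + 1)
    rw [n1, n1, Cdiff, show q + 1 + r + p + 1 = q + r + (p + 1) + 1 by ring,
      show q + (r + 1) + p + 1 = q + r + (p + 1) + 1 by ring]
    ring

end EE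
end

noncomputable section
namespace EE
open scoped ComplexConjugate Matrix ComplexOrder Matrix.Norms.L2Operator

lemma summable_pow_mul {ω : ℂ} (hω : ‖ω‖ = 1) {h : ℕ → ℂ} (hh : Summable h) :
    Summable (fun l => ω ^ l * h l) := by
  apply Summable.of_norm
  simpa [hω] using hh.norm

lemma summable_fwdDiff {h : ℕ → ℂ} (hh : Summable h) (p : ℕ) :
    Summable ((fwdDiff 1)^[p] h) := by
  induction p generalizing h with
  | zero => simpa using hh
  | succ p ih =>
    rw [Function.iterate_succ_apply]
    apply ih
    exact ((summable_nat_add_iff 1).mpr hh).sub hh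

lemma sbp_step {ω : ℂ} (hω : ‖ω‖ = 1) (h1 : ω ≠ 1) {h : ℕ → ℂ} (hh : Summable h) (M : ℕ) :
    ∑' l, ω ^ (M + l) * h (M + l) = ω ^ M / (1 - ω) * h M +
      ω / (1 - ω) * ∑' l, ω ^ (M + l) * fwdDiff 1 h (M + l) := by
  have h1' : 1 - ω ≠ 0 := sub_ne_zero.mpr (Ne.symm h1)
  have s0 := summable_pow_mul hω hh
  have sM : Summable (fun l => ω ^ (M + l) * h (M + l)) := by
    have := (summable_nat_add_iff M).mpr s0
    simpa [add_comm] using this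
  have sM1 : Summable (fun l => ω ^ (M + (l + 1)) * h (M + (l + 1))) :=
    (summable_nat_add_iff 1).mpr sM
  have e1 := sM.tsum_eq_zero_add
  have e2 : ω * ∑' l, ω ^ (M + l) * fwdDiff 1 h (M + l) =
      (∑' l, ω ^ (M + (l + 1)) * h (M + (l + 1))) - ω * ∑' l, ω ^ (M + l) * h (M + l) := by
    rw [← tsum_mul_left, ← tsum_mul_left, ← sM1.tsum_sub (sM.mul_left ω)]
    refine tsum_congr fun l => ?_
    simp only [fwdDiff]
    rw [show M + l + 1 = M + (l + 1) by ring]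
    ring
  rw [div_mul_eq_mul_div ω, e2]
  rw [add_zero] at e1
  field_simp
  linear_combination e1

lemma sbp {ω : ℂ} (hω : ‖ω‖ = 1) (h1 : ω ≠ 1) (p : ℕ) : ∃ C : ℝ, 0 ≤ C ∧ ∀ M : ℕ, ∃ κ : ℕ → ℂ,
    (∀ l, ‖κ l‖ ≤ C) ∧ ∀ h : ℕ → ℂ, Summable h →
      ∑' l, ω ^ l * h l = ∑ l ∈ Finset.range (M + p), κ l * h l +
        (ω / (1 - ω)) ^ p * ∑' l, ω ^ (M + l) * (fwdDiff 1)^[p] h (M + l) := by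
  induction p with
  | zero =>
    refine ⟨1, zero_le_one, fun M => ⟨fun l => ω ^ l, fun l => by simp [hω], fun h hh => ?_⟩⟩
    simp only [pow_zero, one_mul, add_zero, Function.iterate_zero, id]
    rw [← (summable_pow_mul hω hh).sum_add_tsum_nat_add M]
    simp [add_comm]
  | succ p ih =>
    obtain ⟨C, hC, ih⟩ := ih
    set A : ℂ := (ω / (1 - ω)) ^ p with hA
    refine ⟨C + ‖A‖ * (1 / ‖1 - ω‖) * 2 ^ p, by positivity, fun M => ?_⟩
    obtain ⟨κ, hκ, ih⟩ := ih M
    refine ⟨fun l => (if l < M + p then κ l else 0) + if l < M then 0 else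
      A * (ω ^ M / (1 - ω)) * (((-1 : ℤ) ^ (p - (l - M)) * p.choose (l - M) : ℤ) : ℂ),
      fun l => ?_, fun h hh => ?_⟩
    · refine (norm_add_le _ _).trans (add_le_add ?_ ?_)
      · split_ifs
        · exact hκ l
        · simpa using hC
      · split_ifs
        · simp only [norm_zero]; positivity
        · rw [norm_mul, norm_mul, norm_div, norm_pow ω, hω, one_pow]
          gcongr
          push_cast
          rw [norm_mul, norm_pow, norm_neg, norm_one, one_pow, one_mul, Complex.norm_natCast]
          exact_mod_cast Nat.choose_le_two_pow p (l - M)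
    · rw [ih h hh, sbp_step hω h1 (summable_fwdDiff hh p) M,
        fwdDiff_iter_eq_sum_shift]
      simp only [← Function.iterate_succ_apply' (fwdDiff 1)]
      have e1 : ∑ l ∈ Finset.range (M + (p + 1)),
          ((if l < M + p then κ l else 0) + if l < M then 0 else
            A * (ω ^ M / (1 - ω)) * (((-1 : ℤ) ^ (p - (l - M)) * p.choose (l - M) : ℤ) : ℂ)) * h l =
          ∑ l ∈ Finset.range (M + p), κ l * h l + A * (ω ^ M / (1 - ω)) *
          ∑ k ∈ Finset.range (p + 1), ((-1 : ℤ) ^ (p - k) * p.choose k) • h (M + k • 1) := by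
        simp only [add_mul, Finset.sum_add_distrib]
        congr 1
        · rw [← add_assoc, Finset.sum_range_succ]
          simp only [lt_irrefl, if_false, zero_mul, add_zero]
          refine Finset.sum_congr rfl fun l hl => ?_
          rw [if_pos (Finset.mem_range.mp hl)]
        · rw [Finset.sum_range_add]
          rw [Finset.sum_eq_zero, zero_add, Finset.mul_sum]
          · refine Finset.sum_congr rfl fun l hl => ?_
            rw [if_neg (by omega)]
            simp only [add_tsub_cancel_left, smul_eq_mul, mul_one, zsmul_eq_mul]
            ring
          · intro l hl
            rw [if_pos (Finset.mem_range.mp hl), zero_mul]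
      rw [e1]
      rw [pow_succ, ← hA]
      ring

lemma gmat_apply_norm (N : ℕ) (σ : Bool) (z z' : ℂ) (hz : ‖z‖ = 1) (hz' : ‖z'‖ = 1) (m m' : ℝ)
    (l : ℕ) (j k : Fin N) : ‖gmat N σ z z' m m' 0 0 0 0 l j k‖ ≤ 1 / (l + 1 : ℝ) ^ 2 := by
  rw [gmat, Matrix.vecMulVec_apply, norm_mul]
  have h1 : ∀ z : ℂ, ‖z‖ = 1 → ∀ m : ℝ, ∀ j : Fin N, ‖Uv N σ z m 0 (l + 0) j‖ ≤ 1 / (l + 1) := by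
    intro z hz m j
    refine (Wv_norm_le z hz m 0 l (pos σ j)).trans ?_
    rw [pow_zero, one_mul]
    apply one_div_le_one_div_of_le (by positivity)
    linarith [(Nat.cast_nonneg (pos σ j) : (0 : ℝ) ≤ (pos σ j : ℝ))]
  calc _ ≤ (1 / (l + 1 : ℝ)) * (1 / (l + 1 : ℝ)) :=
        mul_le_mul (h1 z hz m j) (h1 z' hz' m' k) (norm_nonneg _) (by positivity)
    _ = _ := by field_simp

lemma summable_sq1 : Summable (fun l : ℕ => 1 / (l + 1 : ℝ) ^ 2) := by
  have := (summable_nat_add_iff 1).mpr (Real.summable_one_div_nat_pow.mpr (one_lt_two))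
  simpa using this

lemma gmat_summable (N : ℕ) (σ : Bool) (z z' : ℂ) (hz : ‖z‖ = 1) (hz' : ‖z'‖ = 1) (m m' : ℝ)
    (j k : Fin N) : Summable (fun l => gmat N σ z z' m m' 0 0 0 0 l j k) :=
  Summable.of_norm_bounded summable_sq1 fun l => gmat_apply_norm N σ z z' hz hz' m m' l j k

lemma fwdDiff_apply_mat {N : ℕ} (g : ℕ → Matrix (Fin N) (Fin N) ℂ) (p : ℕ) (j k : Fin N) (l : ℕ) :
    (fwdDiff 1)^[p] (fun l => g l j k) l = ((fwdDiff 1)^[p] g l) j k := by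
  induction p generalizing g with
  | zero => rfl
  | succ p ih =>
    rw [Function.iterate_succ_apply, Function.iterate_succ_apply, ← ih]
    rfl

/-- the matrices whose sums give the separation remainder -/
def Zt (N : ℕ) (σ : Bool) (ω z z' : ℂ) (m m' : ℝ) : Matrix (Fin N) (Fin N) ℂ :=
  Matrix.of fun j k => ∑' l, ω ^ l * gmat N σ z z' m m' 0 0 0 0 l j k

theorem decomp {ω : ℂ} (hω : ‖ω‖ = 1) (h1 : ω ≠ 1) (p : ℕ) (hp : 1 ≤ p) :
    ∃ C : ℝ, 0 ≤ C ∧ ∀ M : ℕ, ∃ κ : ℕ → ℂ, (∀ l, ‖κ l‖ ≤ C) ∧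
      ∀ (N : ℕ) (σ : Bool) (z z' : ℂ), ‖z‖ = 1 → ‖z'‖ = 1 → ∀ m m' : ℝ,
      NucLE (Zt N σ ω z z' m m' - ∑ l ∈ Finset.range (M + p), κ l •
          Matrix.vecMulVec (Uv N σ z m 0 l) (Uv N σ z' m' 0 l)) (C / (M + 1 : ℝ) ^ (p - 1)) := by
  obtain ⟨C, hC, hsbp⟩ := sbp hω h1 p
  obtain ⟨S, hS⟩ := summable_sq1
  have hS0 : 0 ≤ S := hS.nonneg fun l => by positivity
  set A : ℂ := (ω / (1 - ω)) ^ p with hA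
  refine ⟨C + ‖A‖ * (Cdiff p 0 0 * S), by have := Cdiff_nonneg p 0 0; positivity, fun M => ?_⟩
  obtain ⟨κ, hκ, hsbp⟩ := hsbp M
  have hCd := Cdiff_nonneg p 0 0
  refine ⟨κ, fun l => (hκ l).trans (le_add_of_nonneg_right (by positivity)),
    fun N σ z z' hz hz' m m' => ?_⟩
  set g := gmat N σ z z' m m' 0 0 0 0 with hg
  have hsum : ∀ j k, Summable (fun l => g l j k) := gmat_summable N σ z z' hz hz' m m'
  have e : Zt N σ ω z z' m m' - ∑ l ∈ Finset.range (M + p), κ l •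
      Matrix.vecMulVec (Uv N σ z m 0 l) (Uv N σ z' m' 0 l) =
      A • Matrix.of fun j k => ∑' l, ω ^ (M + l) * ((fwdDiff 1)^[p] g (M + l)) j k := by
    ext j k
    rw [Matrix.sub_apply, Zt, Matrix.of_apply, ← hg, hsbp _ (hsum j k), Matrix.sum_apply]
    simp only [fwdDiff_apply_mat, Matrix.smul_apply, smul_eq_mul, Matrix.of_apply]
    exact add_sub_cancel_left _ _
  rw [e]
  have hn : NucLE (Matrix.of fun j k => ∑' l, ω ^ (M + l) * ((fwdDiff 1)^[p] g (M + l)) j k)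
      (Cdiff p 0 0 / (M + 1 : ℝ) ^ (p - 1) * S) := by
    refine NucLE.hasSum (F := fun l => ω ^ (M + l) • ((fwdDiff 1)^[p] g (M + l)))
      (c := fun l => Cdiff p 0 0 / (M + 1 : ℝ) ^ (p - 1) * (1 / (l + 1 : ℝ) ^ 2)) ?_
      (hS.mul_left _) ?_
    · intro j k
      have hs : Summable (fun l => ω ^ (M + l) * ((fwdDiff 1)^[p] g (M + l)) j k) := by
        have := (summable_nat_add_iff M).mpr
          (summable_pow_mul hω (summable_fwdDiff (hsum j k) p))
        simp only [fwdDiff_apply_mat] at this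
        simpa [add_comm] using this
      exact hs.hasSum
    · intro l
      refine ((gmat_nuc N σ z z' hz hz' m m' p 0 0 0 0 (M + l)).smul (ω ^ (M + l))).mono ?_
      rw [norm_pow, hω, one_pow, one_mul, zero_add, zero_add, div_mul_div_comm, mul_one]
      apply div_le_div_of_nonneg_left hCd (by positivity)
      obtain ⟨p, rfl⟩ : ∃ q, p = q + 1 := ⟨p - 1, by omega⟩
      rw [Nat.add_sub_cancel, add_assoc, pow_add]
      have : (0 : ℝ) ≤ M := by positivity
      have : (0 : ℝ) ≤ l := by positivity
      push_cast
      gcongr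
      · linarith
      · linarith
  refine (hn.smul A).mono ?_
  rw [add_div]
  refine le_add_of_nonneg_of_le (by positivity) (le_of_eq ?_)
  ring

end EE
end

noncomputable section
namespace EE
open scoped ComplexConjugate Matrix ComplexOrder Matrix.Norms.L2Operator
open Filter Topology

/-- Galerkin solution -/
def xs (a : ℝ → ℝ) (u : ℕ → ℂ) (N : ℕ) : Fin N → ℂ := (toep a N)⁻¹ *ᵥ (fun j => u j)

/-- its extension by zero -/
def xe (a : ℝ → ℝ) (u : ℕ → ℂ) (N : ℕ) (j : ℕ) : ℂ := if h : j < N then xs a u N ⟨j, h⟩ else 0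

lemma xe_fin (a : ℝ → ℝ) (u : ℕ → ℂ) (N : ℕ) (j : Fin N) : xe a u N j = xs a u N j := by
  simp [xe]

lemma sum_fin_ext {N M : ℕ} (h : N ≤ M) (F : ℕ → ℂ) (hF : ∀ j, N ≤ j → F j = 0) :
    ∑ j : Fin M, F j = ∑ j : Fin N, F j := by
  rw [Fin.sum_univ_eq_sum_range (fun j => F j) M, Fin.sum_univ_eq_sum_range (fun j => F j) N]
  symm
  apply Finset.sum_subset (Finset.range_mono h)
  intro j _ hj
  exact hF j (by simpa using hj)

section

lemma toep_inv_facts {a : ℝ → ℝ} (ha : Nice a) {δ : ℝ} (hδ : 0 < δ) (hl : ∀ᵐ t ∂mu0, δ ≤ a t)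
    (N : ℕ) : (toep a N).det ≠ 0 ∧ ‖(toep a N)⁻¹‖ ≤ 1 / δ :=
  coercive_inv _ δ hδ (toep_lower ha hl N)

lemma toep_mul_xs {a : ℝ → ℝ} (ha : Nice a) {δ : ℝ} (hδ : 0 < δ) (hl : ∀ᵐ t ∂mu0, δ ≤ a t) (u : ℕ → ℂ)
    (N : ℕ) : toep a N *ᵥ xs a u N = fun j : Fin N => u j := by
  rw [xs, Matrix.mulVec_mulVec, Matrix.mul_nonsing_inv _ (toep_inv_facts ha hδ hl N).1.isUnit,
    Matrix.one_mulVec]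

/-- energy -/
lemma energy_le {a : ℝ → ℝ} (ha : Nice a) {δ : ℝ} (hδ : 0 < δ) (hl : ∀ᵐ t ∂mu0, δ ≤ a t) (u : ℕ → ℂ)
    {N M : ℕ} (h : N ≤ M) :
    δ * en (xs a u M - fun j : Fin M => xe a u N j) ^ 2 ≤
      (star (xs a u M) ⬝ᵥ fun j : Fin M => u j).re -
        (star (xs a u N) ⬝ᵥ fun j : Fin N => u j).re := by
  set x := xs a u M with hx
  set y : Fin M → ℂ := fun j => xe a u N j with hy
  have h0 := toep_lower ha hl M (x - y)
  rw [← en_sq] at h0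
  refine h0.trans (le_of_eq ?_)
  have e1 : toep a M *ᵥ x = fun j : Fin M => u j := toep_mul_xs ha hδ hl u M
  have e2 : star y ⬝ᵥ (fun j : Fin M => u j) = star (xs a u N) ⬝ᵥ fun j : Fin N => u j := by
    simp only [dotProduct, hy, Pi.star_apply]
    rw [sum_fin_ext h (fun j => star (xe a u N j) * u j)]
    · simp only [xe_fin]
    · intro j hj
      simp [xe, not_lt.mpr hj]
  have e3 : star y ⬝ᵥ (toep a M *ᵥ y) = star (xs a u N) ⬝ᵥ fun j : Fin N => u j := by
    rw [← toep_mul_xs ha hδ hl u N]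
    simp only [dotProduct, hy, Pi.star_apply, Matrix.mulVec, toep, Matrix.of_apply]
    rw [sum_fin_ext h (fun j => star (xe a u N j) *
      ∑ k : Fin M, fourierCoef a ((j : ℤ) - (k : ℕ)) * xe a u N k)]
    · simp only [xe_fin]
      refine Finset.sum_congr rfl fun j _ => ?_
      rw [sum_fin_ext h (fun k => fourierCoef a (((j : ℕ) : ℤ) - (k : ℕ)) * xe a u N k)]
      · simp only [xe_fin]
      · intro j hj
        simp [xe, not_lt.mpr hj]
    · intro j hj
      simp [xe, not_lt.mpr hj]
  have e4 : star x ⬝ᵥ (toep a M *ᵥ y) = star (star y ⬝ᵥ (toep a M *ᵥ x)) := by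
    rw [← Matrix.star_dotProduct, Matrix.star_mulVec, (toep_hermitian a M).eq,
      Matrix.dotProduct_mulVec]
  have e5 : star (x - y) ⬝ᵥ (toep a M *ᵥ (x - y)) = star x ⬝ᵥ (fun j : Fin M => u j)
      - star (star (xs a u N) ⬝ᵥ fun j : Fin N => u j) := by
    rw [Matrix.mulVec_sub, star_sub, sub_dotProduct, dotProduct_sub, dotProduct_sub, e4, e3, e1, e2]
    ring
  rw [e5]
  simp

lemma en_xs_le {a : ℝ → ℝ} (ha : Nice a) {δ : ℝ} (hδ : 0 < δ) (hl : ∀ᵐ t ∂mu0, δ ≤ a t) (u : ℕ → ℂ)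
    {B : ℝ} (hB : ∀ N : ℕ, en (fun j : Fin N => u j) ≤ B) (N : ℕ) :
    en (xs a u N) ≤ B / δ := by
  have h1 := en_mulVec_le (toep a N)⁻¹ (fun j : Fin N => u j)
  have h2 := (toep_inv_facts ha hδ hl N).2
  have := hB N
  have := en_nonneg (fun j : Fin N => u j)
  calc en (xs a u N) ≤ _ := h1
    _ ≤ 1 / δ * B := by gcongr
    _ = B / δ := by ring

lemma galerkin {a : ℝ → ℝ} (ha : Nice a) {δ : ℝ} (hδ : 0 < δ) (hl : ∀ᵐ t ∂mu0, δ ≤ a t) (u : ℕ → ℂ)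
    {B : ℝ} (hB : ∀ N : ℕ, en (fun j : Fin N => u j) ≤ B) (ε : ℝ) (hε : 0 < ε) :
    ∃ N0 : ℕ, ∀ N, N0 ≤ N → en (xs a u N - fun j : Fin N => xe a u N0 j) ≤ ε := by
  set e : ℕ → ℝ := fun N => (star (xs a u N) ⬝ᵥ fun j : Fin N => u j).re with he
  have hmono : Monotone e := fun N M h => by
    have := energy_le ha hδ hl u h
    have h2 : 0 ≤ δ * en (xs a u M - fun j : Fin M => xe a u N j) ^ 2 := by positivity
    linarith
  have hB0 : 0 ≤ B := (en_nonneg _).trans (hB 0)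
  have hbdd : BddAbove (Set.range e) := by
    refine ⟨B / δ * B, ?_⟩
    rintro _ ⟨N, rfl⟩
    refine (Complex.re_le_norm _).trans ((norm_dot_le _ _).trans ?_)
    rw [en_star]
    exact mul_le_mul (en_xs_le ha hδ hl u hB N) (hB N) (en_nonneg _) (by positivity)
  have hlim := tendsto_atTop_ciSup hmono hbdd
  have hlt : (⨆ i, e i) - δ * ε ^ 2 < ⨆ i, e i := by
    have : 0 < δ * ε ^ 2 := by positivity
    linarith
  obtain ⟨N0, hN0⟩ := (hlim.eventually (lt_mem_nhds hlt)).exists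
  refine ⟨N0, fun N hN => ?_⟩
  have h1 := energy_le ha hδ hl u hN
  have h2 : e N ≤ ⨆ i, e i := le_ciSup hbdd N
  have h3 : δ * en (xs a u N - fun j : Fin N => xe a u N0 j) ^ 2 ≤ δ * ε ^ 2 := by
    have : (star (xs a u N) ⬝ᵥ fun j : Fin N => u j).re = e N := rfl
    have : (star (xs a u N0) ⬝ᵥ fun j : Fin N0 => u j).re = e N0 := rfl
    linarith
  have h4 := le_of_mul_le_mul_left h3 hδ
  exact (pow_le_pow_iff_left₀ (en_nonneg _) hε.le two_ne_zero).mp h4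

lemma LL {a : ℝ → ℝ} (ha : Nice a) {δ : ℝ} (hδ : 0 < δ) (hl : ∀ᵐ t ∂mu0, δ ≤ a t) (u : ℕ → ℂ)
    {B : ℝ} (hB : ∀ N : ℕ, en (fun j : Fin N => u j) ≤ B) (w : ℕ → ℂ) {B' : ℝ}
    (hB' : ∀ N : ℕ, en (fun j : Fin N => w j) ≤ B') :
    ∃ L : ℂ, Tendsto (fun N => (fun j : Fin N => w j) ⬝ᵥ xs a u N) atTop (𝓝 L) := by
  apply cauchySeq_tendsto_of_complete
  rw [Metric.cauchySeq_iff']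
  intro ε hε
  have hB0 : 0 ≤ B' := (en_nonneg _).trans (hB' 0)
  obtain ⟨N0, h0⟩ := galerkin ha hδ hl u hB (ε / (B' + 1)) (by positivity)
  refine ⟨N0, fun N hN => ?_⟩
  have e1 : (fun j : Fin N0 => w j) ⬝ᵥ xs a u N0 =
      (fun j : Fin N => w j) ⬝ᵥ fun j : Fin N => xe a u N0 j := by
    simp only [dotProduct]
    rw [sum_fin_ext hN (fun j => w j * xe a u N0 j)]
    · simp only [xe_fin]
    · intro j hj
      simp [xe, not_lt.mpr hj]
  rw [dist_eq_norm, e1, ← dotProduct_sub]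
  refine (norm_dot_le _ _).trans_lt ?_
  calc _ ≤ B' * (ε / (B' + 1)) :=
        mul_le_mul (hB' N) (h0 N hN) (en_nonneg _) hB0
    _ < ε := by
      rw [mul_div_assoc', div_lt_iff₀ (by positivity)]
      nlinarith

lemma LR {a : ℝ → ℝ} (ha : Nice a) {δ : ℝ} (hδ : 0 < δ) (hl : ∀ᵐ t ∂mu0, δ ≤ a t) (u : ℕ → ℂ)
    {B : ℝ} (hB : ∀ N : ℕ, en (fun j : Fin N => u j) ≤ B) (w : ℕ → ℂ) {B' : ℝ}
    (hB' : ∀ N : ℕ, en (fun j : Fin N => w (Fin.rev j)) ≤ B') (hw : Tendsto w atTop (𝓝 0)) :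
    Tendsto (fun N => (fun j : Fin N => w (Fin.rev j)) ⬝ᵥ xs a u N) atTop (𝓝 0) := by
  rw [Metric.tendsto_atTop]
  intro ε hε
  have hB0 : 0 ≤ B' := (en_nonneg _).trans (hB' 0)
  obtain ⟨N0, h0⟩ := galerkin ha hδ hl u hB (ε / 2 / (B' + 1)) (by positivity)
  have hlim : Tendsto (fun N : ℕ => ∑ j : Fin N0, w (N - (j + 1)) * xe a u N0 j) atTop (𝓝 0) := by
    rw [← Finset.sum_const_zero (s := (Finset.univ : Finset (Fin N0)))]
    refine tendsto_finsetSum _ fun j _ => ?_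
    rw [← zero_mul (xe a u N0 j)]
    exact (hw.comp (tendsto_sub_atTop_nat ((j : ℕ) + 1))).mul_const _
  obtain ⟨N1, hN1⟩ := Metric.tendsto_atTop.mp hlim (ε / 2) (by positivity)
  refine ⟨max N0 N1, fun N hN => ?_⟩
  have hN0 : N0 ≤ N := (le_max_left _ _).trans hN
  have e1 : (fun j : Fin N => w (Fin.rev j)) ⬝ᵥ (fun j : Fin N => xe a u N0 j) =
      ∑ j : Fin N0, w (N - (j + 1)) * xe a u N0 j := by
    simp only [dotProduct, Fin.val_rev]
    rw [sum_fin_ext hN0 (fun j => w (N - (j + 1)) * xe a u N0 j)]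
    intro j hj
    simp [xe, not_lt.mpr hj]
  have h1 := hN1 N ((le_max_right _ _).trans hN)
  rw [← e1, dist_zero_right] at h1
  rw [dist_zero_right]
  have e2 : (fun j : Fin N => w (Fin.rev j)) ⬝ᵥ xs a u N =
      (fun j : Fin N => w (Fin.rev j)) ⬝ᵥ (fun j : Fin N => xe a u N0 j) +
      (fun j : Fin N => w (Fin.rev j)) ⬝ᵥ (xs a u N - fun j : Fin N => xe a u N0 j) := by
    rw [dotProduct_sub]; ring
  rw [e2]
  refine (norm_add_le _ _).trans_lt ?_
  have h2 : ‖(fun j : Fin N => w (Fin.rev j)) ⬝ᵥ (xs a u N - fun j : Fin N => xe a u N0 j)‖ ≤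
      ε / 2 := by
    refine (norm_dot_le _ _).trans ?_
    calc _ ≤ B' * (ε / 2 / (B' + 1)) := mul_le_mul (hB' N) (h0 N hN0) (en_nonneg _) hB0
      _ ≤ ε / 2 := by
        rw [mul_div_assoc', div_le_iff₀ (by positivity)]
        nlinarith
  linarith

end

lemma toep_inv_rev (a : ℝ → ℝ) (N : ℕ) :
    (toep a N)⁻¹.submatrix Fin.revPerm Fin.revPerm = ((toep a N)⁻¹)ᵀ := by
  rw [← Matrix.inv_submatrix_equiv, Matrix.transpose_nonsing_inv]
  congr 1
  ext j k
  simp only [Matrix.submatrix_apply, Matrix.transpose_apply, toep, Matrix.of_apply, Fin.revPerm_apply,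
    Fin.val_rev]
  congr 1
  omega

lemma dot_inv_rev (a : ℝ → ℝ) (N : ℕ) (u w : Fin N → ℂ) :
    (fun j => w (Fin.rev j)) ⬝ᵥ ((toep a N)⁻¹ *ᵥ fun j => u (Fin.rev j)) =
      u ⬝ᵥ ((toep a N)⁻¹ *ᵥ w) := by
  have h := toep_inv_rev a N
  have e : u ⬝ᵥ ((toep a N)⁻¹ *ᵥ w) = w ⬝ᵥ (((toep a N)⁻¹)ᵀ *ᵥ u) := by
    rw [Matrix.dotProduct_mulVec, ← Matrix.mulVec_transpose, dotProduct_comm]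
  rw [e, ← h]
  simp only [dotProduct, Matrix.mulVec, Matrix.submatrix_apply]
  rw [← Equiv.sum_comp Fin.revPerm]
  refine Finset.sum_congr rfl fun j _ => ?_
  rw [← Equiv.sum_comp Fin.revPerm]
  simp

lemma dot_inv_conj (a : ℝ → ℝ) (N : ℕ) (u w : Fin N → ℂ) :
    w ⬝ᵥ ((toep a N)⁻¹ *ᵥ u) = star (star u ⬝ᵥ ((toep a N)⁻¹ *ᵥ star w)) := by
  have h : ((toep a N)⁻¹)ᴴ = (toep a N)⁻¹ := by
    rw [Matrix.conjTranspose_nonsing_inv, (toep_hermitian a N).eq]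
  rw [← Matrix.star_dotProduct, Matrix.star_mulVec, star_star, h, Matrix.dotProduct_mulVec]

theorem entries_tendsto {a : ℝ → ℝ} (ha : Nice a) {δ : ℝ} (hδ : 0 < δ) (hl : ∀ᵐ t ∂mu0, δ ≤ a t)
    (u w : ℕ → ℂ) (B : ℝ)
    (hu : ∀ (σ : Bool) (N : ℕ), en (fun j : Fin N => u (pos σ j)) ≤ B)
    (hw : ∀ (σ : Bool) (N : ℕ), en (fun j : Fin N => w (pos σ j)) ≤ B)
    (hu0 : Tendsto u atTop (𝓝 0)) (hw0 : Tendsto w atTop (𝓝 0)) (σ σ' : Bool) :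
    ∃ L : ℂ, Tendsto (fun N => (fun j : Fin N => w (pos σ j)) ⬝ᵥ
      ((toep a N)⁻¹ *ᵥ fun j => u (pos σ' j))) atTop (𝓝 L) := by
  have hu1 : ∀ N : ℕ, en (fun j : Fin N => u j) ≤ B := hu false
  have hw1 : ∀ N : ℕ, en (fun j : Fin N => w j) ≤ B := hw false
  have hu2 : ∀ N : ℕ, en (fun j : Fin N => u (Fin.rev j)) ≤ B := hu true
  have hw2 : ∀ N : ℕ, en (fun j : Fin N => w (Fin.rev j)) ≤ B := hw true
  cases σ <;> cases σ'
  · exact LL ha hδ hl u hu1 w hw1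
  · refine ⟨star 0, ?_⟩
    have h := LR ha hδ hl (fun j => star (w j)) (B := B) ?_ (fun j => star (u j)) (B' := B) ?_ ?_
    · refine Tendsto.congr (fun N => ?_) h.star
      exact (dot_inv_conj a N (fun j => u (Fin.rev j)) (fun j => w j)).symm
    · intro N
      have := en_star (fun j : Fin N => w j)
      exact (le_of_eq this).trans (hw1 N)
    · intro N
      have := en_star (fun j : Fin N => u (Fin.rev j))
      exact (le_of_eq this).trans (hu2 N)
    · simpa using hu0.star
  · exact ⟨0, LR ha hδ hl u hu1 w hw2 hw0⟩
  · obtain ⟨L, h⟩ := LL ha hδ hl w hw1 u hu1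
    refine ⟨L, h.congr fun N => ?_⟩
    exact (dot_inv_rev a N (fun j => u j) (fun j => w j)).symm

end EE
end

noncomputable section
namespace EE
open scoped ComplexConjugate Matrix ComplexOrder Matrix.Norms.L2Operator
open Filter Topology

/-- Parameters of a separation term. -/
structure Par where
  σ : Bool
  z : ℂ
  z' : ℂ
  m : ℝ
  m' : ℝ
  hz : ‖z‖ = 1
  hz' : ‖z'‖ = 1

variable {T : Type} [Fintype T] [DecidableEq T]

/-- the remainder -/
def Zs (ω c : T → ℂ) (P : T → Par) (N : ℕ) : Matrix (Fin N) (Fin N) ℂ :=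
  ∑ t, c t • Zt N (P t).σ (ω t) (P t).z (P t).z' (P t).m (P t).m'

/-- left vectors -/
def UU (P : T → Par) (N L : ℕ) : T × Fin L → Fin N → ℂ :=
  fun s => Uv N (P s.1).σ (P s.1).z (P s.1).m 0 s.2

/-- right vectors -/
def VV (P : T → Par) (N L : ℕ) : T × Fin L → Fin N → ℂ :=
  fun s => Uv N (P s.1).σ (P s.1).z' (P s.1).m' 0 s.2

theorem decompT {ω : T → ℂ} (hω : ∀ t, ‖ω t‖ = 1) (h1 : ∀ t, ω t ≠ 1) (p : ℕ) (hp : 1 ≤ p) :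
    ∃ C : ℝ, 0 ≤ C ∧ ∀ M : ℕ, ∃ κ : T → ℕ → ℂ, (∀ t l, ‖κ t l‖ ≤ C) ∧
      ∀ (c : T → ℂ) (P : T → Par) (N : ℕ),
      NucLE (Zs ω c P N - finR (fun s : T × Fin (M + p) => c s.1 * κ s.1 s.2) (UU P N (M + p))
        (VV P N (M + p))) (C * (∑ t, ‖c t‖) / (M + 1 : ℝ) ^ (p - 1)) := by
  choose C hC hd using fun t => decomp (hω t) (h1 t) p hp
  have hle : ∀ t, C t ≤ ∑ t, C t := fun t =>
    Finset.single_le_sum (fun t _ => hC t) (Finset.mem_univ t)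
  refine ⟨∑ t, C t, Finset.sum_nonneg fun t _ => hC t, fun M => ?_⟩
  choose κ hκ hd using fun t => hd t M
  refine ⟨κ, fun t l => (hκ t l).trans (hle t), fun c P N => ?_⟩
  have e : Zs ω c P N - finR (fun s : T × Fin (M + p) => c s.1 * κ s.1 s.2) (UU P N (M + p))
        (VV P N (M + p)) = ∑ t, c t • (Zt N (P t).σ (ω t) (P t).z (P t).z' (P t).m (P t).m' -
          ∑ l ∈ Finset.range (M + p), κ t l • Matrix.vecMulVec
            (Uv N (P t).σ (P t).z (P t).m 0 l) (Uv N (P t).σ (P t).z' (P t).m' 0 l)) := by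
    simp only [smul_sub, Finset.sum_sub_distrib, Zs, finR, Fintype.sum_prod_type, UU, VV]
    congr 1
    refine Finset.sum_congr rfl fun t _ => ?_
    rw [Finset.smul_sum, ← Fin.sum_univ_eq_sum_range (fun l => c t • κ t l • Matrix.vecMulVec
            (Uv N (P t).σ (P t).z (P t).m 0 l) (Uv N (P t).σ (P t).z' (P t).m' 0 l))]
    refine Finset.sum_congr rfl fun l _ => ?_
    rw [smul_smul]
  rw [e]
  refine (NucLE.sum Finset.univ _ (fun t => ‖c t‖ * (C t / (M + 1 : ℝ) ^ (p - 1)))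
    fun t _ => (hd t N _ _ _ (P t).hz (P t).hz' _ _).smul (c t)).mono ?_
  rw [Finset.mul_sum, Finset.sum_div]
  refine Finset.sum_le_sum fun t _ => ?_
  rw [mul_div_assoc', mul_comm]
  gcongr
  exact hle t

theorem Zs_nuc {ω : T → ℂ} (hω : ∀ t, ‖ω t‖ = 1) (h1 : ∀ t, ω t ≠ 1) :
    ∃ K : ℝ, 0 ≤ K ∧ ∀ (c : T → ℂ) (P : T → Par) (N : ℕ),
      NucLE (Zs ω c P N) (K * ∑ t, ‖c t‖) := by
  obtain ⟨C, hC, h⟩ := decompT hω h1 1 le_rfl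
  obtain ⟨κ, hκ, h⟩ := h 0
  refine ⟨4 * C + C, by positivity, fun c P N => ?_⟩
  have h2 : NucLE (finR (fun s : T × Fin (0 + 1) => c s.1 * κ s.1 s.2) (UU P N (0 + 1))
        (VV P N (0 + 1))) (4 * C * ∑ t, ‖c t‖) := by
    unfold finR
    refine (NucLE.sum Finset.univ _ _ fun s _ => (NucLE.vecMulVec _ _).smul _).mono ?_
    rw [Fintype.sum_prod_type, Finset.mul_sum]
    refine Finset.sum_le_sum fun t _ => ?_
    rw [Fin.sum_univ_one, norm_mul]
    have g1 := en_Uv_le N (P t).σ (P t).z (P t).hz (P t).m 0 0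
    have g2 := en_Uv_le N (P t).σ (P t).z' (P t).hz' (P t).m' 0 0
    calc _ ≤ ‖c t‖ * C * (2 * 2) := by
          apply mul_le_mul _ (mul_le_mul g1 g2 (en_nonneg _) (by norm_num))
            (mul_nonneg (en_nonneg _) (en_nonneg _)) (by positivity)
          exact mul_le_mul_of_nonneg_left (hκ t _) (norm_nonneg _)
      _ = _ := by ring
  have h3 := (h c P N).add h2
  rw [sub_add_cancel] at h3
  refine h3.mono (le_of_eq ?_)
  simp
  ring

/-- separation log ratio -/
def Lr (a b : ℝ → ℝ) (N : ℕ) : ℝ :=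
  Real.log ‖(toep a N).det‖ + Real.log ‖(toep b N).det‖ -
    Real.log ‖(toep (fun t => a t * b t) N).det‖

/-- hypotheses for separation -/
structure Sep (ω c : T → ℂ) (P : T → Par) (a b : ℝ → ℝ) (δ : ℝ) : Prop where
  ha : Nice a
  hb : Nice b
  hδ : 0 < δ
  la : ∀ᵐ t ∂mu0, δ ≤ a t
  lb : ∀ᵐ t ∂mu0, δ ≤ b t
  lab : ∀ᵐ t ∂mu0, δ ≤ a t * b t
  hω : ∀ t, ‖ω t‖ = 1
  h1 : ∀ t, ω t ≠ 1
  hZ : ∀ N, toep (fun t => a t * b t) N = toep a N * toep b N + Zs ω c P N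

namespace Sep
variable {ω c : T → ℂ} {P : T → Par} {a b : ℝ → ℝ} {δ : ℝ}

lemma Cinv (h : Sep ω c P a b δ) (N : ℕ) : (toep (fun t => a t * b t) N).det ≠ 0 ∧
    ‖(toep (fun t => a t * b t) N)⁻¹‖ ≤ 1 / δ :=
  toep_inv_facts (h.ha.mul h.hb) h.hδ h.lab N

lemma Ginv (h : Sep ω c P a b δ) (N : ℕ) : (toep a N * toep b N).det ≠ 0 ∧
    ‖(toep a N * toep b N)⁻¹‖ ≤ 1 / δ ^ 2 := by
  have h1 := toep_inv_facts h.ha h.hδ h.la N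
  have h2 := toep_inv_facts h.hb h.hδ h.lb N
  constructor
  · rw [Matrix.det_mul]
    exact mul_ne_zero h1.1 h2.1
  · rw [Matrix.mul_inv_rev]
    refine (norm_mul_le _ _).trans ?_
    calc _ ≤ (1 / δ) * (1 / δ) := mul_le_mul h2.2 h1.2 (norm_nonneg _) (by have := h.hδ; positivity)
      _ = _ := by ring

lemma e1 (h : Sep ω c P a b δ) (N : ℕ) :
    1 + Zs ω c P N * (-(toep (fun t => a t * b t) N)⁻¹) =
      toep a N * toep b N * (toep (fun t => a t * b t) N)⁻¹ := by
  have hu := (h.Cinv N).1.isUnit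
  have : toep a N * toep b N = toep (fun t => a t * b t) N - Zs ω c P N := by
    rw [h.hZ N]; abel
  rw [this, Matrix.sub_mul, Matrix.mul_nonsing_inv _ hu, Matrix.mul_neg]
  abel

lemma e2 (h : Sep ω c P a b δ) (N : ℕ) :
    1 + Zs ω c P N * (toep a N * toep b N)⁻¹ =
      toep (fun t => a t * b t) N * (toep a N * toep b N)⁻¹ := by
  have hu := (h.Ginv N).1.isUnit
  rw [h.hZ N, Matrix.add_mul, Matrix.mul_nonsing_inv _ hu]

lemma log1 (h : Sep ω c P a b δ) (N : ℕ) :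
    Real.log ‖(1 + Zs ω c P N * (-(toep (fun t => a t * b t) N)⁻¹)).det‖ = Lr a b N := by
  have h0 := (h.Cinv N).1
  have h2 := (h.Ginv N).1
  rw [Matrix.det_mul] at h2
  rw [h.e1 N, Matrix.det_mul, Matrix.det_mul, Matrix.det_nonsing_inv, Ring.inverse_eq_inv', norm_mul,
    norm_mul, norm_inv, Real.log_mul, Real.log_mul, Real.log_inv, Lr]
  · ring
  · exact norm_ne_zero_iff.mpr (left_ne_zero_of_mul h2)
  · exact norm_ne_zero_iff.mpr (right_ne_zero_of_mul h2)
  · exact mul_ne_zero (norm_ne_zero_iff.mpr (left_ne_zero_of_mul h2))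
      (norm_ne_zero_iff.mpr (right_ne_zero_of_mul h2))
  · exact inv_ne_zero (norm_ne_zero_iff.mpr h0)

lemma log2 (h : Sep ω c P a b δ) (N : ℕ) :
    Real.log ‖(1 + Zs ω c P N * (toep a N * toep b N)⁻¹).det‖ = -Lr a b N := by
  have h0 := (h.Cinv N).1
  have h2 := (h.Ginv N).1
  rw [h.e2 N, Matrix.det_mul, Matrix.det_nonsing_inv, Ring.inverse_eq_inv', norm_mul,
    norm_inv, Real.log_mul (norm_ne_zero_iff.mpr h0) (inv_ne_zero (norm_ne_zero_iff.mpr h2)),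
    Real.log_inv, Lr, Matrix.det_mul, norm_mul, Real.log_mul]
  · ring
  · rw [Matrix.det_mul] at h2
    exact norm_ne_zero_iff.mpr (left_ne_zero_of_mul h2)
  · rw [Matrix.det_mul] at h2
    exact norm_ne_zero_iff.mpr (right_ne_zero_of_mul h2)

lemma ne1 (h : Sep ω c P a b δ) (N : ℕ) :
    (1 + Zs ω c P N * (-(toep (fun t => a t * b t) N)⁻¹)).det ≠ 0 := by
  rw [h.e1 N, Matrix.det_mul, Matrix.det_nonsing_inv, Ring.inverse_eq_inv']
  exact mul_ne_zero (h.Ginv N).1 (inv_ne_zero (h.Cinv N).1)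

lemma ne2 (h : Sep ω c P a b δ) (N : ℕ) :
    (1 + Zs ω c P N * (toep a N * toep b N)⁻¹).det ≠ 0 := by
  rw [h.e2 N, Matrix.det_mul, Matrix.det_nonsing_inv, Ring.inverse_eq_inv']
  exact mul_ne_zero (h.Cinv N).1 (inv_ne_zero (h.Ginv N).1)

/-- a determinant bound gives a bound on the log ratio -/
lemma abs_Lr_le (h : Sep ω c P a b δ) (N : ℕ) (D s : ℝ) (hD1 : 1 / δ ≤ D) (hD2 : 1 / δ ^ 2 ≤ D)
    (hs : ∀ G : Matrix (Fin N) (Fin N) ℂ, ‖G‖ ≤ D →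
      ‖(1 + Zs ω c P N * G).det‖ ≤ Real.exp s) : |Lr a b N| ≤ s := by
  rw [abs_le]
  constructor
  · have h1 := hs _ ((h.Ginv N).2.trans hD2)
    have h2 := (Real.log_le_iff_le_exp (norm_pos_iff.mpr (h.ne2 N))).mpr h1
    rw [h.log2 N] at h2
    linarith
  · have h1 := hs _ (by rw [norm_neg]; exact (h.Cinv N).2.trans hD1)
    have h2 := (Real.log_le_iff_le_exp (norm_pos_iff.mpr (h.ne1 N))).mpr h1
    rwa [h.log1 N] at h2

lemma abs_Lr_nuc (h : Sep ω c P a b δ) (N : ℕ) (D K : ℝ) (hD1 : 1 / δ ≤ D) (hD2 : 1 / δ ^ 2 ≤ D)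
    (hK : NucLE (Zs ω c P N) K) : |Lr a b N| ≤ D * K + (D * K) ^ 2 / 2 := by
  refine h.abs_Lr_le N D _ hD1 hD2 fun G hG => ?_
  exact ((hK.mul_right G).mono (mul_le_mul_of_nonneg_right hG hK.nonneg)).det_le

end Sep

lemma tendsto_of_approx (y : ℕ → ℝ)
    (h : ∀ ε > 0, ∃ (w : ℕ → ℝ) (L : ℝ), Tendsto w atTop (𝓝 L) ∧ ∀ N, |y N - w N| ≤ ε) :
    ∃ L, Tendsto y atTop (𝓝 L) := by
  apply cauchySeq_tendsto_of_complete
  rw [Metric.cauchySeq_iff]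
  intro ε hε
  obtain ⟨w, L, hw, hyw⟩ := h (ε / 4) (by positivity)
  obtain ⟨N0, hN0⟩ := Metric.cauchySeq_iff.mp hw.cauchySeq (ε / 2) (by positivity)
  refine ⟨N0, fun m hm n hn => ?_⟩
  have h1 := hN0 m hm n hn
  have h2 := hyw m
  have h3 := hyw n
  rw [Real.dist_eq] at h1 ⊢
  rw [abs_lt] at *
  rw [abs_le] at *
  constructor <;> linarith

end EE
end

noncomputable section
namespace EE
open scoped ComplexConjugate Matrix ComplexOrder Matrix.Norms.L2Operator
open Filter Topology
set_option linter.unusedSectionVars false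
variable {T : Type} [Fintype T] [DecidableEq T]

lemma Wv_tendsto (z : ℂ) (hz : ‖z‖ = 1) (m : ℝ) (l : ℕ) :
    Tendsto (fun j => Wv z m 0 l j) atTop (𝓝 0) := by
  refine squeeze_zero_norm (fun j => Wv_norm_le z hz m 0 l j) ?_
  refine squeeze_zero (fun j => by positivity) (fun j => ?_)
    (tendsto_one_div_add_atTop_nhds_zero_nat (𝕜 := ℝ))
  rw [pow_zero, one_mul]
  apply one_div_le_one_div_of_le (by positivity)
  linarith [(Nat.cast_nonneg l : (0 : ℝ) ≤ l)]

theorem Sep.tendsto {ω c : T → ℂ} {P : T → Par} {a b : ℝ → ℝ} {δ : ℝ} (h : Sep ω c P a b δ) :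
    ∃ L, Tendsto (Lr a b) atTop (𝓝 L) := by
  have hδ := h.hδ
  obtain ⟨K, hK, hnuc⟩ := Zs_nuc h.hω h.h1
  set c1 := ∑ t, ‖c t‖ with hc1
  have hc0 : 0 ≤ c1 := Finset.sum_nonneg fun t _ => norm_nonneg _
  set D := max (1 / δ) (1 / δ ^ 2) with hD
  have hDpos : 0 < D := lt_max_of_lt_left (by positivity)
  have hbd : ∀ N, |Lr a b N| ≤ D * (K * c1) + (D * (K * c1)) ^ 2 / 2 := fun N =>
    h.abs_Lr_nuc N D _ (le_max_left _ _) (le_max_right _ _) (hnuc c P N)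
  set A := D * (K * c1) + (D * (K * c1)) ^ 2 / 2 with hA
  obtain ⟨C, hC, hdec⟩ := decompT h.hω h.h1 2 (by norm_num)
  apply tendsto_of_approx
  intro ε hε
  -- inverse of B bounded by D1
  set D1 := 1 + D * (K * c1) with hD1
  have hD1pos : 0 < D1 := by positivity
  set η := min (1 / 2) (ε / 4) with hη
  have hηpos : 0 < η := by positivity
  obtain ⟨M, hM⟩ := exists_nat_gt (D * (D1 * (C * c1)) / η)
  obtain ⟨κ, hκ, hdec⟩ := hdec M
  have hdec := fun N => hdec c P N
  set F : (N : ℕ) → Matrix (Fin N) (Fin N) ℂ := fun N =>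
    finR (fun s : T × Fin (M + 2) => c s.1 * κ s.1 s.2) (UU P N (M + 2)) (VV P N (M + 2)) with hF
  set Cn : (N : ℕ) → Matrix (Fin N) (Fin N) ℂ := fun N => -(toep (fun t => a t * b t) N)⁻¹ with hCn
  have hCnD : ∀ N, ‖Cn N‖ ≤ D := fun N => by
    rw [hCn, norm_neg]
    exact (h.Cinv N).2.trans (le_max_left _ _)
  -- perturbation
  have hpert : ∀ N, (1 + F N * Cn N).det ≠ 0 ∧
      |Lr a b N - Real.log ‖(1 + F N * Cn N).det‖| ≤ 4 * η := by
    intro N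
    set B := 1 + Zs ω c P N * Cn N with hB
    set Bi := 1 + Zs ω c P N * (toep a N * toep b N)⁻¹ with hBi
    have hBBi : B * Bi = 1 := by
      rw [hB, hBi, hCn, h.e1 N, h.e2 N]
      rw [Matrix.mul_assoc, ← Matrix.mul_assoc (toep (fun t => a t * b t) N)⁻¹,
        Matrix.nonsing_inv_mul _ (h.Cinv N).1.isUnit, Matrix.one_mul,
        Matrix.mul_nonsing_inv _ (h.Ginv N).1.isUnit]
    have hBin : ‖Bi‖ ≤ D1 := by
      refine (norm_add_le _ _).trans (add_le_add norm_one_le ?_)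
      have := ((hnuc c P N).mul_right (toep a N * toep b N)⁻¹).norm_le
      refine this.trans ?_
      exact mul_le_mul_of_nonneg_right ((h.Ginv N).2.trans (le_max_right _ _)) (hnuc c P N).nonneg
    set E := Zs ω c P N - F N with hE
    have hEn : NucLE (Bi * (-E * Cn N)) η := by
      refine (((hdec N).neg.mul_right (Cn N)).mul_left Bi).mono ?_
      have hx : C * c1 / (M + 1 : ℝ) ^ (2 - 1) = C * c1 / (M + 1 : ℝ) := by norm_num
      rw [← hc1, hx]
      calc _ ≤ D1 * (D * (C * c1 / (M + 1 : ℝ))) := by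
            apply mul_le_mul hBin _ (by positivity) (by positivity)
            exact mul_le_mul_of_nonneg_right (hCnD N) (by positivity)
        _ = D * (D1 * (C * c1)) / (M + 1) := by ring
        _ ≤ η := by
          rw [div_le_iff₀ (by positivity)]
          rw [div_lt_iff₀ hηpos] at hM
          nlinarith
    have e : 1 + F N * Cn N = B * (1 + Bi * (-E * Cn N)) := by
      rw [Matrix.mul_add, Matrix.mul_one, ← Matrix.mul_assoc, hBBi, Matrix.one_mul, hB, hE]
      rw [neg_sub, Matrix.sub_mul]
      abel
    have hlog := hEn.log_det (min_le_left _ _)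
    have hBne : B.det ≠ 0 := h.ne1 N
    constructor
    · rw [e, Matrix.det_mul]
      exact mul_ne_zero hBne hlog.1
    · rw [e, Matrix.det_mul, norm_mul, Real.log_mul (norm_ne_zero_iff.mpr hBne)
        (norm_ne_zero_iff.mpr hlog.1), h.log1 N]
      have : Lr a b N - (Lr a b N + Real.log ‖(1 + Bi * (-E * Cn N)).det‖) =
        -Real.log ‖(1 + Bi * (-E * Cn N)).det‖ := by ring
      rw [this, abs_neg]
      exact hlog.2
  -- convergence of finite determinants
  have hconv : ∃ d : ℂ, Tendsto (fun N => (1 + F N * Cn N).det) atTop (𝓝 d) := by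
    have hent : ∀ s t : T × Fin (M + 2), ∃ L : ℂ, Tendsto (fun N =>
        (c s.1 * κ s.1 s.2) * (VV P N (M + 2) s ⬝ᵥ (Cn N *ᵥ UU P N (M + 2) t))) atTop (𝓝 L) := by
      intro s t
      obtain ⟨L, hL⟩ := entries_tendsto (h.ha.mul h.hb) h.hδ h.lab
        (fun j => Wv (P t.1).z (P t.1).m 0 t.2 j) (fun j => Wv (P s.1).z' (P s.1).m' 0 s.2 j) 2
        (fun σ N => en_Uv_le N σ _ (P t.1).hz _ _ _) (fun σ N => en_Uv_le N σ _ (P s.1).hz' _ _ _)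
        (Wv_tendsto _ (P t.1).hz _ _) (Wv_tendsto _ (P s.1).hz' _ _) (P s.1).σ (P t.1).σ
      refine ⟨(c s.1 * κ s.1 s.2) * (-L), ?_⟩
      refine Tendsto.const_mul _ (hL.neg.congr fun N => ?_)
      rw [hCn, Matrix.neg_mulVec, dotProduct_neg]
      rfl
    choose L hL using hent
    refine ⟨(1 + Matrix.of L).det, ?_⟩
    have : (fun N => (1 + F N * Cn N).det) = fun N => (1 + Matrix.of fun s t =>
        (c s.1 * κ s.1 s.2) * (VV P N (M + 2) s ⬝ᵥ (Cn N *ᵥ UU P N (M + 2) t))).det := by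
      funext N
      rw [hF, det_finR]
    rw [this]
    have hcont : Continuous (fun A : Matrix (T × Fin (M + 2)) (T × Fin (M + 2)) ℂ => A.det) :=
      continuous_id.matrix_det
    refine (hcont.tendsto _).comp ?_
    refine tendsto_const_nhds.add ?_
    exact tendsto_pi_nhds.mpr fun s => tendsto_pi_nhds.mpr fun t => hL s t
  obtain ⟨d, hd⟩ := hconv
  have hdn := hd.norm
  have hlow : ∀ N, Real.exp (-(A + 4 * η)) ≤ ‖(1 + F N * Cn N).det‖ := by
    intro N
    obtain ⟨g1, g2⟩ := hpert N
    rw [← Real.le_log_iff_exp_le (norm_pos_iff.mpr g1)]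
    have g3 := hbd N
    rw [abs_le] at g2 g3
    linarith
  have hd0 : ‖d‖ ≠ 0 := by
    have := ge_of_tendsto' hdn hlow
    exact (lt_of_lt_of_le (Real.exp_pos _) this).ne'
  refine ⟨fun N => Real.log ‖(1 + F N * Cn N).det‖, Real.log ‖d‖, hdn.log hd0, fun N => ?_⟩
  refine (hpert N).2.trans ?_
  have : η ≤ ε / 4 := min_le_right _ _
  linarith

set_option maxHeartbeats 2000000 in
theorem Sep.dom {ω : T → ℂ} (hω : ∀ t, ‖ω t‖ = 1) (h1 : ∀ t, ω t ≠ 1) (K : ℝ) (hK : 0 ≤ K) :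
    ∃ K' : ℝ, 0 ≤ K' ∧ ∀ (x : ℝ) (c : T → ℂ) (P : T → Par) (a b : ℝ → ℝ) (δ : ℝ),
      Sep ω c P a b δ → ∑ t, ‖c t‖ ≤ K * x ^ 2 * Real.exp (K * |x|) →
      1 / δ ≤ Real.exp (K * |x|) → ∀ N, |Lr a b N| ≤ K' * (x ^ 2 * Real.exp |x|) := by
  obtain ⟨K0, hK0, hnuc⟩ := Zs_nuc hω h1
  obtain ⟨Q, hQ⟩ := exists_nat_gt (3 * K + 2)
  obtain ⟨C, hC, hdec⟩ := decompT hω h1 (2 * Q + 1) (by omega)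
  obtain ⟨M0, hM0⟩ := exists_nat_gt (2 * C * K + 1)
  set K3 : ℝ := Fintype.card T * (2 * M0 + (2 * Q + 1)) with hK3
  have hK3n : 0 ≤ K3 := by positivity
  set K1 : ℝ := Real.exp (2 * K) * (K0 * (K * Real.exp K)) with hK1
  have hK1n : 0 ≤ K1 := by positivity
  refine ⟨(K1 + K1 ^ 2 / 2) + (1 + K3 ^ 2 + K3 * (8 * C * K + 2 * Q)), by positivity, ?_⟩
  intro x c P a b δ h hc hδ N
  have hδ0 := h.hδ
  set c1 := ∑ t, ‖c t‖ with hc1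
  have hc0 : 0 ≤ c1 := Finset.sum_nonneg fun t _ => norm_nonneg _
  set D := Real.exp (2 * K * |x|) with hD
  have hx0 := abs_nonneg x
  have hDa : 1 / δ ≤ D := hδ.trans (Real.exp_le_exp.mpr (by nlinarith))
  have hDb : 1 / δ ^ 2 ≤ D := by
    calc 1 / δ ^ 2 = (1 / δ) ^ 2 := by ring
      _ ≤ (Real.exp (K * |x|)) ^ 2 := pow_le_pow_left₀ (by positivity) hδ 2
      _ = D := by rw [hD, ← Real.exp_nat_mul]; congr 1; push_cast; ring
  have hone : 1 ≤ Real.exp |x| := Real.one_le_exp hx0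
  rcases le_total |x| 1 with hx | hx
  · have hb := h.abs_Lr_nuc N D _ hDa hDb (hnuc c P N)
    have hle : D * (K0 * c1) ≤ K1 * x ^ 2 := by
      have g1 : D ≤ Real.exp (2 * K) := Real.exp_le_exp.mpr (by nlinarith)
      have g2 : Real.exp (K * |x|) ≤ Real.exp K := Real.exp_le_exp.mpr (by nlinarith)
      calc _ ≤ Real.exp (2 * K) * (K0 * (K * x ^ 2 * Real.exp K)) := by
            gcongr
            exact hc.trans (by gcongr)
        _ = _ := by rw [hK1]; ring
    have hnn : 0 ≤ D * (K0 * c1) := by positivity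
    have hx2 : x ^ 2 ≤ 1 := by
      rw [← sq_abs]; nlinarith
    have hx2n : 0 ≤ x ^ 2 := sq_nonneg x
    calc |Lr a b N| ≤ _ := hb
      _ ≤ K1 * x ^ 2 + (K1 * x ^ 2) ^ 2 / 2 := by gcongr
      _ ≤ (K1 + K1 ^ 2 / 2) * x ^ 2 := by
        have : (K1 * x ^ 2) ^ 2 ≤ K1 ^ 2 * x ^ 2 := by
          rw [mul_pow]
          have : (x ^ 2) ^ 2 ≤ x ^ 2 := by nlinarith
          gcongr
        linarith
      _ ≤ (K1 + K1 ^ 2 / 2) * (x ^ 2 * Real.exp |x|) := by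
        gcongr
        exact le_mul_of_one_le_right hx2n hone
      _ ≤ _ := mul_le_mul_of_nonneg_right (le_add_of_nonneg_right (by positivity)) (by positivity)
  · set y := Real.exp (|x| / 2) with hy
    have hy1 : 1 ≤ y := Real.one_le_exp (by positivity)
    have hy2 : y ^ 2 = Real.exp |x| := by
      rw [hy, ← Real.exp_nat_mul]; congr 1; push_cast; ring
    have hxy : |x| ≤ 2 * y := by
      have := Real.add_one_le_exp (|x| / 2)
      linarith
    set M := M0 * ⌈y⌉₊ with hM
    have hMl : (M0 : ℝ) * y ≤ M := by
      rw [hM]; push_cast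
      gcongr
      exact Nat.le_ceil y
    have hMu : (M : ℝ) ≤ 2 * M0 * y := by
      rw [hM]; push_cast
      have := (Nat.ceil_lt_add_one (zero_le_one.trans hy1)).le
      have h0 : (0 : ℝ) ≤ M0 := by positivity
      nlinarith
    obtain ⟨κ, hκ, hdec⟩ := hdec M
    have hdec := hdec c P N
    have hcD : c1 * D ≤ K * Real.exp (Q * |x|) := by
      have hx2 : x ^ 2 ≤ Real.exp (2 * |x|) := by
        have h1 := Real.add_one_le_exp |x|
        have : |x| ^ 2 ≤ (Real.exp |x|) ^ 2 := pow_le_pow_left₀ hx0 (by linarith) 2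
        rw [sq_abs] at this
        refine this.trans (le_of_eq ?_)
        rw [← Real.exp_nat_mul]; congr 1
      calc c1 * D ≤ (K * Real.exp (2 * |x|) * Real.exp (K * |x|)) * D := by
            gcongr
            exact hc.trans (by gcongr)
        _ = K * Real.exp ((3 * K + 2) * |x|) := by
          rw [hD, mul_assoc, mul_assoc, ← Real.exp_add, ← Real.exp_add]
          congr 2; ring
        _ ≤ _ := by gcongr
    have hQpos : 1 ≤ Q := by
      have : (0 : ℝ) < Q := by linarith
      exact_mod_cast this
    have hεD : D * (C * c1 / (M + 1 : ℝ) ^ (2 * Q + 1 - 1)) ≤ 1 / 2 := by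
      have hpow : (M0 : ℝ) * Real.exp (Q * |x|) ≤ (M + 1 : ℝ) ^ (2 * Q + 1 - 1) := by
        have h1 : (M0 : ℝ) * y ≤ M + 1 := by linarith
        have hM01 : (1 : ℝ) ≤ M0 := by
          have : 0 ≤ 2 * C * K := by positivity
          linarith
        have h2 : (M0 : ℝ) ≤ M0 ^ (2 * Q) := le_self_pow₀ hM01 (by omega)
        have h3 : y ^ (2 * Q) = Real.exp (Q * |x|) := by
          rw [pow_mul, hy2, ← Real.exp_nat_mul]
        rw [Nat.add_sub_cancel]
        calc _ ≤ (M0 : ℝ) ^ (2 * Q) * y ^ (2 * Q) := by rw [h3]; gcongr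
          _ = (M0 * y) ^ (2 * Q) := by rw [mul_pow]
          _ ≤ _ := by gcongr
      rw [mul_div_assoc', div_le_iff₀ (by positivity)]
      have h4 : D * (C * c1) ≤ C * (K * Real.exp (Q * |x|)) := by
        calc D * (C * c1) = C * (c1 * D) := by ring
          _ ≤ _ := by gcongr
      have := Real.exp_pos (Q * |x|)
      nlinarith
    have hs : ∀ G : Matrix (Fin N) (Fin N) ℂ, ‖G‖ ≤ D → ‖(1 + Zs ω c P N * G).det‖ ≤
        Real.exp (1 + (K3 * y) ^ 2 + K3 * y * (8 * C * K + Q * |x|)) := by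
      intro G hG
      have hκ' : ∀ s t : T × Fin (M + (2 * Q + 1)), ‖c s.1 * κ s.1 s.2‖ *
          (en (VV P N (M + (2 * Q + 1)) s) * en (UU P N (M + (2 * Q + 1)) t)) ≤ 4 * C * c1 := by
        intro s t
        have g1 := en_Uv_le N (P s.1).σ (P s.1).z' (P s.1).hz' (P s.1).m' 0 s.2
        have g2 := en_Uv_le N (P t.1).σ (P t.1).z (P t.1).hz (P t.1).m 0 t.2
        have g3 : ‖c s.1‖ ≤ c1 := Finset.single_le_sum (f := fun t => ‖c t‖)
          (fun t _ => norm_nonneg _) (Finset.mem_univ s.1)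
        rw [norm_mul]
        calc _ ≤ (c1 * C) * (2 * 2) := by
              apply mul_le_mul _ (mul_le_mul g1 g2 (en_nonneg _) (by norm_num))
                (mul_nonneg (en_nonneg _) (en_nonneg _)) (by positivity)
              exact mul_le_mul g3 (hκ _ _) (norm_nonneg _) hc0
          _ = _ := by ring
      have hmain := det_split_le (fun s : T × Fin (M + (2 * Q + 1)) => c s.1 * κ s.1 s.2)
        (UU P N (M + (2 * Q + 1))) (VV P N (M + (2 * Q + 1))) _ G (4 * C * c1) _ D (by positivity)
        hG hκ' hdec hεD
      rw [add_sub_cancel] at hmain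
      refine hmain.trans ?_
      set r := Fintype.card (T × Fin (M + (2 * Q + 1))) with hr
      have hrle : (r : ℝ) ≤ K3 * y := by
        rw [hr, Fintype.card_prod, Fintype.card_fin, hK3]
        push_cast
        have : (0 : ℝ) ≤ Q := by positivity
        calc _ ≤ (Fintype.card T : ℝ) * ((2 * M0 + (2 * Q + 1)) * y) := by
              gcongr
              nlinarith
          _ = _ := by ring
      have hfac : (r.factorial : ℝ) ≤ Real.exp ((K3 * y) ^ 2) := by
        calc (r.factorial : ℝ) ≤ (r : ℝ) ^ r := by exact_mod_cast Nat.factorial_le_pow r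
          _ ≤ (Real.exp (r : ℝ)) ^ r := by
            gcongr
            linarith [Real.add_one_le_exp (r : ℝ)]
          _ = Real.exp ((r : ℝ) ^ 2) := by rw [← Real.exp_nat_mul]; congr 1; ring
          _ ≤ _ := Real.exp_le_exp.mpr (by gcongr)
      have hbase : 1 + 4 * C * c1 * (2 * D) ≤ Real.exp (8 * C * K + Q * |x|) := by
        have hE : 1 ≤ Real.exp (Q * |x|) := Real.one_le_exp (by positivity)
        calc 1 + 4 * C * c1 * (2 * D) = 1 + 8 * C * (c1 * D) := by ring
          _ ≤ 1 + 8 * C * (K * Real.exp (Q * |x|)) := by gcongr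
          _ ≤ (8 * C * K + 1) * Real.exp (Q * |x|) := by linarith
          _ ≤ Real.exp (8 * C * K) * Real.exp (Q * |x|) := by
            gcongr
            exact Real.add_one_le_exp _
          _ = _ := by rw [Real.exp_add]
      have hpow : (1 + 4 * C * c1 * (2 * D)) ^ r ≤
          Real.exp (K3 * y * (8 * C * K + Q * |x|)) := by
        calc _ ≤ (Real.exp (8 * C * K + Q * |x|)) ^ r := by gcongr
          _ = Real.exp (r * (8 * C * K + Q * |x|)) := by rw [← Real.exp_nat_mul]
          _ ≤ _ := Real.exp_le_exp.mpr (by gcongr)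
      calc _ ≤ Real.exp 1 * (Real.exp ((K3 * y) ^ 2) *
            Real.exp (K3 * y * (8 * C * K + Q * |x|))) := by gcongr
        _ = _ := by rw [← Real.exp_add, ← Real.exp_add]; congr 1; ring
    have hb := h.abs_Lr_le N D _ hDa hDb hs
    refine hb.trans ?_
    have hy2' : 0 ≤ y ^ 2 := sq_nonneg y
    have hyy : y ≤ y ^ 2 := by nlinarith
    have h5 : 1 + (K3 * y) ^ 2 + K3 * y * (8 * C * K + Q * |x|) ≤
        (1 + K3 ^ 2 + K3 * (8 * C * K + 2 * Q)) * y ^ 2 := by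
      have g1 : K3 * y * (8 * C * K + Q * |x|) ≤ K3 * y * ((8 * C * K + 2 * Q) * y) := by
        have g2 : 8 * C * K ≤ 8 * C * K * y := le_mul_of_one_le_right (by positivity) hy1
        have g3 : (Q : ℝ) * |x| ≤ Q * (2 * y) := by gcongr
        have : 8 * C * K + Q * |x| ≤ (8 * C * K + 2 * Q) * y := by linarith
        gcongr
      have : 1 ≤ y ^ 2 := by nlinarith
      nlinarith
    refine h5.trans ?_
    rw [hy2]
    have hx2 : 1 ≤ x ^ 2 := by rw [← sq_abs]; nlinarith
    have h6 : Real.exp |x| ≤ x ^ 2 * Real.exp |x| := le_mul_of_one_le_left (by positivity) hx2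
    calc _ ≤ (1 + K3 ^ 2 + K3 * (8 * C * K + 2 * Q)) * (x ^ 2 * Real.exp |x|) := by gcongr
      _ ≤ _ := mul_le_mul_of_nonneg_right (le_add_of_nonneg_left (by positivity)) (by positivity)

end EE
end

noncomputable section
namespace EE
open scoped ComplexConjugate Matrix ComplexOrder
open Filter Topology MeasureTheory

/-- sawtooth with jump `-2` at `τ` -/
def psi (τ θ : ℝ) : ℝ := (θ - τ) / Real.pi + (if θ < τ then 1 else -1)

lemma exp_psi (y τ θ : ℝ) : Real.exp (y * psi τ θ) = Real.exp (y / Real.pi * θ) *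
    (Real.exp (-y - y / Real.pi * τ) + (Real.exp (-(y / Real.pi * τ)) * (2 * Real.sinh y)) *
      (if θ < τ then 1 else 0)) := by
  have hpi := Real.pi_ne_zero
  unfold psi
  rw [Real.sinh_eq]
  split_ifs with h
  · have e1 : y * ((θ - τ) / Real.pi + 1) = y / Real.pi * θ + (-(y / Real.pi * τ) + y) := by
      field_simp; ring
    rw [e1, Real.exp_add, Real.exp_add, sub_eq_add_neg, add_comm (-y), Real.exp_add]
    ring
  · have e1 : y * ((θ - τ) / Real.pi + -1) = y / Real.pi * θ + (-y - y / Real.pi * τ) := by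
      field_simp; ring
    rw [e1, Real.exp_add]
    ring

set_option linter.unusedSectionVars false
variable {ι : Type} [DecidableEq ι]

/-- product of pure jump symbols -/
def Asym (τ η : ι → ℝ) (s : Finset ι) (x θ : ℝ) : ℝ :=
  Real.exp (x * ∑ i ∈ s, η i * psi (τ i) θ)

lemma Asym_insert (τ η : ι → ℝ) (s : Finset ι) {k : ι} (hk : k ∉ s) (x θ : ℝ) :
    Asym τ η (insert k s) x θ = Asym τ η s x θ * Asym τ η {k} x θ := by
  unfold Asym
  rw [← Real.exp_add, Finset.sum_insert hk, Finset.sum_singleton]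
  congr 1
  ring

lemma Asym_single (τ η : ι → ℝ) (k : ι) (x θ : ℝ) :
    Asym τ η {k} x θ = Real.exp ((x * η k) * psi (τ k) θ) := by
  unfold Asym
  rw [Finset.sum_singleton, mul_assoc]

lemma Asym_measurable (τ η : ι → ℝ) (s : Finset ι) (x : ℝ) : Measurable (Asym τ η s x) := by
  unfold Asym psi
  refine Real.measurable_exp.comp (Measurable.const_mul ?_ _)
  refine Finset.measurable_sum _ fun i _ => Measurable.const_mul ?_ _
  refine Measurable.add (by fun_prop) ?_
  exact Measurable.ite measurableSet_Iio measurable_const measurable_const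

lemma psi_abs_le {τ θ : ℝ} (hτ : 0 < τ ∧ τ < 2 * Real.pi) (hθ : 0 < θ ∧ θ ≤ 2 * Real.pi) :
    |psi τ θ| ≤ 3 := by
  have hpi := Real.pi_pos
  unfold psi
  have h1 : |(θ - τ) / Real.pi| ≤ 2 := by
    rw [abs_div, abs_of_pos hpi, div_le_iff₀ hpi, abs_le]
    constructor <;> linarith
  have h2 : |(if θ < τ then (1 : ℝ) else -1)| ≤ 1 := by split_ifs <;> simp
  exact (abs_add_le _ _).trans (by linarith)

lemma Asym_bounds (τ η : ι → ℝ) (hτ : ∀ i, 0 < τ i ∧ τ i < 2 * Real.pi) (s : Finset ι) (x : ℝ)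
    {θ : ℝ} (hθ : 0 < θ ∧ θ ≤ 2 * Real.pi) :
    Real.exp (-((3 * ∑ i ∈ s, |η i|) * |x|)) ≤ Asym τ η s x θ ∧
      Asym τ η s x θ ≤ Real.exp ((3 * ∑ i ∈ s, |η i|) * |x|) := by
  have h : |x * ∑ i ∈ s, η i * psi (τ i) θ| ≤ (3 * ∑ i ∈ s, |η i|) * |x| := by
    rw [abs_mul, mul_comm]
    gcongr
    rw [Finset.mul_sum]
    refine (Finset.abs_sum_le_sum_abs _ _).trans (Finset.sum_le_sum fun i _ => ?_)
    rw [abs_mul, mul_comm]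
    gcongr
    exact psi_abs_le (hτ i) hθ
  rw [abs_le] at h
  exact ⟨Real.exp_le_exp.mpr h.1, Real.exp_le_exp.mpr h.2⟩

lemma ae_mu0 {p : ℝ → Prop} (h : ∀ θ, 0 < θ ∧ θ ≤ 2 * Real.pi → p θ) : ∀ᵐ t ∂mu0, p t := by
  filter_upwards [ae_restrict_mem measurableSet_Ioc] with t ht
  exact h t ht

lemma Asym_nice (τ η : ι → ℝ) (hτ : ∀ i, 0 < τ i ∧ τ i < 2 * Real.pi) (s : Finset ι) (x : ℝ) :
    Nice (Asym τ η s x) := by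
  refine memLp_top_of_bound (Asym_measurable τ η s x).aestronglyMeasurable
    (Real.exp ((3 * ∑ i ∈ s, |η i|) * |x|)) (ae_mu0 fun θ hθ => ?_)
  have h := Asym_bounds τ η hτ s x hθ
  rw [Real.norm_eq_abs, abs_of_pos (show 0 < Asym τ η s x θ from Real.exp_pos _)]
  exact h.2

lemma abs_sinh_le (y : ℝ) : |Real.sinh y| ≤ |y| * Real.exp |y| := by
  have h : ∀ y : ℝ, 0 ≤ y → Real.sinh y ≤ y * Real.exp y := by
    intro y hy
    rw [Real.sinh_eq]
    have h1 : Real.exp (-y) * (Real.exp y * Real.exp y) = Real.exp y := by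
      rw [← Real.exp_add, ← Real.exp_add]; congr 1; ring
    have h2 := Real.add_one_le_exp (-(2 * y))
    have h3 : Real.exp (-(2 * y)) * Real.exp y = Real.exp (-y) := by
      rw [← Real.exp_add]; congr 1; ring
    have h4 := Real.exp_pos y
    nlinarith
  rcases le_total 0 y with hy | hy
  · rw [abs_of_nonneg (Real.sinh_nonneg_iff.mpr hy), abs_of_nonneg hy]
    exact h y hy
  · rw [abs_of_nonpos (Real.sinh_nonpos_iff.mpr hy), abs_of_nonpos hy, ← Real.sinh_neg]
    exact h (-y) (by linarith)

/-- step representation of the symbol -/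
structure StepRep (τ : ι → ℝ) (s : Finset ι) (A : ℝ → ℝ) (μ β : ℝ) (B : ι → ℝ) : Prop where
  eq : ∀ θ, A θ = Real.exp (μ * θ) * (β + ∑ i ∈ s, B i * if θ < τ i then 1 else 0)
  per : β * Real.exp (2 * Real.pi * μ) = β + ∑ i ∈ s, B i

lemma StepRep.single (τ η : ι → ℝ) (k : ι) (x : ℝ) :
    StepRep τ {k} (Asym τ η {k} x) (x * η k / Real.pi)
      (Real.exp (-(x * η k) - x * η k / Real.pi * τ k))
      (fun _ => Real.exp (-(x * η k / Real.pi * τ k)) * (2 * Real.sinh (x * η k))) := by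
  constructor
  · intro θ
    rw [Asym_single, exp_psi, Finset.sum_singleton]
  · rw [Finset.sum_singleton, Real.sinh_eq, ← Real.exp_add]
    have hpi := Real.pi_ne_zero
    have e1 : -(x * η k) - x * η k / Real.pi * τ k + 2 * Real.pi * (x * η k / Real.pi) =
      -(x * η k / Real.pi * τ k) + x * η k := by field_simp; ring
    rw [e1, Real.exp_add, sub_eq_add_neg, add_comm (-(x * η k)), Real.exp_add]
    ring

lemma StepRep.mul {τ : ι → ℝ} {s : Finset ι} {A A' : ℝ → ℝ} {μ β μ' β' : ℝ} {B B' : ι → ℝ} {k : ι}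
    (hk : k ∉ s) (h : StepRep τ s A μ β B) (h' : StepRep τ {k} A' μ' β' B') :
    StepRep τ (insert k s) (fun θ => A θ * A' θ) (μ + μ') (β * β')
      (fun i => if i = k then β * B' k + ∑ j ∈ s, B j * B' k * (if τ k < τ j then 1 else 0)
        else B i * (β' + B' k * if τ i ≤ τ k then 1 else 0)) := by
  have hne : ∀ i ∈ s, i ≠ k := fun i hi h => hk (h ▸ hi)
  have key : ∀ χ : ι → ℝ, (∀ j ∈ s, χ j * χ k = if τ j ≤ τ k then χ j else χ k) →
      (β + ∑ i ∈ s, B i * χ i) * (β' + B' k * χ k) = β * β' + ∑ i ∈ insert k s,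
      (if i = k then β * B' k + ∑ j ∈ s, B j * B' k * (if τ k < τ j then 1 else 0)
        else B i * (β' + B' k * if τ i ≤ τ k then 1 else 0)) * χ i := by
    intro χ hχ
    rw [Finset.sum_insert hk, if_pos rfl]
    have e : ∑ i ∈ s, (if i = k then β * B' k + ∑ j ∈ s, B j * B' k * (if τ k < τ j then 1 else 0)
        else B i * (β' + B' k * if τ i ≤ τ k then 1 else 0)) * χ i =
        ∑ i ∈ s, B i * (β' + B' k * if τ i ≤ τ k then 1 else 0) * χ i :=
      Finset.sum_congr rfl fun i hi => by rw [if_neg (hne i hi)]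
    rw [e, add_mul, Finset.sum_mul, add_mul, Finset.sum_mul]
    have e2 : ∑ i ∈ s, B i * χ i * (β' + B' k * χ k) =
        ∑ j ∈ s, B j * B' k * (if τ k < τ j then 1 else 0) * χ k +
        ∑ i ∈ s, B i * (β' + B' k * if τ i ≤ τ k then 1 else 0) * χ i := by
      rw [← Finset.sum_add_distrib]
      refine Finset.sum_congr rfl fun i hi => ?_
      have := hχ i hi
      by_cases hle : τ i ≤ τ k
      · rw [if_pos hle] at this ⊢
        rw [if_neg (not_lt.mpr hle)]
        linear_combination (B i * B' k) * this
      · rw [if_neg hle] at this ⊢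
        rw [if_pos (not_le.mp hle)]
        linear_combination (B i * B' k) * this
    rw [e2]
    ring
  constructor
  · intro θ
    rw [h.eq, h'.eq, Finset.sum_singleton, ← key (fun i => if θ < τ i then 1 else 0), add_mul,
      Real.exp_add]
    · ring
    · intro j _
      show (if θ < τ j then (1 : ℝ) else 0) * (if θ < τ k then 1 else 0) =
        if τ j ≤ τ k then (if θ < τ j then 1 else 0) else (if θ < τ k then 1 else 0)
      split_ifs <;> first | (exfalso; linarith) | norm_num
  · have h2 := key (fun _ => 1) (fun j _ => by simp)
    simp only [mul_one] at h2
    rw [← h2, ← h.per]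
    have h3 := h'.per
    rw [Finset.sum_singleton] at h3
    rw [← h3, mul_add, Real.exp_add]
    ring

lemma StepRep.exists (τ η : ι → ℝ) (s : Finset ι) : ∃ C : ℝ, 0 ≤ C ∧ ∀ x : ℝ, ∃ (μ β : ℝ) (B : ι → ℝ),
    StepRep τ s (Asym τ η s x) μ β B ∧ |μ| ≤ C * |x| ∧ |β| ≤ Real.exp (C * |x|) ∧
      ∑ i ∈ s, |B i| ≤ C * |x| * Real.exp (C * |x|) := by
  induction s using Finset.induction_on with
  | empty =>
    refine ⟨0, le_rfl, fun x => ⟨0, 1, fun _ => 0, ⟨fun θ => by simp [Asym], by simp⟩, by simp, by simp,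
      by simp⟩⟩
  | insert k s hk ih =>
    obtain ⟨C, hC, ih⟩ := ih
    set e := |η k| with he
    have he0 : 0 ≤ e := abs_nonneg _
    set q := |η k| * |τ k| with hq
    have hq0 : 0 ≤ q := by positivity
    -- bounds for the single factor
    refine ⟨4 * C + 6 * e + 2 * C * e + 4 * q, by positivity, fun x => ?_⟩
    obtain ⟨μ, β, B, hrep, h1, h2, h3⟩ := ih x
    have hs := StepRep.single τ η k x
    have hmul := hrep.mul hk hs
    have hA : Asym τ η (insert k s) x = fun θ => Asym τ η s x θ * Asym τ η {k} x θ := by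
      funext θ
      exact Asym_insert τ η s hk x θ
    rw [hA]
    refine ⟨_, _, _, hmul, ?_, ?_, ?_⟩
    · have hpi : |x * η k / Real.pi| ≤ e * |x| := by
        rw [abs_div, abs_of_pos Real.pi_pos, abs_mul]
        apply div_le_of_le_mul₀ Real.pi_pos.le (by positivity)
        have : 1 ≤ Real.pi := by linarith [Real.pi_gt_three]
        nlinarith [mul_nonneg (abs_nonneg x) he0]
      refine (abs_add_le _ _).trans ?_
      have := abs_nonneg x
      have : 0 ≤ 2 * C * e * |x| := by positivity
      have : 0 ≤ q * |x| := by positivity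
      have : 0 ≤ C * |x| := by positivity
      have : 0 ≤ e * |x| := by positivity
      nlinarith
    all_goals
      have hx0 := abs_nonneg x
      have hpq : |x * η k / Real.pi * τ k| ≤ q * |x| := by
        rw [abs_mul, abs_div, abs_of_pos Real.pi_pos, abs_mul]
        have h0 : |x| * |η k| / Real.pi ≤ |x| * |η k| := by
          apply div_le_self (by positivity)
          linarith [Real.pi_gt_three]
        calc _ ≤ |x| * |η k| * |τ k| := by gcongr
          _ = _ := by rw [hq]; ring
      have hxe : |x * η k| = e * |x| := by rw [abs_mul, mul_comm]
      have hb1 : |Real.exp (-(x * η k) - x * η k / Real.pi * τ k)| ≤ Real.exp ((e + q) * |x|) := by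
        rw [abs_of_pos (Real.exp_pos _)]
        apply Real.exp_le_exp.mpr
        have g1 := neg_abs_le (x * η k)
        have g2 := neg_abs_le (x * η k / Real.pi * τ k)
        linarith
    · rw [abs_mul]
      calc _ ≤ Real.exp (C * |x|) * Real.exp ((e + q) * |x|) := by gcongr
        _ = Real.exp (C * |x| + (e + q) * |x|) := by rw [Real.exp_add]
        _ ≤ _ := by
          apply Real.exp_le_exp.mpr
          have : 0 ≤ 2 * C * e * |x| := by positivity
          have : 0 ≤ q * |x| := by positivity
          have : 0 ≤ C * |x| := by positivity
          have : 0 ≤ e * |x| := by positivity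
          nlinarith
    · set b := Real.exp (-(x * η k / Real.pi * τ k)) * (2 * Real.sinh (x * η k)) with hb
      set b0 := Real.exp (-(x * η k) - x * η k / Real.pi * τ k) with hb0
      have hb2 : |b| ≤ 2 * e * |x| * Real.exp ((e + q) * |x|) := by
        rw [hb, abs_mul, abs_mul, abs_of_pos (Real.exp_pos _), abs_two]
        have g1 := abs_sinh_le (x * η k)
        rw [hxe] at g1
        have g2 : Real.exp (-(x * η k / Real.pi * τ k)) ≤ Real.exp (q * |x|) := by
          apply Real.exp_le_exp.mpr
          have g2 := neg_abs_le (x * η k / Real.pi * τ k)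
          linarith
        calc _ ≤ Real.exp (q * |x|) * (2 * (e * |x| * Real.exp (e * |x|))) := by gcongr
          _ = 2 * e * |x| * (Real.exp (e * |x|) * Real.exp (q * |x|)) := by ring
          _ = _ := by rw [← Real.exp_add]; congr 2; ring
      have hχ : ∀ p : Prop, ∀ [Decidable p], |(if p then (1 : ℝ) else 0)| ≤ 1 := by
        intro p _
        split_ifs <;> simp
      rw [Finset.sum_insert hk, if_pos rfl]
      have hS1 : |β * b + ∑ j ∈ s, B j * b * (if τ k < τ j then 1 else 0)| ≤
          (|β| + ∑ i ∈ s, |B i|) * |b| := by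
        refine (abs_add_le _ _).trans ?_
        rw [add_mul, abs_mul, Finset.sum_mul]
        gcongr
        refine (Finset.abs_sum_le_sum_abs _ _).trans (Finset.sum_le_sum fun j _ => ?_)
        rw [abs_mul, abs_mul]
        exact mul_le_of_le_one_right (by positivity) (hχ _)
      have hS2 : ∑ i ∈ s, |if i = k then β * b + ∑ j ∈ s, B j * b * (if τ k < τ j then 1 else 0)
          else B i * (b0 + b * if τ i ≤ τ k then 1 else 0)| ≤ (∑ i ∈ s, |B i|) * (|b0| + |b|) := by
        rw [Finset.sum_mul]
        refine Finset.sum_le_sum fun i hi => ?_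
        rw [if_neg (ne_of_mem_of_not_mem hi hk), abs_mul]
        gcongr
        refine (abs_add_le _ _).trans (add_le_add le_rfl ?_)
        rw [abs_mul]
        exact mul_le_of_le_one_right (by positivity) (hχ _)
      have hβ := h2
      set S := ∑ i ∈ s, |B i| with hS
      have hS0 : 0 ≤ S := Finset.sum_nonneg fun i _ => abs_nonneg _
      -- absorb polynomial factors
      have hxexp : |x| ≤ Real.exp |x| := by linarith [Real.add_one_le_exp |x|]
      set E1 := Real.exp (C * |x|) with hE1
      set E2 := Real.exp ((e + q) * |x|) with hE2
      set X := |x| with hX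
      have hE1p : 0 < E1 := Real.exp_pos _
      have hE2p : 0 < E2 := Real.exp_pos _
      have hCX : C * X ≤ E1 := by linarith [Real.add_one_le_exp (C * X)]
      have hE12 : ∀ z : ℝ, 2 * C * X + (e + q) * X ≤ z * X → E1 * E1 * E2 ≤ Real.exp (z * X) := by
        intro z hz
        rw [hE1, hE2, ← Real.exp_add, ← Real.exp_add]
        apply Real.exp_le_exp.mpr
        linarith
      have hz := hE12 (4 * C + 6 * e + 2 * C * e + 4 * q) (by
        have : 0 ≤ 2 * C * e * X := by positivity
        have : 0 ≤ q * X := by positivity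
        have : 0 ≤ C * X := by positivity
        have : 0 ≤ e * X := by positivity
        nlinarith)
      have hE11 : 1 ≤ E1 := Real.one_le_exp (by positivity)
      have heX : 0 ≤ e * X := by positivity
      calc _ ≤ (|β| + S) * |b| + S * (|b0| + |b|) := add_le_add hS1 hS2
        _ ≤ (E1 + C * X * E1) * (2 * e * X * E2) + C * X * E1 * (E2 + 2 * e * X * E2) := by gcongr
        _ = (E1 * E2) * (X * (2 * e + C) + (C * X) * (4 * e * X)) := by ring
        _ ≤ (E1 * E2) * (X * (2 * e + C) * E1 + E1 * (4 * e * X)) := by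
          apply mul_le_mul_of_nonneg_left _ (by positivity)
          apply add_le_add
          · exact le_mul_of_one_le_right (by positivity) hE11
          · gcongr
        _ = (6 * e + C) * X * (E1 * E1 * E2) := by ring
        _ ≤ (6 * e + C) * X * Real.exp ((4 * C + 6 * e + 2 * C * e + 4 * q) * X) := by gcongr
        _ ≤ _ := by
          have : 0 ≤ 2 * C * e := by positivity
          exact mul_le_mul_of_nonneg_right (mul_le_mul_of_nonneg_right (by linarith) hx0)
            (Real.exp_pos _).le

end EE
end

noncomputable section
namespace EE
open scoped ComplexConjugate Matrix ComplexOrder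
open Filter Topology MeasureTheory
open Complex (I)
set_option linter.unusedSectionVars false
variable {ι : Type} [DecidableEq ι]

lemma integral_step (w : ℂ) (hw : w ≠ 0) {τ : ℝ} (hτ : 0 < τ ∧ τ < 2 * Real.pi) :
    (∫ t in (0 : ℝ)..(2 * Real.pi), (if t < τ then (1 : ℂ) else 0) * Complex.exp (w * t)) =
      (Complex.exp (w * τ) - 1) / w := by
  have hIntg : ∀ a b : ℝ, IntervalIntegrable (fun t : ℝ => Complex.exp (w * t)) volume a b :=
    fun a b => Continuous.intervalIntegrable (by fun_prop) a b
  have e1 : (∫ t in (0 : ℝ)..τ, (if t < τ then (1 : ℂ) else 0) * Complex.exp (w * t)) =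
      ∫ t in (0 : ℝ)..τ, Complex.exp (w * t) := by
    apply intervalIntegral.integral_congr_ae
    have : ∀ᵐ t : ℝ, t ≠ τ := by
      rw [ae_iff]
      simp
    filter_upwards [this] with t ht hm
    rw [Set.uIoc_of_le hτ.1.le] at hm
    rw [if_pos (lt_of_le_of_ne hm.2 ht), one_mul]
  have e2 : (∫ t in τ..(2 * Real.pi), (if t < τ then (1 : ℂ) else 0) * Complex.exp (w * t)) = 0 := by
    apply intervalIntegral.integral_zero_ae
    refine Eventually.of_forall fun t hm => ?_
    rw [Set.uIoc_of_le hτ.2.le] at hm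
    rw [if_neg (not_lt.mpr hm.1.le), zero_mul]
  have hm : Measurable (fun t : ℝ => (if t < τ then (1 : ℂ) else 0)) :=
    Measurable.ite measurableSet_Iio measurable_const measurable_const
  have hi : ∀ a b : ℝ, IntervalIntegrable
      (fun t : ℝ => (if t < τ then (1 : ℂ) else 0) * Complex.exp (w * t)) volume a b := by
    intro a b
    refine (hIntg a b).mono_fun ?_ ?_
    · exact (hm.mul (by fun_prop)).aestronglyMeasurable
    · refine Eventually.of_forall fun t => ?_
      simp only [norm_mul]
      split_ifs <;> simp
  rw [← intervalIntegral.integral_add_adjacent_intervals (hi 0 τ) (hi τ _), e1, e2, add_zero,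
    integral_exp_mul_complex hw]
  simp

/-- jump coefficients -/
def Jc (τ : ι → ℝ) (μ : ℝ) (B : ι → ℝ) (i : ι) : ℂ :=
  I * ((B i * Real.exp (μ * τ i) / (2 * Real.pi) : ℝ) : ℂ)

lemma step_integrable (w : ℂ) (τ : ℝ) (a b : ℝ) : IntervalIntegrable
      (fun t : ℝ => (if t < τ then (1 : ℂ) else 0) * Complex.exp (w * t)) volume a b := by
  have hm : Measurable (fun t : ℝ => (if t < τ then (1 : ℂ) else 0)) :=
    Measurable.ite measurableSet_Iio measurable_const measurable_const
  have hIntg : IntervalIntegrable (fun t : ℝ => Complex.exp (w * t)) volume a b :=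
    Continuous.intervalIntegrable (by fun_prop) a b
  refine hIntg.mono_fun ?_ ?_
  · exact (hm.mul (by fun_prop)).aestronglyMeasurable
  · refine Eventually.of_forall fun t => ?_
    simp only [norm_mul]
    split_ifs <;> simp

lemma StepRep.coef {τ : ι → ℝ} (hτ : ∀ i, 0 < τ i ∧ τ i < 2 * Real.pi) {s : Finset ι} {A : ℝ → ℝ}
    {μ β : ℝ} {B : ι → ℝ} (h : StepRep τ s A μ β B) (n : ℤ) (hn : (n : ℂ) + μ * I ≠ 0) :
    fourierCoef A n = ∑ i ∈ s, Jc τ μ B i * Complex.exp (-I * n * τ i) / (n + μ * I) := by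
  set w : ℂ := μ - I * n with hw
  have hwI : w = -I * (n + μ * I) := by
    rw [hw]
    linear_combination (μ : ℂ) * Complex.I_sq
  have hw0 : w ≠ 0 := by
    rw [hwI]
    exact mul_ne_zero (neg_ne_zero.mpr Complex.I_ne_zero) hn
  unfold fourierCoef
  have e1 : ∀ t : ℝ, (A t : ℂ) * Complex.exp (-I * (n : ℂ) * (t : ℂ)) =
      (β : ℂ) * Complex.exp (w * t) +
        ∑ i ∈ s, (B i : ℂ) * ((if t < τ i then (1 : ℂ) else 0) * Complex.exp (w * t)) := by
    intro t
    rw [h.eq t]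
    have : Complex.exp (w * t) = Complex.exp (μ * t) * Complex.exp (-I * n * t) := by
      rw [← Complex.exp_add, hw]; congr 1; ring
    rw [this]
    push_cast
    simp only [apply_ite Complex.ofReal, Complex.ofReal_one, Complex.ofReal_zero]
    rw [mul_add, add_mul, Finset.mul_sum, Finset.sum_mul]
    congr 1
    · ring
    · exact Finset.sum_congr rfl fun i _ => by ring
  simp only [e1]
  rw [intervalIntegral.integral_add, intervalIntegral.integral_const_mul,
    integral_exp_mul_complex hw0, intervalIntegral.integral_finsetSum]
  · simp only [intervalIntegral.integral_const_mul]
    have e2 : ∀ i, (∫ t in (0 : ℝ)..(2 * Real.pi), (if t < τ i then (1 : ℂ) else 0) *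
        Complex.exp (w * t)) = (Complex.exp (w * τ i) - 1) / w := fun i => integral_step w hw0 (hτ i)
    simp only [e2]
    have e3 : Complex.exp (w * ((2 * Real.pi : ℝ) : ℂ)) = ((Real.exp (2 * Real.pi * μ) : ℝ) : ℂ) := by
      rw [hw, Complex.ofReal_exp, Complex.exp_eq_exp_iff_exists_int]
      refine ⟨-n, ?_⟩
      push_cast
      ring
    have hper : (β : ℂ) * ((Real.exp (2 * Real.pi * μ) : ℝ) : ℂ) = β + ∑ i ∈ s, (B i : ℂ) := by
      have := h.per
      exact_mod_cast this
    rw [e3]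
    have e4 : (β : ℂ) * ((((Real.exp (2 * Real.pi * μ) : ℝ) : ℂ) -
        Complex.exp (w * ((0 : ℝ) : ℂ))) / w) = ∑ i ∈ s, (B i : ℂ) / w := by
      rw [← Finset.sum_div]
      simp only [Complex.ofReal_zero, mul_zero, Complex.exp_zero]
      rw [← mul_div_assoc]
      congr 1
      linear_combination hper
    rw [e4, ← Finset.sum_add_distrib, Finset.mul_sum]
    refine Finset.sum_congr rfl fun i _ => ?_
    have e5 : Complex.exp (w * τ i) = Complex.exp (μ * τ i) * Complex.exp (-I * n * τ i) := by
      rw [← Complex.exp_add, hw]; congr 1; ring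
    rw [e5, Jc]
    push_cast
    have hpi : (Real.pi : ℂ) ≠ 0 := by exact_mod_cast Real.pi_ne_zero
    have hinv : w⁻¹ = I * ((n : ℂ) + μ * I)⁻¹ := by
      rw [hwI, mul_inv, inv_neg, Complex.inv_I, neg_neg]
    simp only [div_eq_mul_inv, hinv]
    ring
  · intro i _
    exact (step_integrable w (τ i) 0 (2 * Real.pi)).const_mul _
  · exact Continuous.intervalIntegrable (by fun_prop) _ _
  · have := IntervalIntegrable.sum s (f := fun i (t : ℝ) => (B i : ℂ) *
      ((if t < τ i then (1 : ℂ) else 0) * Complex.exp (w * t))) (μ := volume) (a := 0)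
      (b := 2 * Real.pi) fun i _ => (step_integrable w (τ i) 0 (2 * Real.pi)).const_mul _
    have hfun : (fun t : ℝ => ∑ i ∈ s, (B i : ℂ) *
      ((if t < τ i then (1 : ℂ) else 0) * Complex.exp (w * t))) = ∑ i ∈ s, fun t : ℝ => (B i : ℂ) *
      ((if t < τ i then (1 : ℂ) else 0) * Complex.exp (w * t)) := by
      funext t
      rw [Finset.sum_apply]
    rw [hfun]
    exact this

lemma exp_I_norm (y : ℝ) : ‖Complex.exp (I * y)‖ = 1 := by
  rw [mul_comm, Complex.norm_exp_ofReal_mul_I]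

/-- oscillation factors -/
def omT (τ : ι → ℝ) (s : Finset ι) (k : ι) (t : s × Bool) : ℂ :=
  Complex.exp (I * ((if t.2 then τ t.1 - τ k else τ k - τ t.1 : ℝ) : ℂ))

/-- coefficients -/
def cT (τ : ι → ℝ) (s : Finset ι) (k : ι) (Ja : ι → ℂ) (Jb : ℂ) (t : s × Bool) : ℂ :=
  -(Ja t.1 * Jb * omT τ s k t)

/-- parameters -/
def parT (τ : ι → ℝ) (s : Finset ι) (k : ι) (μa μb : ℝ) (t : s × Bool) : Par where
  σ := t.2
  z := Complex.exp (I * ((if t.2 then τ t.1 else -τ t.1 : ℝ) : ℂ))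
  z' := Complex.exp (I * ((if t.2 then -τ k else τ k : ℝ) : ℂ))
  m := if t.2 then -μa else μa
  m' := if t.2 then μb else -μb
  hz := exp_I_norm _
  hz' := exp_I_norm _

lemma int_add_ne {n : ℤ} (hn : n ≠ 0) (μ : ℝ) : (n : ℂ) + μ * I ≠ 0 := by
  intro h
  have := congrArg Complex.re h
  simp at this
  exact hn this

lemma entry_alg (E1 E2 D1 D2 J1 J2 : ℂ) (p q l : ℕ) :
    J1 * E1 ^ (p + l + 1) / (-D1) * (J2 * E2 ^ (q + l + 1) / D2) =
      -(J1 * J2 * (E1 * E2)) * ((E1 * E2) ^ l * (E1 ^ p / D1 * (E2 ^ q / D2))) := by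
  rw [div_neg, mul_pow, pow_succ, pow_succ, pow_add, pow_add]
  ring

lemma hZ_of_coef {τ : ι → ℝ} {s : Finset ι} {k : ι} {a b : ℝ → ℝ} (ha : Nice a) (hb : Nice b)
    {μa μb : ℝ} {Ja : ι → ℂ} {Jb : ℂ}
    (hA : ∀ n : ℤ, n ≠ 0 → fourierCoef a n =
      ∑ i ∈ s, Ja i * Complex.exp (-I * n * τ i) / (n + μa * I))
    (hB : ∀ n : ℤ, n ≠ 0 → fourierCoef b n = Jb * Complex.exp (-I * n * τ k) / (n + μb * I))
    (N : ℕ) : toep (fun t => a t * b t) N = toep a N * toep b N +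
      Zs (omT τ s k) (cT τ s k Ja Jb) (parT τ s k μa μb) N := by
  ext p q
  have hS := fourierCoef_mul ha hb ((p : ℤ) - q)
  rw [← (Equiv.addRight (-(q : ℤ))).hasSum_iff] at hS
  set F : ℤ → ℂ := fun m => fourierCoef a (p - m) * fourierCoef b (m - q) with hF
  have hS' : HasSum F (fourierCoef (fun t => a t * b t) ((p : ℤ) - q)) := by
    convert hS using 1
    funext m
    simp only [hF, Function.comp, Equiv.coe_addRight]
    (congr 2; ring)
  have hs := hS'.summable
  have s1 : Summable (fun n : ℕ => F n) := hs.comp_injective Nat.cast_injective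
  have s2 : Summable (fun n : ℕ => F (-(n + 1))) := hs.comp_injective (i := fun n : ℕ => (-((n : ℤ) + 1)))
    (fun x y h => by simpa using h)
  have e1 := tsum_of_nat_of_neg_add_one s1 s2
  rw [hS'.tsum_eq, ← s1.sum_add_tsum_nat_add N] at e1
  have e2 : ∑ i ∈ Finset.range N, F i = (toep a N * toep b N) p q := by
    rw [Matrix.mul_apply, ← Fin.sum_univ_eq_sum_range (fun i => F i)]
    rfl
  have gs : ∀ t : s × Bool, Summable (fun l => (omT τ s k t) ^ l *
      gmat N (parT τ s k μa μb t).σ (parT τ s k μa μb t).z (parT τ s k μa μb t).z'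
      (parT τ s k μa μb t).m (parT τ s k μa μb t).m' 0 0 0 0 l p q) := fun t =>
    summable_pow_mul (exp_I_norm _) (gmat_summable N _ _ _ (exp_I_norm _) (exp_I_norm _) _ _ p q)
  have e3 : Zs (omT τ s k) (cT τ s k Ja Jb) (parT τ s k μa μb) N p q =
      ∑' l, F ((l + N : ℕ) : ℤ) + ∑' l : ℕ, F (-(l + 1)) := by
    rw [Zs, Matrix.sum_apply, Fintype.sum_prod_type_right]
    rw [Fintype.sum_bool]
    congr 1
    · simp only [Matrix.smul_apply, Zt, Matrix.of_apply, smul_eq_mul, ← tsum_mul_left]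
      rw [← Summable.tsum_finsetSum (fun i _ => (gs (i, true)).mul_left _)]
      refine tsum_congr fun l => ?_
      simp only [hF]
      rw [hA _ (by have := p.2; push_cast; omega), hB _ (by have := q.2; push_cast; omega),
        Finset.sum_mul, ← Finset.sum_coe_sort s]
      refine Finset.sum_congr rfl fun i _ => ?_
      have hp : ((Fin.rev p : Fin N) : ℕ) = N - 1 - p := by rw [Fin.val_rev]; omega
      have hq : ((Fin.rev q : Fin N) : ℕ) = N - 1 - q := by rw [Fin.val_rev]; omega
      obtain ⟨p', hp'⟩ : ∃ p' : ℕ, N = p + 1 + p' := ⟨N - 1 - p, by have := p.2; omega⟩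
      obtain ⟨q', hq'⟩ : ∃ q' : ℕ, N = q + 1 + q' := ⟨N - 1 - q, by have := q.2; omega⟩
      rw [show ((p : ℕ) : ℤ) - ((l + N : ℕ) : ℤ) = -((p' + l + 1 : ℕ) : ℤ) by push_cast; omega,
        show ((l + N : ℕ) : ℤ) - ((q : ℕ) : ℤ) = ((q' + l + 1 : ℕ) : ℤ) by push_cast; omega]
      rw [show N - 1 - (p : ℕ) = p' by omega] at hp
      rw [show N - 1 - (q : ℕ) = q' by omega] at hq
      simp only [gmat, Matrix.vecMulVec_apply, Uv, Wv, pos, parT, cT, omT, if_true, hp, hq,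
        Finset.prod_range_one, zero_add, add_zero]
      have h1 : Complex.exp (-I * ((-((p' + l + 1 : ℕ) : ℤ) : ℤ) : ℂ) * τ i) =
          Complex.exp (I * τ i) ^ (p' + l + 1) := by
        rw [← Complex.exp_nat_mul]; congr 1; push_cast; ring
      have h2 : Complex.exp (-I * (((q' + l + 1 : ℕ) : ℤ) : ℂ) * τ k) =
          Complex.exp (I * ((-τ k : ℝ) : ℂ)) ^ (q' + l + 1) := by
        rw [← Complex.exp_nat_mul]; congr 1; push_cast; ring
      have h3 : Complex.exp (I * ((τ i - τ k : ℝ) : ℂ)) =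
          Complex.exp (I * τ i) * Complex.exp (I * ((-τ k : ℝ) : ℂ)) := by
        rw [← Complex.exp_add]; congr 1; push_cast; ring
      rw [h1, h2, h3, ← entry_alg]
      congr 3
      · push_cast; ring
      · push_cast; ring
    · simp only [Matrix.smul_apply, Zt, Matrix.of_apply, smul_eq_mul, ← tsum_mul_left]
      rw [← Summable.tsum_finsetSum (fun i _ => (gs (i, false)).mul_left _)]
      refine tsum_congr fun l => ?_
      simp only [hF]
      rw [hA _ (by omega), hB _ (by omega),
        Finset.sum_mul, ← Finset.sum_coe_sort s]
      refine Finset.sum_congr rfl fun i _ => ?_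
      rw [show ((p : ℕ) : ℤ) - (-((l : ℤ) + 1)) = ((p + l + 1 : ℕ) : ℤ) by push_cast; ring,
        show (-((l : ℤ) + 1)) - ((q : ℕ) : ℤ) = -((q + l + 1 : ℕ) : ℤ) by push_cast; ring]
      simp only [gmat, Matrix.vecMulVec_apply, Uv, Wv, pos, parT, cT, omT, if_false,
        Finset.prod_range_one, zero_add, add_zero, Bool.false_eq_true]
      have h1 : Complex.exp (-I * ((-((q + l + 1 : ℕ) : ℤ) : ℤ) : ℂ) * τ k) =
          Complex.exp (I * τ k) ^ ((q : ℕ) + l + 1) := by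
        rw [← Complex.exp_nat_mul]; congr 1; push_cast; ring
      have h2 : Complex.exp (-I * (((p + l + 1 : ℕ) : ℤ) : ℂ) * τ i) =
          Complex.exp (I * ((-τ i : ℝ) : ℂ)) ^ ((p : ℕ) + l + 1) := by
        rw [← Complex.exp_nat_mul]; congr 1; push_cast; ring
      have h3 : Complex.exp (I * ((τ k - τ i : ℝ) : ℂ)) =
          Complex.exp (I * τ k) * Complex.exp (I * ((-τ i : ℝ) : ℂ)) := by
        rw [← Complex.exp_add]; congr 1; push_cast; ring
      rw [h1, h2, h3, mul_comm (Ja i) Jb,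
        mul_comm (Complex.exp (I * ((-τ i : ℝ) : ℂ)) ^ (p : ℕ) / _), ← entry_alg, mul_comm]
      congr 3
      · push_cast; ring
      · push_cast; ring
  rw [Matrix.add_apply, e3, ← e2]
  show fourierCoef (fun t => a t * b t) ((p : ℤ) - q) = _
  rw [e1]
  ring

end EE
end

noncomputable section
namespace EE
open scoped ComplexConjugate Matrix ComplexOrder
open Filter Topology MeasureTheory
open Complex (I)
set_option linter.unusedSectionVars false
variable {ι : Type} [DecidableEq ι]

lemma exp_I_ne_one {y : ℝ} (h0 : y ≠ 0) (h1 : |y| < 2 * Real.pi) : Complex.exp (I * y) ≠ 1 := by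
  intro h
  rw [Complex.exp_eq_one_iff] at h
  obtain ⟨n, hn⟩ := h
  have h2 : (y : ℂ) = n * (2 * Real.pi) := by
    have := Complex.I_ne_zero
    apply mul_left_cancel₀ this
    rw [hn]; ring
  have h3 : y = n * (2 * Real.pi) := by exact_mod_cast h2
  rw [h3, abs_mul, abs_of_pos two_pi_pos'] at h1
  have h4 : |(n : ℝ)| < 1 := by
    by_contra hc
    push Not at hc
    nlinarith [two_pi_pos']
  have h5 : |n| < 1 := by exact_mod_cast h4
  rw [Int.abs_lt_one_iff] at h5
  apply h0
  rw [h3, h5]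
  simp

lemma omT_ne {τ : ι → ℝ} (hτ : ∀ i, 0 < τ i ∧ τ i < 2 * Real.pi) (hinj : Function.Injective τ)
    {s : Finset ι} {k : ι} (hk : k ∉ s) (t : s × Bool) : omT τ s k t ≠ 1 := by
  have hne : τ t.1 ≠ τ k := fun h => hk (by have := hinj h; rw [← this]; exact t.1.2)
  have h1 := hτ t.1
  have h2 := hτ k
  unfold omT
  apply exp_I_ne_one
  · split_ifs
    · exact sub_ne_zero.mpr hne
    · exact sub_ne_zero.mpr hne.symm
  · rw [abs_lt]
    split_ifs <;> constructor <;> linarith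

lemma norm_Jc_le {τ : ι → ℝ} (hτ : ∀ i, 0 < τ i ∧ τ i < 2 * Real.pi) (μ : ℝ) (B : ι → ℝ) (i : ι)
    {M : ℝ} (hM : |μ| ≤ M) : ‖Jc τ μ B i‖ ≤ |B i| * Real.exp (2 * Real.pi * M) := by
  have hpi := two_pi_pos'
  unfold Jc
  rw [norm_mul, Complex.norm_I, one_mul, Complex.norm_real, Real.norm_eq_abs, abs_div, abs_mul,
    abs_of_pos (Real.exp_pos _), abs_of_pos hpi]
  have h1 : Real.exp (μ * τ i) ≤ Real.exp (2 * Real.pi * M) := by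
    apply Real.exp_le_exp.mpr
    have h2 := hτ i
    calc μ * τ i ≤ |μ| * τ i := mul_le_mul_of_nonneg_right (le_abs_self _) h2.1.le
      _ ≤ M * (2 * Real.pi) := mul_le_mul hM h2.2.le h2.1.le ((abs_nonneg _).trans hM)
      _ = _ := by ring
  calc _ ≤ |B i| * Real.exp (μ * τ i) := div_le_self (by positivity) (by linarith [Real.pi_gt_three])
    _ ≤ _ := by gcongr

theorem step_conv {τ : ι → ℝ} (hτ : ∀ i, 0 < τ i ∧ τ i < 2 * Real.pi) (hinj : Function.Injective τ)
    (η : ι → ℝ) {s : Finset ι} {k : ι} (hk : k ∉ s) : ∃ K : ℝ, 0 ≤ K ∧ ∀ x : ℝ,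
      (∃ L, Tendsto (Lr (Asym τ η s x) (Asym τ η {k} x)) atTop (𝓝 L)) ∧
      ∀ N, |Lr (Asym τ η s x) (Asym τ η {k} x) N| ≤ K * (x ^ 2 * Real.exp |x|) := by
  obtain ⟨C1, hC1, r1⟩ := StepRep.exists τ η s
  obtain ⟨C2, hC2, r2⟩ := StepRep.exists τ η {k}
  have hpi := two_pi_pos'
  set E := 3 * ∑ i ∈ insert k s, |η i| with hE
  have hE0 : 0 ≤ E := by positivity
  set K0 := 2 * C1 * C2 + (1 + 2 * Real.pi) * (C1 + C2) + E with hK0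
  have hK0n : 0 ≤ K0 := by positivity
  obtain ⟨K, hK, hdom⟩ := Sep.dom (ω := omT τ s k) (fun t => exp_I_norm _) (omT_ne hτ hinj hk) K0 hK0n
  refine ⟨K, hK, fun x => ?_⟩
  obtain ⟨μ1, β1, B1, h1, g1, -, b1⟩ := r1 x
  obtain ⟨μ2, β2, B2, h2, g2, -, b2⟩ := r2 x
  rw [Finset.sum_singleton] at b2
  have hx := abs_nonneg x
  have hs1 : 3 * ∑ i ∈ s, |η i| ≤ E := by
    rw [hE]
    gcongr
    exact Finset.subset_insert k s
  have hs2 : 3 * ∑ i ∈ {k}, |η i| ≤ E := by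
    rw [hE]
    gcongr
    simp
  have hsep : Sep (omT τ s k) (cT τ s k (Jc τ μ1 B1) (Jc τ μ2 B2 k)) (parT τ s k μ1 μ2)
      (Asym τ η s x) (Asym τ η {k} x) (Real.exp (-(E * |x|))) := by
    refine ⟨Asym_nice τ η hτ s x, Asym_nice τ η hτ {k} x, Real.exp_pos _, ?_, ?_, ?_,
      fun t => exp_I_norm _, omT_ne hτ hinj hk, fun N => ?_⟩
    · refine ae_mu0 fun θ hθ => le_trans ?_ (Asym_bounds τ η hτ s x hθ).1
      gcongr
    · refine ae_mu0 fun θ hθ => le_trans ?_ (Asym_bounds τ η hτ {k} x hθ).1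
      gcongr
    · refine ae_mu0 fun θ hθ => ?_
      rw [← Asym_insert τ η s hk]
      exact (Asym_bounds τ η hτ _ x hθ).1
    · refine hZ_of_coef (Asym_nice τ η hτ s x) (Asym_nice τ η hτ {k} x) (fun n hn => ?_)
        (fun n hn => ?_) N
      · exact h1.coef hτ n (int_add_ne hn _)
      · rw [h2.coef hτ n (int_add_ne hn _), Finset.sum_singleton]
  refine ⟨hsep.tendsto, hdom x _ _ _ _ _ hsep ?_ ?_⟩
  · have hc : ∀ t : s × Bool, ‖cT τ s k (Jc τ μ1 B1) (Jc τ μ2 B2 k) t‖ =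
        ‖Jc τ μ1 B1 t.1‖ * ‖Jc τ μ2 B2 k‖ := by
      intro t
      unfold cT
      rw [norm_neg, norm_mul, norm_mul, omT, exp_I_norm, mul_one]
    simp only [hc]
    rw [Fintype.sum_prod_type]
    simp only [Fintype.sum_bool]
    rw [Finset.sum_coe_sort s (fun i => ‖Jc τ μ1 B1 i‖ * ‖Jc τ μ2 B2 k‖ + ‖Jc τ μ1 B1 i‖ * ‖Jc τ μ2 B2 k‖)]
    have k1 : ∑ i ∈ s, ‖Jc τ μ1 B1 i‖ ≤ C1 * |x| * Real.exp (C1 * |x|) *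
        Real.exp (2 * Real.pi * (C1 * |x|)) := by
      calc _ ≤ ∑ i ∈ s, |B1 i| * Real.exp (2 * Real.pi * (C1 * |x|)) :=
            Finset.sum_le_sum fun i _ => norm_Jc_le hτ μ1 B1 i g1
        _ = (∑ i ∈ s, |B1 i|) * Real.exp (2 * Real.pi * (C1 * |x|)) := by rw [Finset.sum_mul]
        _ ≤ _ := by gcongr
    have k2 : ‖Jc τ μ2 B2 k‖ ≤ C2 * |x| * Real.exp (C2 * |x|) *
        Real.exp (2 * Real.pi * (C2 * |x|)) :=
      (norm_Jc_le hτ μ2 B2 k g2).trans (by gcongr)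
    calc _ = 2 * ((∑ i ∈ s, ‖Jc τ μ1 B1 i‖) * ‖Jc τ μ2 B2 k‖) := by
          rw [Finset.sum_mul, Finset.mul_sum]
          exact Finset.sum_congr rfl fun i _ => by ring
      _ ≤ 2 * ((C1 * |x| * Real.exp (C1 * |x|) * Real.exp (2 * Real.pi * (C1 * |x|))) *
          (C2 * |x| * Real.exp (C2 * |x|) * Real.exp (2 * Real.pi * (C2 * |x|)))) := by gcongr
      _ = (2 * C1 * C2) * |x| ^ 2 * ((Real.exp (C1 * |x|) * Real.exp (2 * Real.pi * (C1 * |x|))) *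
          (Real.exp (C2 * |x|) * Real.exp (2 * Real.pi * (C2 * |x|)))) := by ring
      _ = (2 * C1 * C2) * x ^ 2 * Real.exp ((1 + 2 * Real.pi) * (C1 + C2) * |x|) := by
          rw [sq_abs, ← Real.exp_add, ← Real.exp_add, ← Real.exp_add]
          congr 2; ring
      _ ≤ K0 * x ^ 2 * Real.exp (K0 * |x|) := by
          have p1 : 0 ≤ 2 * C1 * C2 := by positivity
          have p2 : 0 ≤ (1 + 2 * Real.pi) * (C1 + C2) := by positivity
          have q1 : 2 * C1 * C2 ≤ K0 := by linarith
          have q2 : (1 + 2 * Real.pi) * (C1 + C2) ≤ K0 := by linarith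
          gcongr
  · rw [one_div, ← Real.exp_neg, neg_neg]
    apply Real.exp_le_exp.mpr
    have p1 : 0 ≤ 2 * C1 * C2 := by positivity
    have p2 : 0 ≤ (1 + 2 * Real.pi) * (C1 + C2) := by positivity
    apply mul_le_mul_of_nonneg_right _ hx
    linarith

/-- log of the determinant -/
def LD (a : ℝ → ℝ) (N : ℕ) : ℝ := Real.log ‖(toep a N).det‖

theorem all_conv {τ : ι → ℝ} (hτ : ∀ i, 0 < τ i ∧ τ i < 2 * Real.pi) (hinj : Function.Injective τ)
    (η : ι → ℝ) (s : Finset ι) : ∃ K : ℝ, 0 ≤ K ∧ ∀ x : ℝ,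
      (∃ L, Tendsto (fun N => LD (Asym τ η s x) N - ∑ i ∈ s, LD (Asym τ η {i} x) N) atTop (𝓝 L)) ∧
      ∀ N, |LD (Asym τ η s x) N - ∑ i ∈ s, LD (Asym τ η {i} x) N| ≤ K * (x ^ 2 * Real.exp |x|) := by
  induction s using Finset.induction_on with
  | empty =>
    have h : ∀ x N, LD (Asym τ η ∅ x) N = 0 := by
      intro x N
      have : Asym τ η ∅ x = fun _ => 1 := by funext θ; simp [Asym]
      rw [LD, this, toep_one]
      simp
    refine ⟨0, le_rfl, fun x => ⟨⟨0, by simp [h]⟩, fun N => by simp [h]⟩⟩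
  | insert k s hk ih =>
    obtain ⟨K1, hK1, ih⟩ := ih
    obtain ⟨K2, hK2, h2⟩ := step_conv hτ hinj η hk
    have key : ∀ x N, LD (Asym τ η (insert k s) x) N - ∑ i ∈ insert k s, LD (Asym τ η {i} x) N =
        (LD (Asym τ η s x) N - ∑ i ∈ s, LD (Asym τ η {i} x) N) -
          Lr (Asym τ η s x) (Asym τ η {k} x) N := by
      intro x N
      have : Asym τ η (insert k s) x = fun θ => Asym τ η s x θ * Asym τ η {k} x θ := by
        funext θ
        exact Asym_insert τ η s hk x θ
      rw [this, Finset.sum_insert hk]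
      simp only [LD, Lr]
      ring
    refine ⟨K1 + K2, by positivity, fun x => ?_⟩
    obtain ⟨⟨L1, t1⟩, b1⟩ := ih x
    obtain ⟨⟨L2, t2⟩, b2⟩ := h2 x
    refine ⟨⟨L1 - L2, ?_⟩, fun N => ?_⟩
    · simp only [key]
      exact t1.sub t2
    · rw [key, add_mul]
      exact (abs_sub _ _).trans (add_le_add (b1 N) (b2 N))

end EE
end

noncomputable section
namespace EE
open scoped ComplexConjugate Matrix ComplexOrder
open Filter Topology MeasureTheory
open Complex (I)
set_option linter.unusedSectionVars false

/-- one step of the Cauchy determinant -/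
lemma cauchy_step (n : ℕ) (x y : Fin (n + 1) → ℂ) (h : ∀ j k, x j + y k ≠ 0) :
    (Matrix.of fun j k => 1 / (x j + y k)).det = 1 / (x 0 + y 0) *
      ((∏ j : Fin n, (x j.succ - x 0) / (x j.succ + y 0)) *
        ((∏ k : Fin n, (y k.succ - y 0) / (x 0 + y k.succ)) *
        (Matrix.of fun j k : Fin n => 1 / (x j.succ + y k.succ)).det)) := by
  set A : Matrix (Fin (n + 1)) (Fin (n + 1)) ℂ := Matrix.of fun j k => 1 / (x j + y k) with hA
  set c : Fin (n + 1) → ℂ := fun j => if j = 0 then 0 else (x 0 + y 0) / (x j + y 0) with hc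
  set B : Matrix (Fin (n + 1)) (Fin (n + 1)) ℂ := Matrix.of fun j k => A j k - c j * A 0 k with hB
  have hdet : A.det = B.det := by
    refine Matrix.det_eq_of_forall_row_eq_smul_add_const c 0 (by simp [hc]) fun i j => ?_
    simp [hB, hc]
  have hB0 : ∀ i : Fin n, B i.succ 0 = 0 := by
    intro i
    have h1 := h i.succ 0
    have h2 := h 0 0
    simp only [hB, hc, hA, Matrix.of_apply, if_neg (Fin.succ_ne_zero i)]
    field_simp
    ring
  rw [hdet, Matrix.det_succ_column_zero, Fin.sum_univ_succ]
  simp only [hB0, mul_zero, zero_mul, Finset.sum_const_zero, add_zero]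
  have e1 : B 0 0 = 1 / (x 0 + y 0) := by simp [hB, hc, hA]
  rw [e1]
  simp only [Fin.val_zero, pow_zero, one_mul]
  congr 1
  rw [← Matrix.det_mul_row, ← Matrix.det_mul_column]
  congr 1
  ext j k
  simp only [Matrix.submatrix_apply, Fin.zero_succAbove, Matrix.of_apply, hB, hA, hc,
    if_neg (Fin.succ_ne_zero j)]
  have h1 := h j.succ 0
  have h2 := h 0 k.succ
  have h3 := h j.succ k.succ
  field_simp
  ring

/-- Cauchy–Toeplitz matrix -/
def CT (γ : ℝ) (N : ℕ) : Matrix (Fin N) (Fin N) ℂ :=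
  Matrix.of fun j k => 1 / ((((j : ℤ) - (k : ℤ) : ℤ) : ℂ) + γ * I)

lemma int_add_ne' (n : ℤ) {γ : ℝ} (hγ : γ ≠ 0) : (n : ℂ) + γ * I ≠ 0 := by
  intro h
  have := congrArg Complex.im h
  simp at this
  exact hγ this

lemma CT_det_succ {γ : ℝ} (hγ : γ ≠ 0) (n : ℕ) : (CT γ (n + 1)).det =
    1 / (γ * I) * ((∏ j ∈ Finset.range n, ((1 / (1 + γ ^ 2 / (j + 1 : ℝ) ^ 2) : ℝ) : ℂ)) * (CT γ n).det) := by
  have h := cauchy_step n (fun j => (j : ℂ)) (fun k => -(k : ℂ) + γ * I) (fun j k => by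
    have := int_add_ne' ((j : ℤ) - k) hγ
    push_cast at this
    intro h
    apply this
    linear_combination h)
  have e1 : (CT γ (n + 1)) = Matrix.of fun j k : Fin (n + 1) => 1 / ((j : ℂ) + (-(k : ℂ) + γ * I)) := by
    ext j k
    simp only [CT, Matrix.of_apply]
    congr 1
    push_cast
    ring
  have e2 : (CT γ n) = Matrix.of fun j k : Fin n =>
      1 / (((j.succ : Fin (n + 1)) : ℂ) + (-((k.succ : Fin (n + 1)) : ℂ) + γ * I)) := by
    ext j k
    simp only [CT, Matrix.of_apply, Fin.val_succ]
    congr 1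
    push_cast
    ring
  rw [e1, h, ← e2, ← mul_assoc (∏ j : Fin n, _), ← Finset.prod_mul_distrib]
  congr 1
  · simp
  · congr 1
    rw [← Fin.prod_univ_eq_prod_range (fun j => ((1 / (1 + γ ^ 2 / (j + 1 : ℝ) ^ 2) : ℝ) : ℂ))]
    refine Finset.prod_congr rfl fun j _ => ?_
    have h1 := int_add_ne' ((j : ℤ) + 1) hγ
    have h2 := int_add_ne' (-((j : ℤ) + 1)) hγ
    have h3 : ((j : ℂ) + 1) ≠ 0 := by exact_mod_cast Nat.succ_ne_zero j
    push_cast at h1 h2 ⊢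
    have h4 : ((j : ℂ) + 1) ^ 2 + γ ^ 2 ≠ 0 := by
      have : ((j : ℂ) + 1) ^ 2 + γ ^ 2 = -(((j : ℂ) + 1 + γ * I) * (-((j : ℂ) + 1) + γ * I)) := by
        linear_combination ((γ : ℂ) ^ 2) * Complex.I_sq
      rw [this]
      exact neg_ne_zero.mpr (mul_ne_zero h1 h2)
    simp only [Fin.val_zero, CharP.cast_eq_zero, neg_zero, zero_add, Fin.val_succ, sub_zero]
    push_cast
    have h5 : (1 + (γ : ℂ) ^ 2 / ((j : ℂ) + 1) ^ 2) = (((j : ℂ) + 1) ^ 2 + γ ^ 2) / ((j : ℂ) + 1) ^ 2 := by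
      field_simp
    rw [h5, one_div_div, add_sub_cancel_right, div_mul_div_comm, div_eq_div_iff (mul_ne_zero h1 h2) h4]
    linear_combination (-((j : ℂ) + 1) ^ 2 * (γ : ℂ) ^ 2) * Complex.I_sq

/-- Euler product partial products -/
def Pn (γ : ℝ) (n : ℕ) : ℝ := ∏ j ∈ Finset.range n, (1 + γ ^ 2 / (j + 1 : ℝ) ^ 2)

lemma Pn_pos (γ : ℝ) (n : ℕ) : 0 < Pn γ n := Finset.prod_pos fun j _ => by positivity

/-- Euler product limit -/
def sg (γ : ℝ) : ℝ := Real.sinh (Real.pi * γ) / (Real.pi * γ)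

lemma Pn_tendsto {γ : ℝ} (hγ : γ ≠ 0) : Tendsto (Pn γ) atTop (𝓝 (sg γ)) := by
  have hz : (γ * I : ℂ) ≠ 0 := mul_ne_zero (by exact_mod_cast hγ) Complex.I_ne_zero
  have h := tendsto_euler_sin_prod' hz
  have h2 := (Complex.continuous_re.tendsto _).comp h
  have e2 : (Complex.sin (Real.pi * (γ * I)) / (Real.pi * (γ * I))).re = sg γ := by
    rw [← mul_assoc, Complex.sin_mul_I, mul_div_mul_right _ _ Complex.I_ne_zero]
    unfold sg
    rw [← Complex.ofReal_re (Real.sinh (Real.pi * γ) / (Real.pi * γ))]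
    push_cast
    rfl
  rw [e2] at h2
  refine h2.congr fun n => ?_
  simp only [Function.comp]
  rw [← Complex.ofReal_re (Pn γ n)]
  congr 1
  unfold Pn
  push_cast
  refine Finset.prod_congr rfl fun j _ => ?_
  unfold sineTerm
  rw [mul_pow, Complex.I_sq]
  ring

end EE
end

noncomputable section
namespace EE
open scoped ComplexConjugate Matrix ComplexOrder
open Filter Topology MeasureTheory
open Complex (I)
set_option linter.unusedSectionVars false
variable {ι : Type} [DecidableEq ι]

lemma single_coef {τ : ι → ℝ} (hτ : ∀ i, 0 < τ i ∧ τ i < 2 * Real.pi) (η : ι → ℝ) (k : ι) (x : ℝ)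
    {γ : ℝ} (hγ : x * η k = Real.pi * γ) (h0 : γ ≠ 0) (n : ℤ) :
    fourierCoef (Asym τ η {k} x) n = (I * ((Real.sinh (Real.pi * γ) / Real.pi : ℝ) : ℂ)) *
      (Complex.exp (-I * n * τ k) * (1 / (n + γ * I))) := by
  have h := StepRep.single τ η k x
  have hg : x * η k / Real.pi = γ := by rw [hγ]; field_simp
  rw [hg] at h
  rw [h.coef hτ n (int_add_ne' n h0), Finset.sum_singleton, Jc, hγ, mul_div_assoc]
  have : Real.exp (-(γ * τ k)) * (2 * Real.sinh (Real.pi * γ)) * Real.exp (γ * τ k) / (2 * Real.pi) =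
      Real.sinh (Real.pi * γ) / Real.pi := by
    have h1 : Real.exp (-(γ * τ k)) * Real.exp (γ * τ k) = 1 := by rw [← Real.exp_add]; simp
    have hpi := Real.pi_ne_zero
    field_simp
    linear_combination h1
  rw [this]
  ring

lemma single_det {τ : ι → ℝ} (hτ : ∀ i, 0 < τ i ∧ τ i < 2 * Real.pi) (η : ι → ℝ) (k : ι) (x : ℝ)
    {γ : ℝ} (hγ : x * η k = Real.pi * γ) (h0 : γ ≠ 0) (N : ℕ) :
    ‖(toep (Asym τ η {k} x) N).det‖ = |Real.sinh (Real.pi * γ) / Real.pi| ^ N * ‖(CT γ N).det‖ := by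
  have e : toep (Asym τ η {k} x) N = (I * ((Real.sinh (Real.pi * γ) / Real.pi : ℝ) : ℂ)) •
      Matrix.of fun p q : Fin N => Complex.exp (I * ((-(p * τ k) : ℝ) : ℂ)) *
        (Matrix.of fun p q : Fin N => Complex.exp (I * ((q * τ k : ℝ) : ℂ)) * CT γ N p q) p q := by
    ext p q
    simp only [toep, Matrix.of_apply, Matrix.smul_apply, single_coef hτ η k x hγ h0, CT, smul_eq_mul]
    rw [← mul_assoc (Complex.exp _) (Complex.exp _), ← Complex.exp_add]
    congr 3
    push_cast
    ring
  rw [e, Matrix.det_smul, Matrix.det_mul_column, Matrix.det_mul_row, norm_mul, norm_mul, norm_mul,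
    norm_prod, norm_prod, norm_pow, norm_mul, Complex.norm_I, Complex.norm_real, Real.norm_eq_abs]
  simp only [exp_I_norm]
  simp

lemma sg_pos {γ : ℝ} (h0 : γ ≠ 0) : 0 < sg γ := by
  unfold sg
  rcases lt_or_gt_of_ne h0 with h | h
  · exact div_pos_of_neg_of_neg (Real.sinh_neg_iff.mpr (by nlinarith [Real.pi_pos]))
      (by nlinarith [Real.pi_pos])
  · exact div_pos (Real.sinh_pos_iff.mpr (by positivity)) (by positivity)

lemma single_rec {τ : ι → ℝ} (hτ : ∀ i, 0 < τ i ∧ τ i < 2 * Real.pi) (η : ι → ℝ) (k : ι) (x : ℝ)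
    {γ : ℝ} (hγ : x * η k = Real.pi * γ) (h0 : γ ≠ 0) (N : ℕ) :
    ‖(toep (Asym τ η {k} x) (N + 1)).det‖ = sg γ / Pn γ N * ‖(toep (Asym τ η {k} x) N).det‖ := by
  rw [single_det hτ η k x hγ h0, single_det hτ η k x hγ h0, CT_det_succ h0]
  have e1 : ∏ j ∈ Finset.range N, ((1 / (1 + γ ^ 2 / (j + 1 : ℝ) ^ 2) : ℝ) : ℂ) =
      (((Pn γ N)⁻¹ : ℝ) : ℂ) := by
    rw [Pn, ← Finset.prod_inv_distrib, Complex.ofReal_prod]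
    simp only [one_div]
  rw [e1, norm_mul, norm_mul, Complex.norm_real, Real.norm_eq_abs, abs_of_pos (inv_pos.mpr (Pn_pos γ N)),
    norm_div, norm_mul, Complex.norm_I, Complex.norm_real, Real.norm_eq_abs, norm_one, mul_one]
  have e2 : sg γ = |Real.sinh (Real.pi * γ) / Real.pi| * (1 / |γ|) := by
    rw [← abs_of_pos (sg_pos h0), sg, ← div_div, abs_div _ γ]
    ring
  rw [e2, pow_succ]
  ring

lemma single_pos {τ : ι → ℝ} (hτ : ∀ i, 0 < τ i ∧ τ i < 2 * Real.pi) (η : ι → ℝ) (k : ι) (x : ℝ)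
    {γ : ℝ} (hγ : x * η k = Real.pi * γ) (h0 : γ ≠ 0) (N : ℕ) :
    0 < ‖(toep (Asym τ η {k} x) N).det‖ := by
  induction N with
  | zero => simp
  | succ n ih =>
    rw [single_rec hτ η k x hγ h0]
    have := sg_pos h0
    have := Pn_pos γ n
    positivity

lemma single_LD {τ : ι → ℝ} (hτ : ∀ i, 0 < τ i ∧ τ i < 2 * Real.pi) (η : ι → ℝ) (k : ι) (x : ℝ)
    {γ : ℝ} (hγ : x * η k = Real.pi * γ) (h0 : γ ≠ 0) (N : ℕ) :
    LD (Asym τ η {k} x) (N + 1) = (Real.log (sg γ) - Real.log (Pn γ N)) + LD (Asym τ η {k} x) N := by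
  unfold LD
  rw [single_rec hτ η k x hγ h0, Real.log_mul, Real.log_div]
  · exact (sg_pos h0).ne'
  · exact (Pn_pos γ N).ne'
  · exact (div_pos (sg_pos h0) (Pn_pos γ N)).ne'
  · exact (single_pos hτ η k x hγ h0 N).ne'

lemma logPn_succ (γ : ℝ) (n : ℕ) : Real.log (Pn γ (n + 1)) =
    Real.log (Pn γ n) + Real.log (1 + γ ^ 2 / (n + 1 : ℝ) ^ 2) := by
  rw [Pn, Finset.prod_range_succ, ← Pn, Real.log_mul (Pn_pos γ n).ne' (by positivity)]

lemma logPn_upper (γ : ℝ) {N : ℕ} (hN : 1 ≤ N) (n : ℕ) :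
    Real.log (Pn γ (N + n)) - Real.log (Pn γ N) ≤ γ ^ 2 * (1 / (N : ℝ) - 1 / (N + n : ℝ)) := by
  have hN' : (1 : ℝ) ≤ N := by exact_mod_cast hN
  induction n with
  | zero => simp
  | succ n ih =>
    rw [← add_assoc, logPn_succ]
    have h1 : Real.log (1 + γ ^ 2 / ((N + n : ℕ) + 1 : ℝ) ^ 2) ≤ γ ^ 2 / ((N + n : ℕ) + 1 : ℝ) ^ 2 := by
      have := Real.log_le_sub_one_of_pos (x := 1 + γ ^ 2 / ((N + n : ℕ) + 1 : ℝ) ^ 2) (by positivity)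
      linarith
    have h2 : 1 / ((N + n : ℕ) + 1 : ℝ) ^ 2 ≤ 1 / (N + n : ℝ) - 1 / (N + n + 1 : ℝ) := by
      have hp : (0 : ℝ) < N + n := by positivity
      push_cast
      rw [div_sub_div _ _ hp.ne' (by positivity), div_le_div_iff₀ (by positivity) (by positivity)]
      nlinarith
    have h3 := mul_le_mul_of_nonneg_left h2 (sq_nonneg γ)
    rw [mul_one_div] at h3
    push_cast at *
    rw [← add_assoc]
    linarith

lemma logPn_lower (γ : ℝ) {N : ℕ} (hN : 1 ≤ N) (n : ℕ) :
    γ ^ 2 * (1 / (N + 1 : ℝ) - 1 / (N + n + 1 : ℝ)) -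
      γ ^ 4 / (N : ℝ) ^ 2 * (1 / (N : ℝ) - 1 / (N + n : ℝ)) ≤
    Real.log (Pn γ (N + n)) - Real.log (Pn γ N) := by
  have hN' : (1 : ℝ) ≤ N := by exact_mod_cast hN
  induction n with
  | zero => simp
  | succ n ih =>
    rw [← add_assoc, logPn_succ]
    set m : ℝ := N + n with hm
    have hp : (0 : ℝ) < m := by positivity
    have hmN : (N : ℝ) ≤ m := by rw [hm]; linarith [Nat.cast_nonneg (α := ℝ) n]
    set y : ℝ := γ ^ 2 / (m + 1) ^ 2 with hy
    have hy0 : 0 ≤ y := by positivity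
    have h1 : y - y ^ 2 ≤ Real.log (1 + y) := by
      have := Real.one_sub_inv_le_log_of_pos (x := 1 + y) (by positivity)
      refine le_trans ?_ this
      have : 1 - (1 + y)⁻¹ = y / (1 + y) := by field_simp; ring
      rw [this, le_div_iff₀ (by positivity)]
      nlinarith [pow_nonneg hy0 3]
    have h2 : γ ^ 2 * (1 / (m + 1) - 1 / (m + 1 + 1)) ≤ y := by
      rw [hy, ← mul_one_div (γ ^ 2)]
      apply mul_le_mul_of_nonneg_left _ (sq_nonneg γ)
      rw [div_sub_div _ _ (by positivity) (by positivity), div_le_div_iff₀ (by positivity) (by positivity)]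
      nlinarith
    have h3 : y ^ 2 ≤ γ ^ 4 / (N : ℝ) ^ 2 * (1 / m - 1 / (m + 1)) := by
      have e : y ^ 2 = γ ^ 4 / (m + 1) ^ 2 * (1 / (m + 1) ^ 2) := by rw [hy]; field_simp
      rw [e]
      apply mul_le_mul _ _ (by positivity) (by positivity)
      · gcongr
        linarith
      · rw [div_sub_div _ _ hp.ne' (by positivity), div_le_div_iff₀ (by positivity) (by positivity)]
        nlinarith
    have e4 : ((N + n : ℕ) : ℝ) = m := by rw [hm]; push_cast; ring
    have e5 : (N : ℝ) + ((n + 1 : ℕ) : ℝ) = m + 1 := by rw [hm]; push_cast; ring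
    rw [e4, e5]
    linarith

lemma g_upper {γ : ℝ} (h0 : γ ≠ 0) {N : ℕ} (hN : 1 ≤ N) :
    Real.log (sg γ) - Real.log (Pn γ N) ≤ γ ^ 2 / N := by
  have ht : Tendsto (fun n => Real.log (Pn γ (N + n)) - Real.log (Pn γ N)) atTop
      (𝓝 (Real.log (sg γ) - Real.log (Pn γ N))) := by
    refine Tendsto.sub_const ?_ _
    refine ((Real.continuousAt_log (sg_pos h0).ne').tendsto.comp (Pn_tendsto h0)).comp ?_
    exact tendsto_atTop_mono (fun n => Nat.le_add_left n N) tendsto_id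
  refine le_of_tendsto ht (Eventually.of_forall fun n => (logPn_upper γ hN n).trans ?_)
  rw [← mul_one_div (γ ^ 2)]
  gcongr
  have : 0 ≤ 1 / ((N : ℝ) + n) := by positivity
  linarith

lemma g_lower {γ : ℝ} (h0 : γ ≠ 0) {N : ℕ} (hN : 1 ≤ N) :
    γ ^ 2 / (N + 1 : ℝ) - γ ^ 4 / (N : ℝ) ^ 2 ≤ Real.log (sg γ) - Real.log (Pn γ N) := by
  have hN' : (1 : ℝ) ≤ N := by exact_mod_cast hN
  have ht : Tendsto (fun n => Real.log (Pn γ (N + n)) - Real.log (Pn γ N)) atTop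
      (𝓝 (Real.log (sg γ) - Real.log (Pn γ N))) := by
    refine Tendsto.sub_const ?_ _
    refine ((Real.continuousAt_log (sg_pos h0).ne').tendsto.comp (Pn_tendsto h0)).comp ?_
    exact tendsto_atTop_mono (fun n => Nat.le_add_left n N) tendsto_id
  have t0 : Tendsto (fun n : ℕ => 1 / ((N : ℝ) + n + 1)) atTop (𝓝 0) := by
    have := (tendsto_one_div_add_atTop_nhds_zero_nat (𝕜 := ℝ)).comp (tendsto_add_atTop_nat N)
    refine this.congr fun n => ?_
    simp only [Function.comp]
    push_cast
    congr 1
    ring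
  have tl : Tendsto (fun n : ℕ => γ ^ 2 * (1 / (N + 1 : ℝ) - 1 / (N + n + 1 : ℝ)) -
      γ ^ 4 / (N : ℝ) ^ 2 * 1) atTop (𝓝 (γ ^ 2 * (1 / (N + 1 : ℝ) - 0) -
      γ ^ 4 / (N : ℝ) ^ 2 * 1)) := ((t0.const_sub _).const_mul _).sub_const _
  have := le_of_tendsto_of_tendsto' tl ht fun n => le_trans ?_ (logPn_lower γ hN n)
  · rwa [sub_zero, mul_one_div, mul_one] at this
  · have h1 : 1 / (N : ℝ) - 1 / ((N : ℝ) + n) ≤ 1 := by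
      have : 0 ≤ 1 / ((N : ℝ) + n) := by positivity
      have : 1 / (N : ℝ) ≤ 1 := by rw [div_le_one (by positivity)]; exact hN'
      linarith
    have := mul_le_mul_of_nonneg_left h1 (show 0 ≤ γ ^ 4 / (N : ℝ) ^ 2 by positivity)
    linarith

lemma log_ratio_bounds {N : ℕ} (hN : 1 ≤ N) : 1 / (N + 1 : ℝ) ≤ Real.log (N + 1 : ℝ) - Real.log N ∧
    Real.log (N + 1 : ℝ) - Real.log N ≤ 1 / (N : ℝ) := by
  have hN' : (1 : ℝ) ≤ N := by exact_mod_cast hN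
  have hp : (0 : ℝ) < N := by positivity
  rw [← Real.log_div (by positivity) hp.ne']
  constructor
  · have := Real.one_sub_inv_le_log_of_pos (x := (N + 1 : ℝ) / N) (by positivity)
    refine le_trans (le_of_eq ?_) this
    field_simp
    ring
  · have := Real.log_le_sub_one_of_pos (x := (N + 1 : ℝ) / N) (by positivity)
    refine this.trans (le_of_eq ?_)
    field_simp
    ring

lemma g_err {γ : ℝ} (h0 : γ ≠ 0) {N : ℕ} (hN : 1 ≤ N) :
    |Real.log (sg γ) - Real.log (Pn γ N) - γ ^ 2 * (Real.log (N + 1 : ℝ) - Real.log N)| ≤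
      (γ ^ 2 + γ ^ 4) * (1 / (N : ℝ) ^ 2) := by
  have hN' : (1 : ℝ) ≤ N := by exact_mod_cast hN
  have hp : (0 : ℝ) < N := by positivity
  have h1 := g_upper h0 hN
  have h2 := g_lower h0 hN
  obtain ⟨h3, h4⟩ := log_ratio_bounds hN
  have h5 := mul_le_mul_of_nonneg_left h3 (sq_nonneg γ)
  have h6 := mul_le_mul_of_nonneg_left h4 (sq_nonneg γ)
  have h7 : 1 / (N : ℝ) - 1 / (N + 1 : ℝ) ≤ 1 / (N : ℝ) ^ 2 := by
    rw [div_sub_div _ _ hp.ne' (by positivity), div_le_div_iff₀ (by positivity) (by positivity)]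
    nlinarith
  have h8 := mul_le_mul_of_nonneg_left h7 (sq_nonneg γ)
  have h9 : 0 ≤ γ ^ 4 * (1 / (N : ℝ) ^ 2) := by positivity
  rw [← mul_one_div (γ ^ 2), ← mul_one_div (γ ^ 4)] at h2
  rw [← mul_one_div (γ ^ 2)] at h1
  rw [abs_le]
  constructor <;> linarith

lemma summable_inv_sq : Summable (fun n : ℕ => 1 / ((n + 1 : ℕ) : ℝ) ^ 2) :=
  (summable_nat_add_iff 1).mpr (Real.summable_one_div_nat_pow.mpr one_lt_two)

/-- constant -/
def Z2 : ℝ := ∑' n : ℕ, 1 / ((n + 1 : ℕ) : ℝ) ^ 2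

theorem single_asym {τ : ι → ℝ} (hτ : ∀ i, 0 < τ i ∧ τ i < 2 * Real.pi) (η : ι → ℝ) (k : ι) (x : ℝ)
    {γ : ℝ} (hγ : x * η k = Real.pi * γ) :
    (∃ L, Tendsto (fun N : ℕ => LD (Asym τ η {k} x) N - γ ^ 2 * Real.log N) atTop (𝓝 L)) ∧
    ∀ N : ℕ, |LD (Asym τ η {k} x) N - γ ^ 2 * Real.log N| ≤ (2 + Z2) * (γ ^ 2 + γ ^ 4) := by
  have hZ2 : 0 ≤ Z2 := tsum_nonneg fun n => by positivity
  by_cases h0 : γ = 0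
  · subst h0
    have h : ∀ N, LD (Asym τ η {k} x) N = 0 := by
      intro N
      have : Asym τ η {k} x = fun _ => 1 := by
        funext θ
        rw [Asym_single, hγ]
        simp
      rw [LD, this, toep_one]
      simp
    exact ⟨⟨0, by simp [h]⟩, fun N => by simp [h]⟩
  set h : ℕ → ℝ := fun N => LD (Asym τ η {k} x) (N + 1) - γ ^ 2 * Real.log ((N + 1 : ℕ) : ℝ) with hh
  have hd : ∀ N, |h (N + 1) - h N| ≤ (γ ^ 2 + γ ^ 4) * (1 / ((N + 1 : ℕ) : ℝ) ^ 2) := by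
    intro N
    have := g_err h0 (N := N + 1) (by omega)
    refine le_trans (le_of_eq ?_) this
    congr 1
    rw [hh]
    simp only []
    rw [single_LD hτ η k x hγ h0 (N + 1)]
    push_cast
    ring
  have hsum : Summable (fun N : ℕ => (γ ^ 2 + γ ^ 4) * (1 / ((N + 1 : ℕ) : ℝ) ^ 2)) :=
    summable_inv_sq.mul_left _
  have hs2 : Summable (fun N => h (N + 1) - h N) :=
    Summable.of_norm_bounded hsum fun N => by rw [Real.norm_eq_abs]; exact hd N
  have htel : ∀ n, h n = h 0 + ∑ i ∈ Finset.range n, (h (i + 1) - h i) := by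
    intro n
    rw [Finset.sum_range_sub]
    ring
  constructor
  · refine ⟨h 0 + ∑' i, (h (i + 1) - h i), ?_⟩
    rw [← tendsto_add_atTop_iff_nat 1]
    have := hs2.hasSum.tendsto_sum_nat.const_add (h 0)
    refine this.congr fun n => ?_
    rw [← htel]
  · have hLD0 : LD (Asym τ η {k} x) 0 = 0 := by simp [LD]
    have hb0 : |h 0| ≤ 2 * (γ ^ 2 + γ ^ 4) := by
      have e : h 0 = Real.log (sg γ) - Real.log (Pn γ 0) := by
        rw [hh]
        simp only []
        rw [single_LD hτ η k x hγ h0 0, hLD0]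
        simp
      have e1 := logPn_succ γ 0
      have u1 := g_upper h0 (N := 1) le_rfl
      have l1 := g_lower h0 (N := 1) le_rfl
      have e2 : Real.log (1 + γ ^ 2 / ((0 : ℕ) + 1 : ℝ) ^ 2) ≤ γ ^ 2 := by
        have := Real.log_le_sub_one_of_pos (x := 1 + γ ^ 2 / ((0 : ℕ) + 1 : ℝ) ^ 2) (by positivity)
        refine this.trans (le_of_eq ?_)
        simp
      have e3 : 0 ≤ Real.log (1 + γ ^ 2 / ((0 : ℕ) + 1 : ℝ) ^ 2) := by
        apply Real.log_nonneg
        have : 0 ≤ γ ^ 2 / ((0 : ℕ) + 1 : ℝ) ^ 2 := by positivity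
        linarith
      rw [zero_add] at e1
      have q1 : 0 ≤ γ ^ 2 := by positivity
      have q2 : 0 ≤ γ ^ 4 := by positivity
      rw [e, abs_le]
      norm_num at u1 l1
      constructor <;> linarith
    intro N
    rcases N with _ | n
    · rw [hLD0]
      simp
      positivity
    · show |h n| ≤ _
      rw [htel n]
      refine (abs_add_le _ _).trans ?_
      have : |∑ i ∈ Finset.range n, (h (i + 1) - h i)| ≤ Z2 * (γ ^ 2 + γ ^ 4) := by
        refine (Finset.abs_sum_le_sum_abs _ _).trans ((Finset.sum_le_sum fun i _ => hd i).trans ?_)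
        refine (hsum.sum_le_tsum _ fun i _ => by positivity).trans (le_of_eq ?_)
        rw [tsum_mul_left, Z2, mul_comm]
      linarith

theorem single_dom {τ : ι → ℝ} (hτ : ∀ i, 0 < τ i ∧ τ i < 2 * Real.pi) (η : ι → ℝ) (k : ι) :
    ∃ K : ℝ, 0 ≤ K ∧ ∀ x : ℝ,
    (∃ L, Tendsto (fun N : ℕ => LD (Asym τ η {k} x) N - (x * η k / Real.pi) ^ 2 * Real.log N) atTop (𝓝 L)) ∧
    ∀ N : ℕ, |LD (Asym τ η {k} x) N - (x * η k / Real.pi) ^ 2 * Real.log N| ≤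
      K * (x ^ 2 * Real.exp |x|) := by
  have hZ2 : 0 ≤ Z2 := tsum_nonneg fun n => by positivity
  have hpi : 1 ≤ Real.pi := by linarith [Real.pi_gt_three]
  refine ⟨(2 + Z2) * (η k ^ 2 + 2 * η k ^ 4), by positivity, fun x => ?_⟩
  obtain ⟨h1, h2⟩ := single_asym hτ η k x (γ := x * η k / Real.pi) (by field_simp)
  refine ⟨h1, fun N => (h2 N).trans ?_⟩
  rw [mul_assoc]
  gcongr
  have hle : (x * η k / Real.pi) ^ 2 ≤ (x * η k) ^ 2 := by
    rw [div_pow]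
    apply div_le_self (sq_nonneg _)
    exact one_le_pow₀ hpi
  have hle4 : (x * η k / Real.pi) ^ 4 ≤ (x * η k) ^ 4 := by
    have := pow_le_pow_left₀ (sq_nonneg _) hle 2
    rwa [← pow_mul, ← pow_mul] at this
  have he1 : 1 ≤ Real.exp |x| := Real.one_le_exp (abs_nonneg x)
  have he2 : x ^ 2 ≤ 2 * Real.exp |x| := by
    have := Real.quadratic_le_exp_of_nonneg (abs_nonneg x)
    rw [sq_abs] at this
    linarith [abs_nonneg x]
  calc _ ≤ (x * η k) ^ 2 + (x * η k) ^ 4 := by gcongr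
    _ = η k ^ 2 * (x ^ 2 * 1) + η k ^ 4 * (x ^ 2 * x ^ 2) := by ring
    _ ≤ η k ^ 2 * (x ^ 2 * Real.exp |x|) + η k ^ 4 * (x ^ 2 * (2 * Real.exp |x|)) := by gcongr
    _ = _ := by ring

theorem total_dom {τ : ι → ℝ} (hτ : ∀ i, 0 < τ i ∧ τ i < 2 * Real.pi) (hinj : Function.Injective τ)
    (η : ι → ℝ) (s : Finset ι) : ∃ K : ℝ, 0 ≤ K ∧ ∀ x : ℝ,
      (∃ L, Tendsto (fun N : ℕ => LD (Asym τ η s x) N -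
        (∑ i ∈ s, (x * η i / Real.pi) ^ 2) * Real.log N) atTop (𝓝 L)) ∧
      ∀ N : ℕ, |LD (Asym τ η s x) N - (∑ i ∈ s, (x * η i / Real.pi) ^ 2) * Real.log N| ≤
        K * (x ^ 2 * Real.exp |x|) := by
  obtain ⟨K1, hK1, h1⟩ := all_conv hτ hinj η s
  choose K2 hK2 h2 using fun k => single_dom hτ η k
  have key : ∀ (x : ℝ) (N : ℕ), LD (Asym τ η s x) N - (∑ i ∈ s, (x * η i / Real.pi) ^ 2) * Real.log N =
      (LD (Asym τ η s x) N - ∑ i ∈ s, LD (Asym τ η {i} x) N) +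
      ∑ i ∈ s, (LD (Asym τ η {i} x) N - (x * η i / Real.pi) ^ 2 * Real.log N) := by
    intro x N
    rw [Finset.sum_sub_distrib, Finset.sum_mul]
    ring
  refine ⟨K1 + ∑ i ∈ s, K2 i, add_nonneg hK1 (Finset.sum_nonneg fun i _ => hK2 i), fun x => ?_⟩
  simp only [key]
  constructor
  · obtain ⟨L, hL⟩ := (h1 x).1
    choose M hM using fun i => (h2 i x).1
    exact ⟨_, hL.add (tendsto_finsetSum s fun i _ => hM i)⟩
  · intro N
    refine (abs_add_le _ _).trans ?_
    rw [add_mul, Finset.sum_mul]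
    refine add_le_add ((h1 x).2 N) ((Finset.abs_sum_le_sum_abs _ _).trans
      (Finset.sum_le_sum fun i _ => (h2 i x).2 N))

end EE
end

noncomputable section
namespace EE
open Filter Topology MeasureTheory Set

lemma csq_pos {ν : ℝ} (h : |ν| ≤ 1) (x : ℝ) : 0 < Real.cosh x + ν * Real.sinh x := by
  rw [abs_le] at h
  rw [Real.cosh_eq, Real.sinh_eq]
  have h1 := Real.exp_pos x
  have h2 := Real.exp_pos (-x)
  rcases eq_or_lt_of_le h.1 with h3 | h3
  · rw [← h3]; ring_nf; positivity
  · nlinarith [mul_pos (show 0 < 1 + ν by linarith) h1, mul_nonneg (show 0 ≤ 1 - ν by linarith) h2.le]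

lemma csq_pos' {ν : ℝ} (h : |ν| ≤ 1) (x : ℝ) : 0 < Real.cosh x - ν * Real.sinh x := by
  have := csq_pos (ν := -ν) (by rwa [abs_neg]) x
  linarith

/-- explicit antiderivative -/
def GG (ν x : ℝ) : ℝ := -(Real.cosh x / Real.sinh x) *
    (Real.log (Real.cosh x + ν * Real.sinh x) + Real.log (Real.cosh x - ν * Real.sinh x)) + 2 * x
    - ν * (Real.log (Real.cosh x + ν * Real.sinh x) - Real.log (Real.cosh x - ν * Real.sinh x))

/-- the integrand -/
def gg (ν x : ℝ) : ℝ := (Real.log (Real.cosh x + ν * Real.sinh x) +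
    Real.log (Real.cosh x - ν * Real.sinh x)) / Real.sinh x ^ 2

lemma GG_deriv {ν : ℝ} (h : |ν| ≤ 1) {x : ℝ} (hx : 0 < x) : HasDerivAt (GG ν) (gg ν x) x := by
  have hs : Real.sinh x ≠ 0 := (Real.sinh_pos_iff.2 hx).ne'
  have p1 := (csq_pos h x).ne'
  have p2 := (csq_pos' h x).ne'
  have dc := Real.hasDerivAt_cosh x
  have ds := Real.hasDerivAt_sinh x
  have l1 := (dc.add (ds.const_mul ν)).log p1
  have l2 := (dc.sub (ds.const_mul ν)).log p2
  have := (((dc.div ds hs).neg.mul (l1.add l2)).add ((hasDerivAt_id x).const_mul 2)).sub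
    ((l1.sub l2).const_mul ν)
  refine this.congr_deriv ?_
  unfold gg
  clear this l1 l2 dc ds
  have hc : Real.cosh x ^ 2 = 1 + Real.sinh x ^ 2 := by rw [Real.cosh_sq]; ring
  simp only [Pi.add_apply, Pi.sub_apply, Pi.neg_apply, Pi.div_apply]
  generalize Real.log (Real.cosh x + ν * Real.sinh x) = A at *
  generalize Real.log (Real.cosh x - ν * Real.sinh x) = B at *
  generalize Real.cosh x = c at *
  generalize Real.sinh x = s at *
  have hP : (s + ν * c) / (c + ν * s) * (c + ν * s) = s + ν * c := div_mul_cancel₀ _ p1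
  have hQ : (s - ν * c) / (c - ν * s) * (c - ν * s) = s - ν * c := div_mul_cancel₀ _ p2
  generalize (s + ν * c) / (c + ν * s) = P at *
  generalize (s - ν * c) / (c - ν * s) = Q at *
  field_simp
  linear_combination (A + B) * hc - s * hP - s * hQ

lemma GG_zero {ν : ℝ} (h : |ν| ≤ 1) : Tendsto (GG ν) (𝓝[>] 0) (𝓝 0) := by
  have q1 : ContinuousAt (fun x : ℝ => Real.log (Real.cosh x + ν * Real.sinh x)) 0 :=
    ContinuousAt.log (by fun_prop) (csq_pos h 0).ne'
  have q2 : ContinuousAt (fun x : ℝ => Real.log (Real.cosh x - ν * Real.sinh x)) 0 :=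
    ContinuousAt.log (by fun_prop) (csq_pos' h 0).ne'
  have t1 : Tendsto (fun x : ℝ => 2 * x - ν * (Real.log (Real.cosh x + ν * Real.sinh x) -
      Real.log (Real.cosh x - ν * Real.sinh x))) (𝓝[>] 0) (𝓝 0) := by
    have : ContinuousAt (fun x : ℝ => 2 * x - ν * (Real.log (Real.cosh x + ν * Real.sinh x) -
      Real.log (Real.cosh x - ν * Real.sinh x))) 0 :=
      ContinuousAt.sub (by fun_prop) (continuousAt_const.mul (q1.sub q2))
    have := this.tendsto
    simp at this
    exact this.mono_left nhdsWithin_le_nhds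
  have t2 : Tendsto (fun x : ℝ => (Real.cosh x / Real.sinh x) *
    (Real.log (Real.cosh x + ν * Real.sinh x) + Real.log (Real.cosh x - ν * Real.sinh x)))
      (𝓝[>] 0) (𝓝 0) := by
    have t3 : Tendsto (fun x : ℝ => Real.cosh x * Real.sinh x) (𝓝[>] 0) (𝓝 0) := by
      have : ContinuousAt (fun x : ℝ => Real.cosh x * Real.sinh x) 0 := by fun_prop
      have := this.tendsto
      simp at this
      exact this.mono_left nhdsWithin_le_nhds
    refine tendsto_of_tendsto_of_tendsto_of_le_of_le' tendsto_const_nhds t3 ?_ ?_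
    · filter_upwards [self_mem_nhdsWithin] with x hx
      have hs := Real.sinh_pos_iff.2 hx
      rw [← Real.log_mul (csq_pos h x).ne' (csq_pos' h x).ne']
      refine mul_nonneg (div_nonneg (Real.cosh_pos x).le hs.le) (Real.log_nonneg ?_)
      have hv : ν ^ 2 ≤ 1 := by rw [sq_le_one_iff_abs_le_one]; exact h
      nlinarith [Real.cosh_sq x, mul_nonneg (sub_nonneg.2 hv) (sq_nonneg (Real.sinh x))]
    · filter_upwards [self_mem_nhdsWithin] with x hx
      have hs := Real.sinh_pos_iff.2 hx
      rw [← Real.log_mul (csq_pos h x).ne' (csq_pos' h x).ne']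
      have := Real.log_le_sub_one_of_pos (mul_pos (csq_pos h x) (csq_pos' h x))
      have h2 : (Real.cosh x + ν * Real.sinh x) * (Real.cosh x - ν * Real.sinh x) - 1 ≤ Real.sinh x ^ 2 := by
        nlinarith [Real.cosh_sq x, sq_nonneg (ν * Real.sinh x)]
      calc _ ≤ Real.cosh x / Real.sinh x * Real.sinh x ^ 2 :=
            mul_le_mul_of_nonneg_left (this.trans h2) (div_nonneg (Real.cosh_pos x).le hs.le)
        _ = _ := by field_simp
  have := t1.sub t2
  simp only [sub_zero] at this
  refine this.congr fun x => ?_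
  unfold GG; ring

lemma gg_nonneg {ν : ℝ} (h : |ν| ≤ 1) (x : ℝ) : 0 ≤ gg ν x := by
  unfold gg
  rw [← Real.log_mul (csq_pos h x).ne' (csq_pos' h x).ne']
  refine div_nonneg (Real.log_nonneg ?_) (sq_nonneg _)
  have hv : ν ^ 2 ≤ 1 := by rw [sq_le_one_iff_abs_le_one]; exact h
  nlinarith [Real.cosh_sq x, mul_nonneg (sub_nonneg.2 hv) (sq_nonneg (Real.sinh x))]

lemma log_split {ν : ℝ} (h : |ν| < 1) (x : ℝ) : Real.log (Real.cosh x + ν * Real.sinh x) =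
    x - Real.log 2 + Real.log (1 + ν + (1 - ν) * Real.exp (-(2 * x))) := by
  have h' := abs_lt.1 h
  have hp : 0 < 1 + ν + (1 - ν) * Real.exp (-(2 * x)) := by
    have := Real.exp_pos (-(2 * x))
    have : 0 < (1 - ν) * Real.exp (-(2 * x)) := mul_pos (by linarith) this
    linarith
  have : Real.cosh x + ν * Real.sinh x = Real.exp x / 2 * (1 + ν + (1 - ν) * Real.exp (-(2 * x))) := by
    have e : Real.exp x * Real.exp (-(2 * x)) = Real.exp (-x) := by rw [← Real.exp_add]; congr 1; ring
    rw [Real.cosh_eq, Real.sinh_eq]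
    linear_combination (-(1 - ν) / 2) * e
  rw [this, Real.log_mul (by positivity) hp.ne', Real.log_div (by positivity) (by norm_num), Real.log_exp]

lemma GG_top {ν : ℝ} (h : |ν| < 1) : Tendsto (GG ν) atTop
    (𝓝 (2 * Real.log 2 - (1 + ν) * Real.log (1 + ν) - (1 - ν) * Real.log (1 - ν))) := by
  have h' := abs_lt.1 h
  have q0 : Tendsto (fun x : ℝ => Real.exp (-(2 * x))) atTop (𝓝 0) := by
    refine Real.tendsto_exp_neg_atTop_nhds_zero.comp ?_
    exact tendsto_id.const_mul_atTop (by norm_num)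
  have xq : Tendsto (fun x : ℝ => x * Real.exp (-(2 * x))) atTop (𝓝 0) := by
    have h1 := Real.tendsto_pow_mul_exp_neg_atTop_nhds_zero 1
    have h2 := h1.mul Real.tendsto_exp_neg_atTop_nhds_zero
    simp only [mul_zero] at h2
    refine h2.congr fun x => ?_
    rw [mul_assoc, ← Real.exp_add, pow_one]; congr 2; ring
  have l1 : Tendsto (fun x : ℝ => Real.log (1 + ν + (1 - ν) * Real.exp (-(2 * x)))) atTop
      (𝓝 (Real.log (1 + ν))) := by
    have := (q0.const_mul (1 - ν)).const_add (1 + ν)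
    rw [mul_zero, add_zero] at this
    exact this.log (by linarith)
  have l2 : Tendsto (fun x : ℝ => Real.log (1 - ν + (1 + ν) * Real.exp (-(2 * x)))) atTop
      (𝓝 (Real.log (1 - ν))) := by
    have := (q0.const_mul (1 + ν)).const_add (1 - ν)
    rw [mul_zero, add_zero] at this
    exact this.log (by linarith)
  have inv : Tendsto (fun x : ℝ => 2 / (1 - Real.exp (-(2 * x)))) atTop (𝓝 2) := by
    have := (tendsto_const_nhds (x := (2:ℝ))).div (q0.const_sub 1) (by norm_num)
    simp only [sub_zero, div_one] at this
    exact this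
  have B := ((l1.add l2).sub_const (2 * Real.log 2))
  have := (B.neg.sub (inv.mul ((xq.const_mul 2).add (q0.mul B)))).sub ((l1.sub l2).const_mul ν)
  have e : -(Real.log (1 + ν) + Real.log (1 - ν) - 2 * Real.log 2) -
      2 * (2 * 0 + 0 * (Real.log (1 + ν) + Real.log (1 - ν) - 2 * Real.log 2)) -
      ν * (Real.log (1 + ν) - Real.log (1 - ν)) =
      2 * Real.log 2 - (1 + ν) * Real.log (1 + ν) - (1 - ν) * Real.log (1 - ν) := by ring
  rw [e] at this
  refine this.congr' ?_
  filter_upwards [eventually_gt_atTop 0] with x hx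
  have s1 := log_split h x
  have s2 := log_split (ν := -ν) (by rwa [abs_neg]) x
  rw [neg_mul, ← sub_eq_add_neg, ← sub_eq_add_neg, sub_neg_eq_add] at s2
  unfold GG
  rw [s1, s2]
  have hq : Real.exp (-(2 * x)) < 1 := by rw [Real.exp_lt_one_iff]; linarith
  have hc : Real.cosh x / Real.sinh x = (1 + Real.exp (-(2 * x))) / (1 - Real.exp (-(2 * x))) := by
    have hs := Real.sinh_pos_iff.2 hx
    rw [div_eq_div_iff hs.ne' (by linarith)]
    have e : Real.exp x * Real.exp (-(2 * x)) = Real.exp (-x) := by rw [← Real.exp_add]; congr 1; ring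
    rw [Real.cosh_eq, Real.sinh_eq]
    linear_combination (-1) * e
  rw [hc]
  have : 1 - Real.exp (-(2 * x)) ≠ 0 := by linarith
  field_simp
  ring

lemma entBin_log {ν : ℝ} (h : |ν| < 1) : 2 * Real.log 2 * entBin ν =
    2 * Real.log 2 - (1 + ν) * Real.log (1 + ν) - (1 - ν) * Real.log (1 - ν) := by
  have h' := abs_lt.1 h
  unfold entBin Real.logb
  have : Real.log 2 ≠ 0 := (Real.log_pos (by norm_num)).ne'
  rw [Real.log_div (by linarith) (by norm_num), Real.log_div (by linarith) (by norm_num)]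
  field_simp
  ring

lemma ent_integral {ν : ℝ} (h : |ν| ≤ 1) : IntegrableOn (gg ν) (Ioi 0) ∧
    ∫ x in Ioi (0 : ℝ), gg ν x = 2 * Real.log 2 * entBin ν := by
  rcases lt_or_eq_of_le h with h1 | h1
  · have g0 : GG ν 0 = 0 := by simp [GG]
    have hc : ContinuousWithinAt (GG ν) (Ici 0) 0 := by
      rw [← Set.Ioi_insert, continuousWithinAt_insert_self, ContinuousWithinAt, g0]
      exact GG_zero h
    refine ⟨integrableOn_Ioi_deriv_of_nonneg hc (fun x hx => GG_deriv h hx)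
        (fun x _ => gg_nonneg h x) (GG_top h1), ?_⟩
    rw [integral_Ioi_of_hasDerivAt_of_nonneg hc (fun x hx => GG_deriv h hx)
        (fun x _ => gg_nonneg h x) (GG_top h1), entBin_log h1, g0, sub_zero]
  · have hz : ∀ x, gg ν x = 0 := by
      intro x
      unfold gg
      rw [← Real.log_mul (csq_pos h x).ne' (csq_pos' h x).ne']
      have : (Real.cosh x + ν * Real.sinh x) * (Real.cosh x - ν * Real.sinh x) = 1 := by
        have hv : ν ^ 2 = 1 := by rw [← sq_abs, h1]; norm_num
        linear_combination (-Real.sinh x ^ 2) * hv + Real.cosh_sq x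
      rw [this]; simp
    have hz' : gg ν = fun _ => 0 := funext hz
    rw [hz']
    refine ⟨integrableOn_zero, ?_⟩
    rw [integral_zero]
    rcases (abs_eq (by norm_num)).1 h1 with h2 | h2 <;> simp [h2, entBin]

lemma exp_bound {x : ℝ} (hx : 0 < x) : x ^ 2 * Real.exp |x| / Real.sinh x ^ 2 ≤ 64 * Real.exp (-(1/2) * x) := by
  have hs := Real.sinh_pos_iff.2 hx
  have h1 : x * Real.exp x ≤ Real.sinh x * (8 * Real.exp (x / 4)) := by
    have h2 : 1 + 2 * x ≤ 8 * Real.exp (x / 4) := by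
      have := Real.add_one_le_exp (x / 4); linarith
    refine le_trans ?_ (mul_le_mul_of_nonneg_left h2 hs.le)
    rw [Real.sinh_eq]
    have e : Real.exp (-x) = Real.exp x * Real.exp (-(2 * x)) := by rw [← Real.exp_add]; congr 1; ring
    have h3 : Real.exp (-(2 * x)) * (1 + 2 * x) ≤ 1 := by
      have := Real.add_one_le_exp (2 * x)
      calc _ ≤ Real.exp (-(2 * x)) * Real.exp (2 * x) :=
            mul_le_mul_of_nonneg_left (by linarith) (Real.exp_pos _).le
        _ = 1 := by rw [← Real.exp_add]; simp
    rw [e]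
    nlinarith [mul_le_mul_of_nonneg_left h3 (Real.exp_pos x).le]
  rw [abs_of_pos hx, div_le_iff₀ (by positivity)]
  have h2 := pow_le_pow_left₀ (by positivity) h1 2
  have e1 : Real.exp (x / 4) ^ 2 = Real.exp (x / 2) := by rw [← Real.exp_nat_mul]; congr 1; push_cast; ring
  have e2 : Real.exp (x/2) * Real.exp (-(1/2) * x) = 1 := by rw [← Real.exp_add]; ring_nf; simp
  have e3 : Real.exp x * Real.exp (-x) = 1 := by rw [← Real.exp_add]; simp
  have e4 : Real.exp (x/2) * Real.exp (-x) = Real.exp (-(1/2) * x) := by rw [← Real.exp_add]; congr 1; ring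
  rw [mul_pow, mul_pow, mul_pow, e1] at h2
  have h3 := mul_le_mul_of_nonneg_right h2 (Real.exp_pos (-x)).le
  have l : x ^ 2 * Real.exp x ^ 2 * Real.exp (-x) = x ^ 2 * Real.exp x := by
    linear_combination (x ^ 2 * Real.exp x) * e3
  have r : Real.sinh x ^ 2 * (8 ^ 2 * Real.exp (x / 2)) * Real.exp (-x) =
    64 * Real.exp (-(1 / 2) * x) * Real.sinh x ^ 2 := by
    linear_combination 64 * Real.sinh x ^ 2 * e4
  rw [l, r] at h3
  exact h3

lemma exp_bound_int : IntegrableOn (fun x : ℝ => x ^ 2 * Real.exp |x| / Real.sinh x ^ 2) (Ioi 0) := by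
  have h := (integrableOn_exp_mul_Ioi (a := -(1/2)) (by norm_num) 0).const_mul 64
  refine Integrable.mono' h ?_ ?_
  · refine Measurable.aestronglyMeasurable ?_
    fun_prop
  · filter_upwards [ae_restrict_mem measurableSet_Ioi] with x hx
    rw [Real.norm_of_nonneg (by positivity)]
    exact exp_bound hx

lemma sq_int : IntegrableOn (fun x : ℝ => x ^ 2 / Real.sinh x ^ 2) (Ioi 0) := by
  refine Integrable.mono' exp_bound_int ?_ ?_
  · refine Measurable.aestronglyMeasurable ?_
    fun_prop
  · filter_upwards [ae_restrict_mem measurableSet_Ioi] with x hx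
    rw [Real.norm_of_nonneg (by positivity)]
    gcongr
    exact le_mul_of_one_le_right (sq_nonneg x) (Real.one_le_exp (abs_nonneg x))

lemma sq_series {x : ℝ} (hx : 0 < x) : HasSum (fun n : ℕ => 4 * (n : ℝ) * (x ^ 2 * Real.exp (-(2 * n * x))))
    (x ^ 2 / Real.sinh x ^ 2) := by
  have hq : Real.exp (-(2 * x)) < 1 := by rw [Real.exp_lt_one_iff]; linarith
  have h := (hasSum_coe_mul_geometric_of_norm_lt_one (r := Real.exp (-(2 * x)))
    (by rw [Real.norm_of_nonneg (Real.exp_pos _).le]; exact hq)).mul_left (4 * x ^ 2)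
  have a1 : (fun n : ℕ => 4 * (n : ℝ) * (x ^ 2 * Real.exp (-(2 * n * x)))) =
      fun i : ℕ => 4 * x ^ 2 * (↑i * Real.exp (-(2 * x)) ^ i) := by
    funext n
    have : Real.exp (-(2 * n * x)) = Real.exp (-(2 * x)) ^ n := by
      rw [← Real.exp_nat_mul]; congr 1; ring
    rw [this]; ring
  have a2 : x ^ 2 / Real.sinh x ^ 2 = 4 * x ^ 2 * (Real.exp (-(2 * x)) / (1 - Real.exp (-(2 * x))) ^ 2) := by
    have hs := Real.sinh_pos_iff.2 hx
    have : 1 - Real.exp (-(2 * x)) ≠ 0 := by linarith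
    have e : Real.exp x * Real.exp (-x) = 1 := by rw [← Real.exp_add]; simp
    have e2 : Real.exp (-(2 * x)) = Real.exp (-x) ^ 2 := by rw [← Real.exp_nat_mul]; congr 1; ring
    have : Real.sinh x ^ 2 * (4 * Real.exp (-(2*x))) = (1 - Real.exp (-(2*x))) ^ 2 := by
      rw [e2, Real.sinh_eq]
      generalize Real.exp x = a at *
      generalize Real.exp (-x) = b at *
      have : (a - b) * b = 1 - b ^ 2 := by linear_combination e
      rw [← this]; ring
    rw [← mul_div_assoc, div_eq_div_iff (by positivity) (by positivity), ← this]
    ring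
  rw [a1, a2]
  exact h

lemma term_int (n : ℕ) (hn : 0 < n) : ∫ x in Ioi (0:ℝ), 4 * (n : ℝ) * (x ^ 2 * Real.exp (-(2 * n * x))) = 1 / (n:ℝ)^2 := by
  have h := Real.integral_rpow_mul_exp_neg_mul_Ioi (a := 3) (r := 2 * n) (by norm_num) (by positivity)
  rw [integral_const_mul]
  have : ∫ x in Ioi (0:ℝ), (x ^ 2 * Real.exp (-(2 * n * x))) = (1 / (2 * n : ℝ)) ^ (3:ℝ) * Real.Gamma 3 := by
    rw [← h]
    refine setIntegral_congr_fun measurableSet_Ioi fun x hx => ?_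
    norm_num
  rw [this]
  have g : Real.Gamma 3 = 2 := by
    have := Real.Gamma_nat_eq_factorial 2
    rw [show ((2 : ℕ) : ℝ) + 1 = 3 by norm_num] at this
    rw [this]; norm_num [Nat.factorial]
  rw [g]
  have hn' : (n:ℝ) ≠ 0 := by positivity
  norm_num
  field_simp
  norm_num

lemma sq_integral : ∫ x in Ioi (0:ℝ), x ^ 2 / Real.sinh x ^ 2 = Real.pi ^ 2 / 6 := by
  have hcongr : ∫ x in Ioi (0:ℝ), x ^ 2 / Real.sinh x ^ 2 =
      ∫ x in Ioi (0:ℝ), ∑' n : ℕ, 4 * (n : ℝ) * (x ^ 2 * Real.exp (-(2 * n * x))) :=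
    setIntegral_congr_fun measurableSet_Ioi fun x hx => (sq_series hx).tsum_eq.symm
  have ti : ∀ n : ℕ, ∫ x in Ioi (0:ℝ), 4 * (n : ℝ) * (x ^ 2 * Real.exp (-(2 * n * x))) = 1 / (n:ℝ)^2 := by
    intro n
    rcases Nat.eq_zero_or_pos n with h | h
    · subst h; simp
    · exact term_int n h
  have hIntg : ∀ n : ℕ, Integrable (fun x : ℝ => 4 * (n : ℝ) * (x ^ 2 * Real.exp (-(2 * n * x)))) (volume.restrict (Ioi 0)) := by
    intro n
    rcases Nat.eq_zero_or_pos n with h | h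
    · subst h; simp
    · refine Integrable.of_integral_ne_zero ?_
      rw [ti n]; positivity
  have hs := hasSum_integral_of_summable_integral_norm hIntg (by
    have : (fun n : ℕ => ∫ x in Ioi (0:ℝ), ‖4 * (n : ℝ) * (x ^ 2 * Real.exp (-(2 * n * x)))‖) = fun n : ℕ => 1 / (n:ℝ)^2 := by
      funext n
      rw [← ti n]
      refine setIntegral_congr_fun measurableSet_Ioi fun x hx => ?_
      exact Real.norm_of_nonneg (by positivity)
    rw [this]
    exact hasSum_zeta_two.summable)
  simp only [ti] at hs
  rw [hcongr]
  exact hs.unique hasSum_zeta_two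

end EE
end

noncomputable section
namespace EE
open scoped ComplexConjugate Matrix ComplexOrder
open Filter Topology MeasureTheory

/-- jump positions -/
def tauF (θ : ℕ → ℝ) (R : ℕ) (i : Fin R × Bool) : ℝ :=
  if i.2 then 2 * Real.pi - θ (i.1 + 1) else θ (i.1 + 1)

/-- jump signs -/
def etaF (R : ℕ) (i : Fin R × Bool) : ℝ := if i.2 then -(-1 : ℝ) ^ (i.1 : ℕ) else (-1 : ℝ) ^ (i.1 : ℕ)

lemma etaF_sq (R : ℕ) : ∑ i, etaF R i ^ 2 = 2 * R := by
  have : ∀ i, etaF R i ^ 2 = 1 := by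
    intro i
    unfold etaF
    split_ifs
    · rw [neg_sq, ← pow_mul, mul_comm, pow_mul]; norm_num
    · rw [← pow_mul, mul_comm, pow_mul]; norm_num
  simp [this]
  ring

section
variable {R : ℕ} {θ : ℕ → ℝ}

lemma theta_lt (hmono : ∀ r ≤ R, θ r < θ (r + 1)) {a b : ℕ} (hab : a < b) (hb : b ≤ R + 1) : θ a < θ b := by
  induction b with
  | zero => omega
  | succ b ih =>
    rcases Nat.lt_succ_iff_lt_or_eq.1 hab with h | h
    · exact (ih h (by omega)).trans (hmono b (by omega))
    · subst h; exact hmono a (by omega)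

lemma theta_le (hmono : ∀ r ≤ R, θ r < θ (r + 1)) {a b : ℕ} (hab : a ≤ b) (hb : b ≤ R + 1) : θ a ≤ θ b := by
  rcases Nat.lt_or_eq_of_le hab with h | h
  · exact (theta_lt hmono h hb).le
  · rw [h]

lemma theta_mem (hθ0 : θ 0 = 0) (hθtop : θ (R + 1) = Real.pi) (hmono : ∀ r ≤ R, θ r < θ (r + 1))
    (r : Fin R) : 0 < θ (r + 1) ∧ θ (r + 1) < Real.pi := by
  have := r.2
  rw [← hθ0, ← hθtop]
  exact ⟨theta_lt hmono (by omega) (by omega), theta_lt hmono (by omega) (by omega)⟩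

lemma tauF_mem (hθ0 : θ 0 = 0) (hθtop : θ (R + 1) = Real.pi) (hmono : ∀ r ≤ R, θ r < θ (r + 1))
    (i : Fin R × Bool) : 0 < tauF θ R i ∧ tauF θ R i < 2 * Real.pi := by
  have := theta_mem hθ0 hθtop hmono i.1
  unfold tauF
  split_ifs <;> constructor <;> linarith

lemma theta_inj (hmono : ∀ r ≤ R, θ r < θ (r + 1)) {r s : Fin R} (h : θ (r + 1) = θ (s + 1)) : r = s := by
  have := r.2
  have := s.2
  rcases lt_trichotomy (r : ℕ) s with h1 | h1 | h1
  · exact absurd h (theta_lt hmono (by omega) (by omega)).ne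
  · exact Fin.ext h1
  · exact absurd h (theta_lt hmono (by omega) (by omega)).ne'

lemma tauF_inj (hθ0 : θ 0 = 0) (hθtop : θ (R + 1) = Real.pi) (hmono : ∀ r ≤ R, θ r < θ (r + 1)) :
    Function.Injective (tauF θ R) := by
  rintro ⟨r, b⟩ ⟨s, d⟩ h
  have h1 := theta_mem hθ0 hθtop hmono r
  have h2 := theta_mem hθ0 hθtop hmono s
  unfold tauF at h
  cases b <;> cases d <;> simp at h
  · rw [theta_inj hmono h]
  · linarith
  · linarith
  · rw [theta_inj hmono h]

lemma find_interval (hθ0 : θ 0 = 0) (hθtop : θ (R + 1) = Real.pi) {t : ℝ} (h0 : 0 < t) (h1 : t < Real.pi)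
    (hne : ∀ r ≤ R + 1, t ≠ θ r) : ∃ m ≤ R, θ m < t ∧ t < θ (m + 1) := by
  classical
  have hex : ∃ k, t < θ k := ⟨R + 1, by rw [hθtop]; exact h1⟩
  have hk := Nat.find_spec hex
  have hle : Nat.find hex ≤ R + 1 := Nat.find_min' hex (by rw [hθtop]; exact h1)
  have hk0 : Nat.find hex ≠ 0 := by
    intro h; rw [h, hθ0] at hk; linarith
  obtain ⟨m, hm⟩ := Nat.exists_eq_succ_of_ne_zero hk0
  refine ⟨m, by omega, ?_, by rw [hm] at hk; exact hk⟩
  have := Nat.find_min hex (m := m) (by omega)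
  push Not at this
  exact lt_of_le_of_ne this (hne m (by omega)).symm

lemma alt_sum (m : ℕ) : 2 * ∑ r ∈ Finset.range m, (-1 : ℝ) ^ r = 1 - (-1) ^ m := by
  induction m with
  | zero => simp
  | succ m ih => rw [Finset.sum_range_succ, mul_add, ih, pow_succ]; ring

lemma alt_sum_fin {m : ℕ} (hm : m ≤ R) : 2 * ∑ r : Fin R, (-1 : ℝ) ^ (r : ℕ) * (if (r : ℕ) < m then 1 else 0) =
    1 - (-1) ^ m := by
  rw [Fin.sum_univ_eq_sum_range (fun r => (-1 : ℝ) ^ r * (if r < m then 1 else 0)) R, ← alt_sum m]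
  congr 1
  simp only [mul_ite, mul_one, mul_zero]
  rw [← Finset.sum_filter]
  congr 1
  ext r
  simp
  omega

lemma psi_sum (t : ℝ) : ∑ i, etaF R i * psi (tauF θ R i) t =
    -(∑ i, etaF R i * tauF θ R i) / Real.pi + 2 * ∑ r : Fin R, (-1 : ℝ) ^ (r : ℕ) *
      ((if t < θ (r + 1) then 1 else 0) - (if t < 2 * Real.pi - θ (r + 1) then 1 else 0)) := by
  rw [Fintype.sum_prod_type, Fintype.sum_prod_type, neg_div, Finset.sum_div, Finset.mul_sum,
    ← Finset.sum_neg_distrib, ← Finset.sum_add_distrib]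
  refine Finset.sum_congr rfl fun r _ => ?_
  have hpi := Real.pi_ne_zero
  simp only [Fintype.sum_bool, etaF, tauF, psi, if_true, Bool.false_eq_true, if_false]
  split_ifs <;> field_simp <;> ring

lemma f_repr (hθ0 : θ 0 = 0) (hθtop : θ (R + 1) = Real.pi) (hmono : ∀ r ≤ R, θ r < θ (r + 1))
    {f : ℝ → ℝ} (hper : ∀ t, f (t + 2 * Real.pi) = f t) (heven : ∀ t, f (-t) = f t)
    (hval : ∀ r ≤ R, ∀ t, θ r < t → t < θ (r + 1) → f t = (-1 : ℝ) ^ r) :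
    ∃ c, ∀ᵐ t ∂mu0, f t = c + ∑ i, etaF R i * psi (tauF θ R i) t ∧ (f t = 1 ∨ f t = -1) := by
  refine ⟨1 + (∑ i, etaF R i * tauF θ R i) / Real.pi, ?_⟩
  set E : Set ℝ := Set.image θ (Set.Iic (R + 1)) ∪ Set.image (fun r => 2 * Real.pi - θ r) (Set.Iic (R + 1))
  have hE : E.Finite := ((Set.finite_Iic _).image _).union ((Set.finite_Iic _).image _)
  have hE' : ∀ᵐ t ∂mu0, t ∉ E := hE.countable.ae_notMem _
  filter_upwards [ae_restrict_mem measurableSet_Ioc, hE'] with t ht htE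
  have n1 : ∀ r ≤ R + 1, t ≠ θ r := fun r hr h => htE (Or.inl ⟨r, hr, h.symm⟩)
  have n2 : ∀ r ≤ R + 1, 2 * Real.pi - t ≠ θ r := fun r hr h => htE (Or.inr ⟨r, hr, by
    show 2 * Real.pi - θ r = t
    rw [← h]; ring⟩)
  have key : ∃ m ≤ R, f t = (-1) ^ m ∧ ∀ r : Fin R,
      ((if t < θ (r + 1) then (1 : ℝ) else 0) - (if t < 2 * Real.pi - θ (r + 1) then 1 else 0)) =
      -(if (r : ℕ) < m then 1 else 0) := by
    have hp := Real.pi_pos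
    rcases lt_trichotomy t Real.pi with h | h | h
    · obtain ⟨m, hm, h1, h2⟩ := find_interval hθ0 hθtop ht.1 h n1
      refine ⟨m, hm, hval m hm t h1 h2, fun r => ?_⟩
      have hr := theta_mem hθ0 hθtop hmono r
      have hr2 := r.2
      rw [if_pos (show t < 2 * Real.pi - θ (r + 1) by linarith)]
      split_ifs with a b b
      · exact absurd (theta_le hmono (show (r : ℕ) + 1 ≤ m by omega) (by omega)) (by linarith)
      · norm_num
      · norm_num
      · exact absurd (theta_le hmono (show m + 1 ≤ (r : ℕ) + 1 by omega) (by omega)) (by linarith)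
    · exact absurd h (by rw [← hθtop]; exact n1 _ le_rfl)
    · have h3 : 2 * Real.pi - t ≠ 0 := by rw [← hθ0]; exact n2 _ (by omega)
      have h4 : 0 < 2 * Real.pi - t := lt_of_le_of_ne (by linarith [ht.2]) h3.symm
      obtain ⟨m, hm, h1, h2⟩ := find_interval hθ0 hθtop h4 (by linarith) n2
      have hf : f t = f (2 * Real.pi - t) := by
        rw [← heven t, ← hper (-t)]; congr 1; ring
      refine ⟨m, hm, by rw [hf]; exact hval m hm _ h1 h2, fun r => ?_⟩
      have hr := theta_mem hθ0 hθtop hmono r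
      have hr2 := r.2
      rw [if_neg (show ¬ t < θ (r + 1) by linarith)]
      split_ifs with a b b
      · norm_num
      · exact absurd (theta_le hmono (show m + 1 ≤ (r : ℕ) + 1 by omega) (by omega)) (by linarith)
      · exact absurd (theta_le hmono (show (r : ℕ) + 1 ≤ m by omega) (by omega)) (by linarith)
      · norm_num
  obtain ⟨m, hm, hf, hk⟩ := key
  constructor
  · rw [psi_sum]
    simp only [hk, mul_neg, Finset.sum_neg_distrib]
    rw [hf]
    have := alt_sum_fin (R := R) hm
    linear_combination this
  · rw [hf]; exact neg_one_pow_eq_or ℝ m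

end

lemma toep_eig_mem {f : ℝ → ℝ} (hf : Nice f) (hv : ∀ᵐ t ∂mu0, f t = 1 ∨ f t = -1) (N : ℕ)
    (hH : (toep f N).IsHermitian) (k : Fin N) : |hH.eigenvalues k| ≤ 1 := by
  have aux : ∀ c : ℝ, (∀ᵐ t ∂mu0, 0 ≤ 1 + c * f t) → 0 ≤ 1 + c * hH.eigenvalues k := by
    intro c hc
    have h1 := toep_psd ((nice_const 1).add (hf.smul c)) hc N
    rw [toep_add (nice_const 1) (hf.smul c), toep_one, toep_smul] at h1
    set v : Fin N → ℂ := ⇑(hH.eigenvectorBasis k) with hvdef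
    have h2 := h1.dotProduct_mulVec_nonneg v
    have h3 : (1 + (c : ℂ) • toep f N) *ᵥ v = ((1 + c * hH.eigenvalues k : ℝ) : ℂ) • v := by
      rw [Matrix.add_mulVec, Matrix.one_mulVec, Matrix.smul_mulVec, hH.mulVec_eigenvectorBasis k]
      ext j
      simp
      ring
    rw [h3, dotProduct_smul, smul_eq_mul] at h2
    have hv0 : v ≠ 0 := by
      intro h
      have := hH.eigenvectorBasis.orthonormal.1 k
      have h5 : hH.eigenvectorBasis k = 0 := by
        ext j
        exact congrFun h j
      rw [h5] at this
      simp at this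
    have h4 : 0 < star v ⬝ᵥ v := Matrix.dotProduct_star_self_pos_iff.2 hv0
    have h6 := (Complex.pos_iff.1 h4)
    have h7 := (Complex.nonneg_iff.1 h2).1
    rw [Complex.re_ofReal_mul] at h7
    exact nonneg_of_mul_nonneg_left h7 h6.1
  have a1 := aux 1 (by filter_upwards [hv] with t ht; rcases ht with h | h <;> rw [h] <;> norm_num)
  have a2 := aux (-1) (by filter_upwards [hv] with t ht; rcases ht with h | h <;> rw [h] <;> norm_num)
  rw [abs_le]; constructor <;> linarith

lemma det_lin {N : ℕ} {T : Matrix (Fin N) (Fin N) ℂ} (hH : T.IsHermitian) (a b : ℝ) (hb : b ≠ 0) :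
    ((a : ℂ) • (1 : Matrix (Fin N) (Fin N) ℂ) + (b : ℂ) • T).det = ∏ k, ((a + hH.eigenvalues k * b : ℝ) : ℂ) := by
  have hb' : (b : ℂ) ≠ 0 := by exact_mod_cast hb
  have e : (a : ℂ) • (1 : Matrix (Fin N) (Fin N) ℂ) + (b : ℂ) • T =
      (-b : ℂ) • (Matrix.scalar (Fin N) (-(a : ℂ) / b) - T) := by
    rw [Matrix.scalar_apply, ← Matrix.smul_one_eq_diagonal, smul_sub, smul_smul]
    rw [show (-b : ℂ) * (-(a : ℂ) / b) = a by field_simp, neg_smul]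
    simp
  rw [e, Matrix.det_smul, ← Matrix.eval_charpoly, hH.charpoly_eq, Polynomial.eval_prod, Fintype.card_fin]
  have : (-b : ℂ) ^ N = ∏ _k : Fin N, (-b : ℂ) := by simp
  rw [this, ← Finset.prod_mul_distrib]
  refine Finset.prod_congr rfl fun k _ => ?_
  simp
  field_simp
  ring

section
variable {ι : Type} [DecidableEq ι]

lemma LD_eig {τ : ι → ℝ} (hτ : ∀ i, 0 < τ i ∧ τ i < 2 * Real.pi) (η : ι → ℝ) (s : Finset ι)
    {f : ℝ → ℝ} (hf : Nice f) {c : ℝ}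
    (hr : ∀ᵐ t ∂mu0, f t = c + ∑ i ∈ s, η i * psi (τ i) t ∧ (f t = 1 ∨ f t = -1)) (N : ℕ)
    (hH : (toep f N).IsHermitian) {x : ℝ} (hx : x ≠ 0) :
    LD (Asym τ η s x) N = -(x * c * N) + ∑ k, Real.log (Real.cosh x + hH.eigenvalues k * Real.sinh x) := by
  have hle := toep_eig_mem hf (hr.mono fun t h => h.2) N hH
  have h1 : Asym τ η s x =ᵐ[mu0] fun t => Real.exp (-(x * c)) * (Real.cosh x * 1 + Real.sinh x * f t) := by
    filter_upwards [hr] with t ht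
    have : Real.cosh x * 1 + Real.sinh x * f t = Real.exp (x * f t) := by
      rcases ht.2 with h | h <;> rw [h, Real.cosh_eq, Real.sinh_eq]
      · ring_nf
      · ring_nf
    rw [this, ht.1, ← Real.exp_add, Asym]
    congr 1
    ring
  have h2 : toep (Asym τ η s x) N = ((Real.exp (-(x * c)) : ℝ) : ℂ) •
      (((Real.cosh x : ℝ) : ℂ) • (1 : Matrix (Fin N) (Fin N) ℂ) + ((Real.sinh x : ℝ) : ℂ) • toep f N) := by
    rw [toep_congr h1, toep_smul (Real.exp (-(x * c))) (fun t => Real.cosh x * 1 + Real.sinh x * f t),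
      toep_add ((nice_const 1).smul _) (hf.smul _), toep_smul _ (fun _ => 1), toep_smul, toep_one]
  have hs : Real.sinh x ≠ 0 := by rwa [Ne, Real.sinh_eq_zero]
  have hpos : ∀ k, 0 < Real.cosh x + hH.eigenvalues k * Real.sinh x := fun k => csq_pos (hle k) x
  unfold LD
  rw [h2, Matrix.det_smul, det_lin hH _ _ hs, Fintype.card_fin, norm_mul, norm_pow, Complex.norm_real,
    Real.norm_of_nonneg (Real.exp_pos _).le, norm_prod]
  simp only [Complex.norm_real]
  rw [Real.log_mul (by positivity) (Finset.prod_ne_zero_iff.2 fun k _ => by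
    rw [Real.norm_of_nonneg (hpos k).le]; exact (hpos k).ne'), Real.log_pow, Real.log_exp, Real.log_prod]
  · congr 1
    · ring
    · refine Finset.sum_congr rfl fun k _ => ?_
      rw [Real.norm_of_nonneg (hpos k).le]
  · intro k _
    rw [Real.norm_of_nonneg (hpos k).le]; exact (hpos k).ne'

lemma LD_pair {τ : ι → ℝ} (hτ : ∀ i, 0 < τ i ∧ τ i < 2 * Real.pi) (η : ι → ℝ) (s : Finset ι)
    {f : ℝ → ℝ} (hf : Nice f) {c : ℝ}
    (hr : ∀ᵐ t ∂mu0, f t = c + ∑ i ∈ s, η i * psi (τ i) t ∧ (f t = 1 ∨ f t = -1)) (N : ℕ)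
    (hH : (toep f N).IsHermitian) {x : ℝ} (hx : 0 < x) :
    (LD (Asym τ η s x) N + LD (Asym τ η s (-x)) N) / Real.sinh x ^ 2 = ∑ k, gg (hH.eigenvalues k) x := by
  rw [LD_eig hτ η s hf hr N hH hx.ne', LD_eig hτ η s hf hr N hH (neg_ne_zero.2 hx.ne')]
  unfold gg
  rw [← Finset.sum_div, Finset.sum_add_distrib]
  congr 1
  simp only [Real.cosh_neg, Real.sinh_neg, mul_neg, ← sub_eq_add_neg]
  ring

theorem main_conv {τ : ι → ℝ} (hτ : ∀ i, 0 < τ i ∧ τ i < 2 * Real.pi) (hinj : Function.Injective τ)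
    (η : ι → ℝ) (s : Finset ι)
    {f : ℝ → ℝ} (hf : Nice f) {c : ℝ}
    (hr : ∀ᵐ t ∂mu0, f t = c + ∑ i ∈ s, η i * psi (τ i) t ∧ (f t = 1 ∨ f t = -1))
    (R : ℕ) (hR : ∑ i ∈ s, η i ^ 2 = 2 * R)
    (hH : ∀ N, (toep f N).IsHermitian) :
    ∃ L : ℝ, Tendsto (fun N : ℕ => (∑ k : Fin N, entBin ((hH N).eigenvalues k))
          - (R : ℝ) / 3 * Real.logb 2 (N : ℝ)) atTop (𝓝 L) := by
  obtain ⟨K, hK, hd⟩ := total_dom hτ hinj η s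
  have hle := fun N => toep_eig_mem hf (hr.mono fun t h => h.2) N (hH N)
  choose A hA using fun x => (hd x).1
  have hB := fun x => (hd x).2
  have hpi := Real.pi_ne_zero
  have hco : ∀ x : ℝ, ∑ i ∈ s, (x * η i / Real.pi) ^ 2 = 2 * R * x ^ 2 / Real.pi ^ 2 := by
    intro x
    have : ∀ i, (x * η i / Real.pi) ^ 2 = η i ^ 2 * (x ^ 2 / Real.pi ^ 2) := by
      intro i; rw [div_pow, mul_pow]; ring
    simp only [this]
    rw [← Finset.sum_mul, hR]; ring
  set F : ℕ → ℝ → ℝ := fun N x => (∑ k, gg ((hH N).eigenvalues k) x) -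
    (4 * R / Real.pi ^ 2 * Real.log N) * (x ^ 2 / Real.sinh x ^ 2) with hF
  have hFe : ∀ N x, 0 < x → F N x = ((LD (Asym τ η s x) N - (∑ i ∈ s, (x * η i / Real.pi) ^ 2) * Real.log N) +
      (LD (Asym τ η s (-x)) N - (∑ i ∈ s, ((-x) * η i / Real.pi) ^ 2) * Real.log N)) / Real.sinh x ^ 2 := by
    intro N x hx
    rw [hF]
    simp only []
    rw [← LD_pair hτ η s hf hr N (hH N) hx, hco, hco]
    ring
  have hFint : ∀ N, Integrable (F N) (volume.restrict (Set.Ioi 0)) := fun N =>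
    (integrable_finset_sum _ fun k _ => (ent_integral (hle N k)).1).sub (sq_int.const_mul _)
  have hFval : ∀ N, ∫ x in Set.Ioi (0 : ℝ), F N x = 2 * Real.log 2 *
      ((∑ k : Fin N, entBin ((hH N).eigenvalues k)) - (R : ℝ) / 3 * Real.logb 2 (N : ℝ)) := by
    intro N
    rw [hF]
    simp only []
    rw [integral_sub (integrable_finset_sum _ fun k _ => (ent_integral (hle N k)).1) (sq_int.const_mul _),
      integral_finset_sum _ fun k _ => (ent_integral (hle N k)).1, integral_const_mul, sq_integral]
    rw [Finset.sum_congr rfl fun k _ => (ent_integral (hle N k)).2, ← Finset.mul_sum, Real.logb]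
    have : Real.log 2 ≠ 0 := (Real.log_pos (by norm_num)).ne'
    field_simp
    ring
  have hlim : Tendsto (fun N => ∫ x in Set.Ioi (0 : ℝ), F N x) atTop
      (𝓝 (∫ x in Set.Ioi (0 : ℝ), (A x + A (-x)) / Real.sinh x ^ 2)) := by
    refine tendsto_integral_of_dominated_convergence
      (fun x => (2 * K) * (x ^ 2 * Real.exp |x| / Real.sinh x ^ 2)) (fun N => (hFint N).1)
      (exp_bound_int.const_mul _) (fun N => ?_) ?_
    · filter_upwards [ae_restrict_mem measurableSet_Ioi] with x hx
      rw [hFe N x hx, norm_div, Real.norm_eq_abs, Real.norm_of_nonneg (sq_nonneg _), ← mul_div_assoc]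
      have b1 := hB x N
      have b2 := hB (-x) N
      rw [abs_neg, neg_sq] at b2
      gcongr
      refine (abs_add_le _ _).trans ?_
      linarith
    · filter_upwards [ae_restrict_mem measurableSet_Ioi] with x hx
      refine (((hA x).add (hA (-x))).div_const _).congr fun N => ?_
      rw [hFe N x hx]
  simp only [hFval] at hlim
  have h2 : 2 * Real.log 2 ≠ 0 := by
    have : 0 < Real.log 2 := Real.log_pos (by norm_num)
    positivity
  refine ⟨_, (hlim.const_mul (2 * Real.log 2)⁻¹).congr fun N => ?_⟩
  rw [inv_mul_cancel_left₀ h2]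

end

lemma nice_of_repr {ι : Type} [DecidableEq ι] {τ : ι → ℝ} (η : ι → ℝ) (s : Finset ι)
    {f : ℝ → ℝ} {c : ℝ}
    (hr : ∀ᵐ t ∂mu0, f t = c + ∑ i ∈ s, η i * psi (τ i) t ∧ (f t = 1 ∨ f t = -1)) : Nice f := by
  have hm : Measurable (fun t => c + ∑ i ∈ s, η i * psi (τ i) t) := by
    unfold psi
    refine Measurable.const_add ?_ _
    refine Finset.measurable_sum _ fun i _ => Measurable.const_mul ?_ _
    refine Measurable.add (by fun_prop) ?_
    exact Measurable.ite measurableSet_Iio measurable_const measurable_const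
  refine memLp_top_of_bound (hm.aestronglyMeasurable.congr ?_) 1 ?_
  · filter_upwards [hr] with t ht
    exact ht.1.symm
  · filter_upwards [hr] with t ht
    rcases ht.2 with h | h <;> rw [h] <;> simp

lemma fourierCoef_even {f : ℝ → ℝ} (hper : ∀ t, f (t + 2 * Real.pi) = f t) (heven : ∀ t, f (-t) = f t) (n : ℤ) :
    fourierCoef f (-n) = fourierCoef f n := by
  unfold fourierCoef
  congr 1
  have h := intervalIntegral.integral_comp_sub_left (a := 0) (b := 2 * Real.pi)
    (fun t : ℝ => (f t : ℂ) * Complex.exp (-Complex.I * (n : ℂ) * (t : ℂ))) (2 * Real.pi)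
  rw [sub_self, sub_zero] at h
  rw [← h]
  refine intervalIntegral.integral_congr fun t _ => ?_
  have h1 : f (2 * Real.pi - t) = f t := by rw [← heven t, ← hper (-t)]; congr 1; ring
  simp only [h1]
  congr 1
  have h2 : -Complex.I * (n : ℂ) * ((2 * Real.pi - t : ℝ) : ℂ) =
      -Complex.I * ((-n : ℤ) : ℂ) * (t : ℂ) + ((-n : ℤ) : ℂ) * (2 * Real.pi * Complex.I) := by
    push_cast; ring
  rw [h2, Complex.exp_add, Complex.exp_int_mul_two_pi_mul_I, mul_one]

end EE
end

/-- With `f` the sign symbol with jumps at `±θ_1,…,±θ_R` and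
`T_N(f) = (f_{j−k})_{j,k=0}^{N−1}`: `T_N(f)` is real symmetric (hence Hermitian) with
all eigenvalues in `[−1,1]`, and the entanglement entropy
`S(T_N(f)) = Σ_k e(1, ν_k)` satisfies `S(T_N(f)) − (R/3) log₂ N → const` as
`N → ∞`. -/
theorem entanglement_entropy_TI_chain (R : ℕ) (hR : 1 ≤ R) (θ : ℕ → ℝ)
    (hθ0 : θ 0 = 0) (hθtop : θ (R + 1) = Real.pi)
    (hmono : ∀ r ≤ R, θ r < θ (r + 1))
    (f : ℝ → ℝ) (hper : ∀ t, f (t + 2 * Real.pi) = f t) (heven : ∀ t, f (-t) = f t)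
    (hval : ∀ r ≤ R, ∀ t, θ r < t → t < θ (r + 1) → f t = (-1 : ℝ) ^ r) :
    ∃ hH : ∀ N : ℕ,
        (Matrix.of fun j k : Fin N => fourierCoef f ((j : ℤ) - (k : ℤ))).IsHermitian,
      (∀ N : ℕ,
        (Matrix.of fun j k : Fin N => fourierCoef f ((j : ℤ) - (k : ℤ))).IsSymm) ∧
      (∀ (N : ℕ) (j k : Fin N), (fourierCoef f ((j : ℤ) - (k : ℤ))).im = 0) ∧
      (∀ (N : ℕ) (k : Fin N), (hH N).eigenvalues k ∈ Set.Icc (-1 : ℝ) 1) ∧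
      ∃ L : ℝ, Filter.Tendsto
        (fun N : ℕ => (∑ k : Fin N, entBin ((hH N).eigenvalues k))
          - (R : ℝ) / 3 * Real.logb 2 (N : ℝ))
        Filter.atTop (nhds L) := by
  obtain ⟨c, hr⟩ := EE.f_repr hθ0 hθtop hmono hper heven hval
  have hn : EE.Nice f := EE.nice_of_repr _ _ hr
  have hH : ∀ N : ℕ, (EE.toep f N).IsHermitian := EE.toep_hermitian f
  refine ⟨hH, ?_, ?_, ?_, ?_⟩
  · intro N
    ext j k
    simp only [Matrix.transpose_apply, Matrix.of_apply]
    rw [← EE.fourierCoef_even hper heven ((j : ℤ) - k), neg_sub]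
  · intro N j k
    have h1 := EE.fourierCoef_conj f ((j : ℤ) - k)
    rw [EE.fourierCoef_even hper heven] at h1
    exact Complex.conj_eq_iff_im.1 h1
  · intro N k
    exact abs_le.1 (EE.toep_eig_mem hn (hr.mono fun t h => h.2) N (hH N) k)
  · exact EE.main_conv (EE.tauF_mem hθ0 hθtop hmono) (EE.tauF_inj hθ0 hθtop hmono) (EE.etaF R)
      Finset.univ hn hr R (EE.etaF_sq R) hH

end
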